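/- Let 𝒮 ⊂ ℝ³ be a C² compact closed connected embedded surface homeomorphic to the 2-sphere, bounding the region 𝒮₋ with exterior 𝒮₊, and let (v₋, v₊) satisfy the CVS conditions (1)–(5). Then v₋ vanishes identically on 𝒮₋ and v₊ vanishes identically on 𝒮₊. -/

import Mathlib

noncomputable section

open MeasureTheory Filter Set
open scoped RealInnerProductSpace Topology

abbrev E3 : Type := EuclideanSpace ℝ (Fin 3)
abbrev E2 : Type := EuclideanSpace ℝ (Fin 2)

def mk3 (a b c : ℝ) : E3 := (EuclideanSpace.equiv (Fin 3) ℝ).symm ![a, b, c]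

def e3 (i : Fin 3) : E3 := EuclideanSpace.single i 1

/-- `∂_j v_i` at `p`. -/
def pder (v : E3 → E3) (i j : Fin 3) (p : E3) : ℝ := fderiv ℝ v p (e3 j) i

def div3 (v : E3 → E3) (p : E3) : ℝ := ∑ i, pder v i i p

def curl3 (v : E3 → E3) (p : E3) : E3 :=
  mk3 (pder v 2 1 p - pder v 1 2 p) (pder v 0 2 p - pder v 2 0 p)
    (pder v 1 0 p - pder v 0 1 p)

def lap3 (f : E3 → ℝ) (p : E3) : ℝ :=
  ∑ j, fderiv ℝ (fun x => fderiv ℝ f x (e3 j)) p (e3 j)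

def IsTangentAt (S : Set E3) (p v : E3) : Prop :=
  ∃ γ : ℝ → E3, (∀ t, γ t ∈ S) ∧ γ 0 = p ∧ HasDerivAt γ v 0

def IsSurface (k : ℕ∞) (S : Set E3) : Prop :=
  ∀ p ∈ S, ∃ (f : E2 → E3) (U : Set E2) (V : Set E3),
    IsOpen U ∧ IsOpen V ∧ p ∈ V ∧ ContDiffOn ℝ k f U ∧ Set.InjOn f U ∧
    f '' U = S ∩ V ∧ ∀ x ∈ U, Function.Injective (fderiv ℝ f x)

structure CVSBase (S Ωm Ωp : Set E3) (vm vp : E3 → E3) : Prop where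
  openm : IsOpen Ωm
  openp : IsOpen Ωp
  disj : Disjoint Ωm Ωp
  disjm : Disjoint Ωm S
  disjp : Disjoint Ωp S
  clm : S ⊆ closure Ωm
  clp : S ⊆ closure Ωp
  smoothm : ∃ W, IsOpen W ∧ Ωm ∪ S ⊆ W ∧ ContDiffOn ℝ 1 vm W
  smoothp : ∃ W, IsOpen W ∧ Ωp ∪ S ⊆ W ∧ ContDiffOn ℝ 1 vp W
  divm : ∀ p ∈ Ωm, div3 vm p = 0
  divp : ∀ p ∈ Ωp, div3 vp p = 0
  curlm : ∀ p ∈ Ωm, curl3 vm p = 0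
  curlp : ∀ p ∈ Ωp, curl3 vp p = 0
  tangentm : ∀ p ∈ S, IsTangentAt S p (vm p)
  tangentp : ∀ p ∈ S, IsTangentAt S p (vp p)

structure CVSPair (S Ωm Ωp : Set E3) (vm vp : E3 → E3)
    extends CVSBase S Ωm Ωp vm vp : Prop where
  strain : ∀ p ∈ S, (fderiv ℝ vp p + fderiv ℝ vm p) (vp p - vm p) = 0
  bernoulli : ∀ p ∈ S, ∀ᶠ q in 𝓝[S] p,
    ‖vp q‖ ^ 2 - ‖vm q‖ ^ 2 = ‖vp p‖ ^ 2 - ‖vm p‖ ^ 2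

/-- the open region `Ωm` is the bounded region enclosed by the closed surface `S`,
and `Ωp` is its exterior. -/
structure EnclosedBy (S Ωm Ωp : Set E3) : Prop where
  openm : IsOpen Ωm
  bounded : Bornology.IsBounded Ωm
  fr : frontier Ωm = S
  plus : Ωp = (Ωm ∪ S)ᶜ


section
open MeasureTheory Filter Set
open scoped RealInnerProductSpace Topology

/-- homotopy invariance of the existence of a continuous logarithm -/
lemma log_homotopy {X : Type*} [TopologicalSpace X] (H : unitInterval × X → ℂ)
    (hc : Continuous H) (h0 : ∀ p, H p ≠ 0)
    (L : X → ℂ) (hL : Continuous L) (hL0 : ∀ x, Complex.exp (L x) = H (0, x)) :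
    ∃ L' : X → ℂ, Continuous L' ∧ ∀ x, Complex.exp (L' x) = H (1, x) := by
  let H' : C(unitInterval × X, {z : ℂ // z ≠ 0}) := ⟨fun p => ⟨H p, h0 p⟩, by fun_prop⟩
  have key : ∀ a, H' (0, a) = (⟨Complex.exp (L a), Complex.exp_ne_zero _⟩ : {z : ℂ // z ≠ 0}) := by
    intro a; apply Subtype.ext; exact (hL0 a).symm
  let G := Complex.isCoveringMap_exp.liftHomotopy H' ⟨L, hL⟩ key
  refine ⟨fun x => G (1, x), by fun_prop, fun x => ?_⟩
  have := congrFun (Complex.isCoveringMap_exp.liftHomotopy_lifts H' ⟨L, hL⟩ key) (1, x)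
  exact congrArg Subtype.val this

lemma no_odd_log (L : Circle → ℂ) (hL : Continuous L) (c : Circle) (hcc : c * c = 1)
    (h : ∀ x : Circle, Complex.exp (L (c * x)) = - Complex.exp (L x)) : False := by
  have hD : ∀ x, Complex.exp (L (c * x) - L x) = -1 := by
    intro x
    rw [Complex.exp_sub, h, neg_div, div_self (Complex.exp_ne_zero _)]
  have hc : Continuous fun x : Circle => (L (c * x) - L x).im := by
    have : Continuous fun x : Circle => c * x := by fun_prop
    exact Complex.continuous_im.comp ((hL.comp this).sub hL)
  have hpc : PreconnectedSpace Circle := by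
    have : PathConnectedSpace Circle := by
      have hs : Function.Surjective Circle.exp := fun z => ⟨_, Circle.exp_arg z⟩
      exact hs.pathConnectedSpace Circle.exp.continuous
    infer_instance
  obtain ⟨x, hx⟩ : ∃ x : Circle, (L (c * x) - L x).im = 0 := by
    have h1 : (L (c * 1) - L 1).im = -(L (c * c) - L c).im := by rw [hcc, mul_one]; simp
    rcases le_total (L (c * 1) - L 1).im 0 with h0 | h0
    · have := mem_range_of_exists_le_of_exists_ge hc (c := 0) ⟨1, h0⟩ ⟨c, by linarith⟩
      exact this
    · have := mem_range_of_exists_le_of_exists_ge hc (c := 0) ⟨c, by linarith⟩ ⟨1, h0⟩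
      exact this
  have h2 := hD x
  have h3 : (L (c * x) - L x).re = 0 := by
    have := congrArg norm h2
    rw [Complex.norm_exp] at this
    simpa using this
  have h4 : L (c * x) - L x = 0 := Complex.ext (by simpa using h3) (by simpa using hx)
  rw [h4] at h2
  norm_num at h2

/-- invariance of domain in the plane -/
lemma inv_dom (f : ℂ → ℂ) (hf : ContinuousOn f (Metric.closedBall 0 1))
    (inj : InjOn f (Metric.closedBall 0 1)) : f '' Metric.closedBall 0 1 ∈ 𝓝 (f 0) := by
  have hmem : ∀ (t : ℝ) (x : Circle), |t| ≤ 1 → (t : ℂ) * x ∈ Metric.closedBall (0:ℂ) 1 := by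
    intro t x ht
    rw [mem_closedBall_zero_iff, norm_mul, Circle.norm_coe, mul_one, Complex.norm_real]
    exact ht
  have hmem1 : ∀ (x : Circle), (x : ℂ) ∈ Metric.closedBall (0:ℂ) 1 := by
    intro x; rw [mem_closedBall_zero_iff, Circle.norm_coe]
  by_contra hnot
  -- distance to the boundary curve
  have hcc : Continuous fun x : Circle => f x := hf.comp_continuous (by fun_prop) hmem1
  obtain ⟨x0, hx0⟩ : ∃ x0 : Circle, ∀ x : Circle, ‖f x0 - f 0‖ ≤ ‖f x - f 0‖ := by
    have hc : Continuous fun x : Circle => ‖f x - f 0‖ := (hcc.sub continuous_const).norm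
    obtain ⟨x0, -, h⟩ := isCompact_univ.exists_isMinOn (univ_nonempty (α := Circle)) hc.continuousOn
    exact ⟨x0, fun x => h (mem_univ x)⟩
  set δ := ‖f x0 - f 0‖ with hδ
  have hδpos : 0 < δ := by
    rw [hδ, norm_pos_iff, sub_ne_zero]
    intro h
    have := inj (hmem1 x0) (by simp) h
    simp at this
  obtain ⟨q, hq1, hq2⟩ : ∃ q, ‖q - f 0‖ < δ ∧ q ∉ f '' Metric.closedBall 0 1 := by
    by_contra! hcon
    apply hnot
    filter_upwards [Metric.ball_mem_nhds (f 0) hδpos] with q hq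
    exact hcon q (by simpa [dist_eq_norm] using hq)
  have e1 : ∃ L : Circle → ℂ, Continuous L ∧ ∀ x, Complex.exp (L x) = f x - q := by
    have hne : f 0 - q ≠ 0 := by
      rw [sub_ne_zero]; intro h; exact hq2 ⟨0, by simp, h⟩
    obtain ⟨L', h1, h2⟩ := log_homotopy (X := Circle)
      (fun p => f (((p.1 : ℝ) : ℂ) * p.2) - q)
      (by
        refine Continuous.sub ?_ continuous_const
        refine hf.comp_continuous (by fun_prop) (fun p => hmem _ _ ?_)
        rw [abs_of_nonneg p.1.2.1]; exact p.1.2.2)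
      (by
        intro p; rw [sub_ne_zero]; intro h
        refine hq2 ⟨_, hmem _ _ ?_, h⟩
        rw [abs_of_nonneg p.1.2.1]; exact p.1.2.2)
      (fun _ => Complex.log (f 0 - q)) continuous_const
      (by intro x; simp [Complex.exp_log hne])
    exact ⟨L', h1, by intro x; simpa using h2 x⟩
  obtain ⟨L1, hL1, hL1'⟩ := e1
  have e2 : ∃ L : Circle → ℂ, Continuous L ∧ ∀ x, Complex.exp (L x) = f x - f 0 := by
    obtain ⟨L', h1, h2⟩ := log_homotopy (X := Circle)
      (fun p => (f p.2 - f 0) - (1 - ((p.1 : ℝ) : ℂ)) * (q - f 0))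
      (((hcc.comp continuous_snd).sub continuous_const).sub (by fun_prop))
      (by
        intro p hp
        have h3 : f p.2 - f 0 = (1 - ((p.1 : ℝ) : ℂ)) * (q - f 0) := sub_eq_zero.1 hp
        have h4 := congrArg norm h3
        rw [norm_mul] at h4
        have h5 : ‖(1 - ((p.1 : ℝ) : ℂ))‖ ≤ 1 := by
          rw [← Complex.ofReal_one, ← Complex.ofReal_sub, Complex.norm_real, Real.norm_eq_abs,
            abs_of_nonneg (by linarith [p.1.2.2])]
          linarith [p.1.2.1]
        have h6 := hx0 p.2
        have h7 : ‖(1 - ((p.1 : ℝ) : ℂ))‖ * ‖q - f 0‖ ≤ 1 * ‖q - f 0‖ := by gcongr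
        linarith)
      L1 hL1 (by intro x; simp [hL1'])
    exact ⟨L', h1, by intro x; simpa using h2 x⟩
  obtain ⟨L2, hL2, hL2'⟩ := e2
  have m1 : ∀ p : unitInterval × Circle,
      (((1 / (1 + (p.1 : ℝ)) : ℝ)) : ℂ) * p.2 ∈ Metric.closedBall (0:ℂ) 1 := by
    intro p
    apply hmem
    have := p.1.2.1
    rw [abs_of_nonneg (by positivity), div_le_one (by linarith)]; linarith
  have m2 : ∀ p : unitInterval × Circle,
      (((-(p.1:ℝ) / (1 + (p.1 : ℝ)) : ℝ)) : ℂ) * p.2 ∈ Metric.closedBall (0:ℂ) 1 := by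
    intro p
    apply hmem
    have := p.1.2.1
    rw [neg_div, abs_neg, abs_of_nonneg (by positivity), div_le_one (by linarith)]; linarith
  obtain ⟨L3, hL3, hL3'⟩ := log_homotopy (X := Circle)
      (fun p => f ((((1 / (1 + (p.1 : ℝ)) : ℝ)) : ℂ) * p.2)
        - f ((((-(p.1:ℝ) / (1 + (p.1 : ℝ)) : ℝ)) : ℂ) * p.2))
      (by
        have hne : ∀ p : unitInterval × Circle, (1 + (p.1 : ℝ)) ≠ 0 := by
          intro p; linarith [p.1.2.1]
        refine Continuous.sub ?_ ?_
        · refine hf.comp_continuous ?_ m1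
          refine Continuous.mul (Complex.continuous_ofReal.comp ?_) (by fun_prop)
          exact Continuous.div (by fun_prop) (by fun_prop) hne
        · refine hf.comp_continuous ?_ m2
          refine Continuous.mul (Complex.continuous_ofReal.comp ?_) (by fun_prop)
          exact Continuous.div (by fun_prop) (by fun_prop) hne)
      (by
        intro p hp
        have h3 := inj (m1 p) (m2 p) (sub_eq_zero.1 hp)
        have h4 := mul_right_cancel₀ (Circle.coe_ne_zero p.2) h3
        have h5 : 1 / (1 + (p.1 : ℝ)) = -(p.1:ℝ) / (1 + (p.1 : ℝ)) := by exact_mod_cast h4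
        have := p.1.2.1
        have h6 : 0 < 1 / (1 + (p.1 : ℝ)) := by positivity
        have h7 : 0 ≤ (p.1:ℝ) / (1 + (p.1 : ℝ)) := by positivity
        rw [neg_div] at h5
        linarith)
      L2 hL2 (by intro x; simp [hL2'])
  have hcpi : (Circle.exp Real.pi : ℂ) = -1 := by rw [Circle.coe_exp]; simp
  refine no_odd_log L3 hL3 (Circle.exp Real.pi) ?_ (fun x => ?_)
  · apply Circle.ext
    rw [Circle.coe_mul, hcpi]; simp
  rw [hL3', hL3']
  simp only [Circle.coe_mul, hcpi]
  have e : ((-((1:unitInterval):ℝ) / (1 + ((1:unitInterval):ℝ)) : ℝ) : ℂ)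
    = -((1 / (1 + ((1:unitInterval):ℝ)) : ℝ) : ℂ) := by
    simp [neg_div]
  rw [e]
  ring_nf

end

section
open MeasureTheory Filter Set
open scoped RealInnerProductSpace Topology

/-- `G` is a global section on `U` of the torsor of local primitives `g i` on `O i`. -/
def IsSec {Y ι : Type*} [TopologicalSpace Y] (O : ι → Set Y) (g : ι → Y → ℝ) (U : Set Y)
    (G : Y → ℝ) : Prop :=
  ∀ x ∈ U, ∀ i, x ∈ O i → ∀ᶠ y in 𝓝 x, G y - g i y = G x - g i x

lemma const_of_locally_const {Y : Type*} [TopologicalSpace Y] {U : Set Y}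
    (hU : IsPreconnected U) (F : Y → ℝ) (h : ∀ x ∈ U, ∀ᶠ y in 𝓝[U] x, F y = F x)
    {x y : Y} (hx : x ∈ U) (hy : y ∈ U) : F x = F y := by
  have : PreconnectedSpace U := isPreconnected_iff_preconnectedSpace.1 hU
  have hl : IsLocallyConstant (fun z : U => F z) := by
    rw [IsLocallyConstant.iff_eventually_eq]
    intro z
    have := h z z.2
    rw [nhdsWithin_eq_map_subtype_coe z.2] at this
    exact this
  exact hl.apply_eq_of_preconnectedSpace ⟨x, hx⟩ ⟨y, hy⟩

lemma sec_union {Y ι : Type*} [TopologicalSpace Y] (O : ι → Set Y) (g : ι → Y → ℝ)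
    (hcov : ∀ x, ∃ i, x ∈ O i) {U V : Set Y} (hU : IsOpen U) (hV : IsOpen V)
    (hUV : IsPreconnected (U ∩ V))
    (h1 : ∃ G, IsSec O g U G) (h2 : ∃ G, IsSec O g V G) : ∃ G, IsSec O g (U ∪ V) G := by
  classical
  obtain ⟨G1, h1⟩ := h1
  obtain ⟨G2, h2⟩ := h2
  obtain ⟨c, hc⟩ : ∃ c, ∀ x ∈ U ∩ V, G1 x - G2 x = c := by
    rcases (U ∩ V).eq_empty_or_nonempty with he | ⟨x0, hx0⟩
    · exact ⟨0, by simp [he]⟩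
    · refine ⟨G1 x0 - G2 x0, fun x hx => ?_⟩
      refine const_of_locally_const hUV (fun x => G1 x - G2 x) (fun z hz => ?_) hx hx0
      obtain ⟨i, hi⟩ := hcov z
      apply mem_nhdsWithin_of_mem_nhds
      filter_upwards [h1 z hz.1 i hi, h2 z hz.2 i hi] with y e1 e2
      linarith
  have key2 : ∀ x ∈ V, (if x ∈ U then G1 x else G2 x + c) = G2 x + c := by
    intro x hx
    split_ifs with h
    · linarith [hc x ⟨h, hx⟩]
    · rfl
  refine ⟨fun x => if x ∈ U then G1 x else G2 x + c, fun x hx i hi => ?_⟩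
  rcases hx with hx | hx
  · filter_upwards [hU.mem_nhds hx, h1 x hx i hi] with y hy e
    simp only [hy, hx, if_true]; exact e
  · filter_upwards [hV.mem_nhds hx, h2 x hx i hi] with y hy e
    rw [key2 y hy, key2 x hx]; linarith

lemma interval_induct (Q : ℝ → ℝ → Prop) (δ : ℝ) (hδ : 0 < δ)
    (hsmall : ∀ s t, t - s < δ → Q s t)
    (hglue : ∀ s s' t' t, s ≤ s' → s' < t' → t' ≤ t → Q s t' → Q s' t → Q s t) :
    ∀ s t, Q s t := by
  have : ∀ n : ℕ, ∀ s t, t - s < δ * (1 + n / 2) → Q s t := by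
    intro n
    induction n with
    | zero => intro s t h; exact hsmall s t (by simpa using h)
    | succ n ih =>
      intro s t h
      push_cast at h
      by_cases h1 : t - s < δ
      · exact hsmall s t h1
      · refine hglue s (t - δ * (3/4)) (t - δ / 2) t (by linarith) (by linarith) (by linarith)
          (ih _ _ (by linarith)) (hsmall _ _ (by linarith))
  intro s t
  obtain ⟨n, hn⟩ := exists_nat_gt ((t - s) / δ * 2)
  refine this n s t ?_
  have : (t - s) = δ * ((t - s) / δ * 2 / 2) := by field_simp
  rw [this]
  apply mul_lt_mul_of_pos_left _ hδ
  linarith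

lemma sec_rect {ι : Type*} (O : ι → Set (ℝ × ℝ)) (hO : ∀ i, IsOpen (O i)) (g : ι → ℝ × ℝ → ℝ)
    (hcov : ∀ x, ∃ i, x ∈ O i)
    (hcomp : ∀ i j, ∀ x ∈ O i ∩ O j, ∀ᶠ y in 𝓝 x, g i y - g j y = g i x - g j x)
    (R : ℝ) : ∃ G, IsSec O g (Metric.ball 0 R) G := by
  obtain ⟨δ, hδ, hleb⟩ := lebesgue_number_lemma_of_metric
    (s := Metric.closedBall (0 : ℝ × ℝ) R) (isCompact_closedBall _ _) hO
    (fun x _ => mem_iUnion.2 (hcov x))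
  -- small rectangles
  have hs : ∀ a b c d, b - a < δ → d - c < δ →
      ∃ G, IsSec O g ((Ioo a b ×ˢ Ioo c d) ∩ Metric.ball 0 R) G := by
    intro a b c d h1 h2
    rcases ((Ioo a b ×ˢ Ioo c d) ∩ Metric.ball (0 : ℝ × ℝ) R).eq_empty_or_nonempty with he | ⟨x, hx⟩
    · exact ⟨0, by intro z hz; simp [he] at hz⟩
    · obtain ⟨i, hi⟩ := hleb x (Metric.ball_subset_closedBall hx.2)
      refine ⟨g i, fun z hz j hj => hcomp i j z ⟨hi ?_, hj⟩⟩
      obtain ⟨⟨⟨a1, a2⟩, a3, a4⟩, -⟩ := hx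
      obtain ⟨⟨⟨b1, b2⟩, b3, b4⟩, -⟩ := hz
      rw [Metric.mem_ball, Prod.dist_eq, max_lt_iff, Real.dist_eq, Real.dist_eq, abs_lt, abs_lt]
      refine ⟨⟨?_, ?_⟩, ?_, ?_⟩ <;> linarith
  have hconv : ∀ a b c d : ℝ, IsPreconnected ((Ioo a b ×ˢ Ioo c d) ∩ Metric.ball (0 : ℝ × ℝ) R) := by
    intro a b c d
    exact (((convex_Ioo a b).prod (convex_Ioo c d)).inter (convex_ball _ _)).isPreconnected
  have hop : ∀ a b c d : ℝ, IsOpen ((Ioo a b ×ˢ Ioo c d) ∩ Metric.ball (0 : ℝ × ℝ) R) := by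
    intro a b c d
    exact (isOpen_Ioo.prod isOpen_Ioo).inter Metric.isOpen_ball
  have h1 : ∀ c d, d - c < δ → ∀ a b,
      ∃ G, IsSec O g ((Ioo a b ×ˢ Ioo c d) ∩ Metric.ball 0 R) G := by
    intro c d hcd
    refine interval_induct (fun a b => ∃ G, IsSec O g ((Ioo a b ×ˢ Ioo c d) ∩ Metric.ball 0 R) G) δ hδ ?_ ?_
    · intro s t hst; exact hs s t c d hst hcd
    · intro s s' t' t e1 e2 e3 q1 q2
      have := sec_union O g hcov (hop s t' c d) (hop s' t c d) (by
        have : (Ioo s t' ×ˢ Ioo c d ∩ Metric.ball (0:ℝ×ℝ) R) ∩ (Ioo s' t ×ˢ Ioo c d ∩ Metric.ball 0 R)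
          = (Ioo s' t' ×ˢ Ioo c d) ∩ Metric.ball 0 R := by
          ext ⟨x, y⟩; simp only [mem_inter_iff, mem_prod, mem_Ioo]
          constructor
          · rintro ⟨⟨⟨⟨h1, h2⟩, h3⟩, h4⟩, ⟨⟨h5, h6⟩, h7⟩, h8⟩; exact ⟨⟨⟨h5, h2⟩, h3⟩, h4⟩
          · rintro ⟨⟨⟨h1, h2⟩, h3⟩, h4⟩
            exact ⟨⟨⟨⟨by linarith, h2⟩, h3⟩, h4⟩, ⟨⟨h1, by linarith⟩, h3⟩, h4⟩
        rw [this]; exact hconv _ _ _ _) q1 q2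
      obtain ⟨G, hG⟩ := this
      refine ⟨G, fun x hx => hG x ?_⟩
      obtain ⟨⟨⟨a1, a2⟩, a3⟩, a4⟩ := hx
      by_cases hx : x.1 < t'
      · exact Or.inl ⟨⟨⟨a1, hx⟩, a3⟩, a4⟩
      · exact Or.inr ⟨⟨⟨by linarith, a2⟩, a3⟩, a4⟩
  have h2 : ∀ a b c d,
      ∃ G, IsSec O g ((Ioo a b ×ˢ Ioo c d) ∩ Metric.ball 0 R) G := by
    intro a b
    refine interval_induct (fun c d => ∃ G, IsSec O g ((Ioo a b ×ˢ Ioo c d) ∩ Metric.ball 0 R) G) δ hδ ?_ ?_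
    · intro s t hst; exact h1 s t hst a b
    · intro s s' t' t e1 e2 e3 q1 q2
      have := sec_union O g hcov (hop a b s t') (hop a b s' t) (by
        have : (Ioo a b ×ˢ Ioo s t' ∩ Metric.ball (0:ℝ×ℝ) R) ∩ (Ioo a b ×ˢ Ioo s' t ∩ Metric.ball 0 R)
          = (Ioo a b ×ˢ Ioo s' t') ∩ Metric.ball 0 R := by
          ext ⟨x, y⟩; simp only [mem_inter_iff, mem_prod, mem_Ioo]
          constructor
          · rintro ⟨⟨⟨h3, h1, h2⟩, h4⟩, ⟨h7, h5, h6⟩, h8⟩; exact ⟨⟨h3, ⟨h5, h2⟩⟩, h4⟩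
          · rintro ⟨⟨h3, ⟨h1, h2⟩⟩, h4⟩
            exact ⟨⟨⟨h3, ⟨by linarith, h2⟩⟩, h4⟩, ⟨h3, ⟨h1, by linarith⟩⟩, h4⟩
        rw [this]; exact hconv _ _ _ _) q1 q2
      obtain ⟨G, hG⟩ := this
      refine ⟨G, fun x hx => hG x ?_⟩
      obtain ⟨⟨a3, ⟨a1, a2⟩⟩, a4⟩ := hx
      by_cases hx : x.2 < t'
      · exact Or.inl ⟨⟨a3, ⟨a1, hx⟩⟩, a4⟩
      · exact Or.inr ⟨⟨a3, ⟨by linarith, a2⟩⟩, a4⟩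
  obtain ⟨G, hG⟩ := h2 (-R) R (-R) R
  refine ⟨G, fun x hx => hG x ⟨⟨?_, ?_⟩, hx⟩⟩
  · have := (norm_fst_le x).trans_lt (mem_ball_zero_iff.1 hx)
    exact abs_lt.1 this
  · have := (norm_snd_le x).trans_lt (mem_ball_zero_iff.1 hx)
    exact abs_lt.1 this

/-- Hemisphere parametrisation (with radial clipping) -/
noncomputable def hemi (s : ℝ) (p : ℝ × ℝ) : E3 :=
  !₂[p.1 / max 1 (√(p.1 ^ 2 + p.2 ^ 2)), p.2 / max 1 (√(p.1 ^ 2 + p.2 ^ 2)),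
    s * √(1 - (p.1 ^ 2 + p.2 ^ 2) / (max 1 (√(p.1 ^ 2 + p.2 ^ 2))) ^ 2)]

lemma hemi_mem (s : ℝ) (hs : s ^ 2 = 1) (p : ℝ × ℝ) : hemi s p ∈ Metric.sphere (0 : E3) 1 := by
  have hm : (0:ℝ) < max 1 (√(p.1 ^ 2 + p.2 ^ 2)) := lt_of_lt_of_le one_pos (le_max_left _ _)
  have h1 : (p.1 ^ 2 + p.2 ^ 2) / (max 1 (√(p.1 ^ 2 + p.2 ^ 2))) ^ 2 ≤ 1 := by
    rw [div_le_one (by positivity)]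
    have h2 : √(p.1 ^ 2 + p.2 ^ 2) ≤ max 1 (√(p.1 ^ 2 + p.2 ^ 2)) := le_max_right _ _
    have h3 := Real.sq_sqrt (by positivity : 0 ≤ p.1 ^ 2 + p.2 ^ 2)
    calc _ = √(p.1 ^ 2 + p.2 ^ 2) ^ 2 := h3.symm
      _ ≤ _ := by gcongr
  rw [mem_sphere_zero_iff_norm, EuclideanSpace.norm_eq, Real.sqrt_eq_one]
  simp only [hemi, Fin.sum_univ_three, Real.norm_eq_abs, sq_abs]
  simp only [PiLp.toLp_apply, Matrix.cons_val]
  rw [mul_pow, hs, Real.sq_sqrt (by linarith)]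
  field_simp
  ring

lemma hemi_cont (s : ℝ) : Continuous (hemi s) := by
  unfold hemi
  have hm : ∀ p : ℝ × ℝ, max 1 (√(p.1 ^ 2 + p.2 ^ 2)) ≠ 0 := fun p =>
    (lt_of_lt_of_le one_pos (le_max_left _ _)).ne'
  have hm2 : ∀ p : ℝ × ℝ, (max 1 (√(p.1 ^ 2 + p.2 ^ 2))) ^ 2 ≠ 0 := fun p => pow_ne_zero _ (hm p)
  refine (PiLp.continuous_toLp 2 _).comp ?_
  refine continuous_pi (fun i => ?_)
  fin_cases i
  · exact Continuous.div (by fun_prop) (by fun_prop) hm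
  · exact Continuous.div (by fun_prop) (by fun_prop) hm
  · exact continuous_const.mul (Real.continuous_sqrt.comp
      (continuous_const.sub (Continuous.div (by fun_prop) (by fun_prop) hm2)))

lemma hemi_proj (s : ℝ) (hs : s ^ 2 = 1) (x : E3) (hx : x ∈ Metric.sphere (0 : E3) 1) (hsx : 0 ≤ s * x 2) :
    hemi s (x 0, x 1) = x := by
  have h1 : x 0 ^ 2 + x 1 ^ 2 + x 2 ^ 2 = 1 := by
    rw [mem_sphere_zero_iff_norm, EuclideanSpace.norm_eq, Real.sqrt_eq_one] at hx
    simpa [Fin.sum_univ_three] using hx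
  have h2 : max 1 (√(x 0 ^ 2 + x 1 ^ 2)) = 1 := by
    apply max_eq_left
    rw [Real.sqrt_le_iff]
    exact ⟨by norm_num, by nlinarith [sq_nonneg (x 2)]⟩
  have h3 : s * √(1 - (x 0 ^ 2 + x 1 ^ 2)) = x 2 := by
    have : 1 - (x 0 ^ 2 + x 1 ^ 2) = (s * x 2) ^ 2 := by rw [mul_pow, hs]; linarith
    rw [this, Real.sqrt_sq hsx, ← mul_assoc, ← pow_two, hs, one_mul]
  ext i
  fin_cases i
  · simp [hemi, h2]
  · simp [hemi, h2]
  · simpa [hemi, h2] using h3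

/-- a locally exact datum on the 2-sphere is exact -/
lemma sec_sphere {X ι : Type*} [TopologicalSpace X] (h : X ≃ₜ Metric.sphere (0 : E3) 1)
    (O : ι → Set X) (hO : ∀ i, IsOpen (O i)) (g : ι → X → ℝ)
    (hcov : ∀ x, ∃ i, x ∈ O i)
    (hcomp : ∀ i j, ∀ x ∈ O i ∩ O j, ∀ᶠ y in 𝓝 x, g i y - g j y = g i x - g j x) :
    ∃ G, IsSec O g univ G := by
  classical
  have main : ∀ s : ℝ, s ^ 2 = 1 → ∃ G : X → ℝ, ∀ x : X, 0 ≤ s * (h x : E3) 2 → ∀ i, x ∈ O i →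
      ∀ᶠ y in 𝓝 x, 0 ≤ s * (h y : E3) 2 → G y - g i y = G x - g i x := by
    intro s hs
    let π : ℝ × ℝ → X := fun p => h.symm ⟨hemi s p, hemi_mem s hs p⟩
    have hπ : Continuous π := h.symm.continuous.comp ((hemi_cont s).subtype_mk _)
    obtain ⟨G, hG⟩ := sec_rect (fun i => π ⁻¹' O i) (fun i => (hO i).preimage hπ)
      (fun i p => g i (π p)) (fun p => hcov (π p))
      (fun i j x hx => (hπ.tendsto x).eventually (hcomp i j (π x) hx)) 2
    let pr : X → ℝ × ℝ := fun x => ((h x : E3) 0, (h x : E3) 1)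
    have hpr : Continuous pr := by
      have : Continuous fun x => (h x : E3) := continuous_subtype_val.comp h.continuous
      fun_prop
    have hππ : ∀ x : X, 0 ≤ s * (h x : E3) 2 → π (pr x) = x := by
      intro x hx
      show h.symm _ = x
      rw [h.symm_apply_eq]
      exact Subtype.ext (hemi_proj s hs _ (h x).2 hx)
    refine ⟨fun x => G (pr x), fun x hx i hi => ?_⟩
    have h1 := hG (pr x) (by
      rw [mem_ball_zero_iff, Prod.norm_def, max_lt_iff]
      have hn : ‖(h x : E3)‖ = 1 := mem_sphere_zero_iff_norm.1 (h x).2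
      have h0 := PiLp.norm_apply_le (h x : E3) 0
      have h1 := PiLp.norm_apply_le (h x : E3) 1
      rw [hn] at h0 h1
      constructor
      · exact lt_of_le_of_lt h0 (by norm_num)
      · exact lt_of_le_of_lt h1 (by norm_num)) i (by show π (pr x) ∈ O i; rwa [hππ x hx])
    filter_upwards [(hpr.tendsto x).eventually h1] with y hy hy2
    rw [hππ x hx, hππ y hy2] at hy
    exact hy
  obtain ⟨G1, hG1⟩ := main 1 (by norm_num)
  obtain ⟨G2, hG2⟩ := main (-1) (by norm_num)
  have hcoord : Continuous fun x => (h x : E3) 2 := by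
    have : Continuous fun x => (h x : E3) := continuous_subtype_val.comp h.continuous
    fun_prop
  -- the equator
  let eq : ℝ → X := fun t => h.symm ⟨!₂[Real.cos t, Real.sin t, 0], by
    rw [mem_sphere_zero_iff_norm, EuclideanSpace.norm_eq, Real.sqrt_eq_one]
    simp [Fin.sum_univ_three]⟩
  have heq : Continuous eq := by
    refine h.symm.continuous.comp (Continuous.subtype_mk ?_ _)
    refine (PiLp.continuous_toLp 2 _).comp ?_
    refine continuous_pi (fun i => ?_)
    fin_cases i
    · exact Real.continuous_cos
    · exact Real.continuous_sin
    · exact continuous_const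
  have heq0 : ∀ t, (h (eq t) : E3) 2 = 0 := by intro t; simp [eq]
  have hE : ∀ x : X, (h x : E3) 2 = 0 → ∃ t, eq t = x := by
    intro x hx
    have h1 : (h x : E3) 0 ^ 2 + (h x : E3) 1 ^ 2 = 1 := by
      have := mem_sphere_zero_iff_norm.1 (h x).2
      rw [EuclideanSpace.norm_eq, Real.sqrt_eq_one] at this
      simpa [Fin.sum_univ_three, hx] using this
    let z : ℂ := ⟨(h x : E3) 0, (h x : E3) 1⟩
    have hz : ‖z‖ = 1 := by
      rw [Complex.norm_def, Complex.normSq_mk, Real.sqrt_eq_one]; nlinarith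
    refine ⟨z.arg, ?_⟩
    show h.symm _ = x
    rw [h.symm_apply_eq]
    apply Subtype.ext
    have hz0 : z ≠ 0 := by rw [← norm_pos_iff, hz]; exact one_pos
    ext i
    fin_cases i
    · simp [Complex.cos_arg hz0, hz, z]
    · simp [Complex.sin_arg, hz, z]
    · simp [hx]
  have hc : ∀ x : X, (h x : E3) 2 = 0 → G1 x - G2 x = G1 (eq 0) - G2 (eq 0) := by
    intro x hx
    obtain ⟨t, rfl⟩ := hE x hx
    refine const_of_locally_const (U := univ) isPreconnected_univ (fun t => G1 (eq t) - G2 (eq t))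
      (fun t _ => ?_) (mem_univ t) (mem_univ 0)
    obtain ⟨i, hi⟩ := hcov (eq t)
    rw [nhdsWithin_univ]
    filter_upwards [(heq.tendsto t).eventually (hG1 (eq t) (by simp [heq0]) i hi),
      (heq.tendsto t).eventually (hG2 (eq t) (by simp [heq0]) i hi)] with u e1 e2
    have e1 := e1 (by simp [heq0])
    have e2 := e2 (by simp [heq0])
    linarith
  set c := G1 (eq 0) - G2 (eq 0)
  let G : X → ℝ := fun x => if 0 ≤ (h x : E3) 2 then G1 x else G2 x + c
  have hGp : ∀ x, 0 ≤ (h x : E3) 2 → G x = G1 x := fun x hx => if_pos hx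
  have hGm : ∀ x, (h x : E3) 2 ≤ 0 → G x = G2 x + c := by
    intro x hx
    rcases hx.lt_or_eq with h1 | h1
    · exact if_neg (by linarith)
    · rw [hGp x h1.ge]; linarith [hc x h1]
  have ev1 : ∀ x : X, 0 ≤ (h x : E3) 2 → ∀ i, x ∈ O i →
      ∀ᶠ y in 𝓝 x, 0 ≤ (h y : E3) 2 → G y - g i y = G x - g i x := by
    intro x hx i hi
    filter_upwards [hG1 x (by simpa using hx) i hi] with y hy hy2
    rw [hGp x hx, hGp y hy2]; exact hy (by simpa using hy2)
  have ev2 : ∀ x : X, (h x : E3) 2 ≤ 0 → ∀ i, x ∈ O i →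
      ∀ᶠ y in 𝓝 x, (h y : E3) 2 ≤ 0 → G y - g i y = G x - g i x := by
    intro x hx i hi
    filter_upwards [hG2 x (by simpa using hx) i hi] with y hy hy2
    rw [hGm x hx, hGm y hy2]; linarith [hy (by simpa using hy2)]
  refine ⟨G, fun x _ i hi => ?_⟩
  rcases lt_trichotomy ((h x : E3) 2) 0 with h1 | h1 | h1
  · filter_upwards [ev2 x h1.le i hi, (hcoord.tendsto x).eventually (Iio_mem_nhds h1)] with y e1 e2
    exact e1 (le_of_lt e2)
  · filter_upwards [ev1 x h1.ge i hi, ev2 x h1.le i hi] with y e1 e2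
    rcases le_total 0 ((h y : E3) 2) with h2 | h2
    · exact e1 h2
    · exact e2 h2
  · filter_upwards [ev1 x h1.le i hi, (hcoord.tendsto x).eventually (Ioi_mem_nhds h1)] with y e1 e2
    exact e1 (le_of_lt e2)

end

section
open MeasureTheory Filter Set
open scoped RealInnerProductSpace Topology

lemma surf_inv_dom (S : Set E3) (h : S ≃ₜ Metric.sphere (0 : E3) 1) (g : E2 → E3) (a : E2) (ρ : ℝ)
    (hρ : 0 < ρ) (hc : ContinuousOn g (Metric.closedBall a ρ))
    (hinj : InjOn g (Metric.closedBall a ρ)) (hm : MapsTo g (Metric.closedBall a ρ) S) :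
    g '' Metric.closedBall a (ρ / 2) ∈ 𝓝[S] (g a) := by
  classical
  have : Fact (Module.finrank ℝ E3 = 2 + 1) := ⟨by simp⟩
  set b : E2 := a + ρ • EuclideanSpace.single 0 1 with hb
  have hab : dist b a = ρ := by
    rw [hb, dist_eq_norm, add_sub_cancel_left, norm_smul]; simp [abs_of_pos hρ]
  have hbm : b ∈ Metric.closedBall a ρ := by rw [Metric.mem_closedBall, hab]
  have ham : a ∈ Metric.closedBall a ρ := Metric.mem_closedBall_self hρ.le
  have hsub : Metric.closedBall a (ρ/2) ⊆ Metric.closedBall a ρ :=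
    Metric.closedBall_subset_closedBall (by linarith)
  have hab' : a ≠ b := by
    intro e; rw [← e, dist_self] at hab; linarith
  have hne : ∀ x ∈ Metric.closedBall a (ρ/2), g x ≠ g b := by
    intro x hx e
    have := hinj (hsub hx) hbm e
    rw [this, Metric.mem_closedBall, hab] at hx
    linarith
  let hh : E3 → Metric.sphere (0:E3) 1 := fun y => if hy : y ∈ S then h ⟨y, hy⟩ else h ⟨g b, hm hbm⟩
  have hhS : ∀ y (hy : y ∈ S), hh y = h ⟨y, hy⟩ := fun y hy => dif_pos hy
  have hhc : ContinuousOn hh S := by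
    rw [continuousOn_iff_continuous_domRestrict]
    have : S.domRestrict hh = h := by
      ext1 y; exact hhS y y.2
    rw [this]; exact h.continuous
  have hhi : ∀ y ∈ S, ∀ z ∈ S, hh y = hh z → y = z := by
    intro y hy z hz e
    rw [hhS y hy, hhS z hz] at e
    exact congrArg Subtype.val (h.injective e)
  set N := hh (g b) with hN
  let J := Complex.orthonormalBasisOneI.repr
  let P := stereographic' 2 N
  have hsrc : P.source = {N}ᶜ := stereographic'_source N
  have hPy : ∀ y ∈ S, y ≠ g b → hh y ∈ P.source := by
    intro y hy hyb
    rw [hsrc]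
    intro e
    exact hyb (hhi y hy _ (hm hbm) e)
  let q : ℂ → E2 := fun z => a + (ρ / 2) • J z
  have hq : MapsTo q (Metric.closedBall 0 1) (Metric.closedBall a (ρ/2)) := by
    intro z hz
    rw [mem_closedBall_zero_iff] at hz
    rw [Metric.mem_closedBall, dist_eq_norm]
    simp only [q, add_sub_cancel_left, norm_smul, LinearIsometryEquiv.norm_map, Real.norm_eq_abs]
    rw [abs_of_pos (by linarith : 0 < ρ/2)]
    nlinarith
  have hqc : Continuous q := by
    have := J.continuous
    fun_prop
  let F : ℂ → ℂ := fun z => J.symm (P (hh (g (q z))))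
  have hS : ∀ z ∈ Metric.closedBall (0:ℂ) 1, g (q z) ∈ S := fun z hz => hm (hsub (hq hz))
  have hFs : ∀ z ∈ Metric.closedBall (0:ℂ) 1, hh (g (q z)) ∈ P.source := fun z hz =>
    hPy _ (hS z hz) (hne _ (hq hz))
  have hFc : ContinuousOn F (Metric.closedBall 0 1) := by
    refine J.symm.continuous.comp_continuousOn ?_
    refine P.continuousOn.comp ?_ hFs
    refine hhc.comp ?_ hS
    exact hc.comp hqc.continuousOn (fun z hz => hsub (hq hz))
  have hFi : InjOn F (Metric.closedBall 0 1) := by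
    intro z hz w hw e
    have e1 := P.injOn (hFs z hz) (hFs w hw) (J.symm.injective e)
    have e2 := hinj (hsub (hq hz)) (hsub (hq hw)) (hhi _ (hS z hz) _ (hS w hw) e1)
    have e3 := smul_right_injective E2 (by linarith : ρ / 2 ≠ 0) (add_left_cancel e2)
    exact J.injective e3
  have key := inv_dom F hFc hFi
  have hq0 : q 0 = a := by simp [q]
  have hF0 : F 0 = J.symm (P (hh (g a))) := by simp only [F, hq0]
  rw [hF0] at key
  have hcw : ContinuousWithinAt (fun y => J.symm (P (hh y))) S (g a) := by
    have h1 : ContinuousAt (fun p => J.symm (P p)) (hh (g a)) :=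
      J.symm.continuous.continuousAt.comp
        (P.continuousAt (hPy _ (hm ham) (hne a (Metric.mem_closedBall_self (by linarith)))))
    exact h1.comp_continuousWithinAt (hhc _ (hm ham))
  have e1 := hcw.eventually_mem key
  have e2 : ∀ᶠ y in 𝓝[S] (g a), y ≠ g b :=
    mem_nhdsWithin_of_mem_nhds (isOpen_ne.mem_nhds (hne a (Metric.mem_closedBall_self (by linarith))))
  filter_upwards [e1, e2, self_mem_nhdsWithin] with y h1 h2 h3
  obtain ⟨z, hz, he⟩ := h1
  refine ⟨q z, hq hz, ?_⟩
  have := P.injOn (hFs z hz) (hPy y h3 h2) (J.symm.injective he)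
  exact hhi _ (hS z hz) _ h3 this

lemma surf_chart (S : Set E3) (hS : IsSurface 2 S) (h : S ≃ₜ Metric.sphere (0 : E3) 1)
    (p : E3) (hp : p ∈ S) :
    ∃ (f : E2 → E3) (x0 : E2) (ρ K L : ℝ), 0 < ρ ∧ 0 ≤ K ∧ 0 ≤ L ∧ f x0 = p ∧
      ContDiffOn ℝ 2 f (Metric.ball x0 ρ) ∧ MapsTo f (Metric.ball x0 ρ) S ∧
      (∀ x ∈ Metric.ball x0 ρ, ∀ y ∈ Metric.ball x0 ρ, ‖x - y‖ ≤ K * ‖f x - f y‖) ∧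
      (∀ x ∈ Metric.ball x0 ρ, ∀ y ∈ Metric.ball x0 ρ, ‖f x - f y‖ ≤ L * ‖x - y‖) ∧
      (∀ x ∈ Metric.ball x0 ρ, Function.Injective (fderiv ℝ f x)) ∧
      (∀ ρ', 0 < ρ' → ρ' ≤ ρ → f '' Metric.ball x0 ρ' ∈ 𝓝[S] p) := by
  obtain ⟨f, U, V, hU, hV, hpV, hf, hinj, him, himm⟩ := hS p hp
  obtain ⟨x0, hx0, rfl⟩ : p ∈ f '' U := by rw [him]; exact ⟨hp, hpV⟩
  have hfx : ContDiffAt ℝ 2 f x0 := (hf x0 hx0).contDiffAt (hU.mem_nhds hx0)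
  have hst : HasStrictFDerivAt f (fderiv ℝ f x0) x0 := hfx.hasStrictFDerivAt (by norm_num)
  obtain ⟨c, hc, hanti⟩ := (fderiv ℝ f x0 : E2 →ₗ[ℝ] E3).exists_antilipschitzWith
    (LinearMap.ker_eq_bot.2 (himm x0 hx0))
  have hcpos : (0:ℝ) < c := by exact_mod_cast hc
  have hanti' : ∀ z, ‖z‖ ≤ c * ‖fderiv ℝ f x0 z‖ := by
    intro z
    have := hanti.le_mul_dist z 0
    simpa using this
  obtain ⟨s, hs, happ⟩ := hst.approximates_deriv_on_nhds (c := (2 * c)⁻¹) (Or.inr (by positivity))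
  obtain ⟨ρ, hρ, hball⟩ := Metric.mem_nhds_iff.1 (Filter.inter_mem hs (hU.mem_nhds hx0))
  have hbU : Metric.ball x0 ρ ⊆ U := fun x hx => (hball hx).2
  have happ' : ∀ x ∈ Metric.ball x0 ρ, ∀ y ∈ Metric.ball x0 ρ,
      ‖f x - f y - fderiv ℝ f x0 (x - y)‖ ≤ (2 * c : ℝ)⁻¹ * ‖x - y‖ := by
    intro x hx y hy
    have := happ x (hball hx).1 y (hball hy).1
    simpa using this
  have hMap : MapsTo f U S := fun x hx => by
    have : f x ∈ f '' U := ⟨x, hx, rfl⟩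
    rw [him] at this; exact this.1
  refine ⟨f, x0, ρ, 2 * c, ‖fderiv ℝ f x0‖ + (2 * c : ℝ)⁻¹, hρ, by positivity, by positivity, rfl,
    hf.mono hbU, hMap.mono_left hbU, ?_, ?_, fun x hx => himm x (hbU hx), ?_⟩
  · intro x hx y hy
    have h1 := happ' x hx y hy
    have h2 := hanti' (x - y)
    have h3 : ‖fderiv ℝ f x0 (x - y)‖ ≤ ‖f x - f y‖ + (2 * c : ℝ)⁻¹ * ‖x - y‖ := by
      have := norm_sub_norm_le (fderiv ℝ f x0 (x - y)) (f x - f y)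
      rw [norm_sub_rev (fderiv ℝ f x0 (x - y))] at this
      linarith
    have h4 : c * ((2 * c : ℝ)⁻¹ * ‖x - y‖) = ‖x - y‖ / 2 := by field_simp
    have h5 := mul_le_mul_of_nonneg_left h3 hcpos.le
    rw [mul_add, h4] at h5
    linarith
  · intro x hx y hy
    have h1 := happ' x hx y hy
    have h2 := (fderiv ℝ f x0).le_opNorm (x - y)
    have h3 := norm_sub_norm_le (f x - f y) (fderiv ℝ f x0 (x - y))
    rw [add_mul]; linarith
  · intro ρ' h0 h1
    have hsub : Metric.closedBall x0 (ρ' / 2) ⊆ U :=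
      (Metric.closedBall_subset_ball (by linarith)).trans hbU
    have := surf_inv_dom S h f x0 (ρ' / 2) (by linarith) (hf.continuousOn.mono hsub)
      (hinj.mono hsub) (hMap.mono_left hsub)
    refine Filter.mem_of_superset this (image_mono ?_)
    exact Metric.closedBall_subset_ball (by linarith)

lemma locconst_of_quad (S : Set E3) (hS : IsSurface 2 S) (h : S ≃ₜ Metric.sphere (0 : E3) 1)
    (p : E3) (hp : p ∈ S) (g : E3 → ℝ) (r C : ℝ) (hr : 0 < r)
    (hg : ∀ x ∈ S ∩ Metric.ball p r, ∀ y ∈ S ∩ Metric.ball p r, |g y - g x| ≤ C * ‖y - x‖ ^ 2) :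
    ∀ᶠ y in 𝓝[S] p, g y = g p := by
  obtain ⟨f, x0, ρ, K, L, hρ, hK, hL, rfl, hf, hm, hbi, hlip, himm, hnb⟩ := surf_chart S hS h p hp
  have hx0 : x0 ∈ Metric.ball x0 ρ := Metric.mem_ball_self hρ
  have hcont : ContinuousAt f x0 := hf.continuousOn.continuousAt (Metric.ball_mem_nhds _ hρ)
  obtain ⟨ρ1, hρ1, hb1⟩ := Metric.mem_nhds_iff.1
    (Filter.inter_mem (hcont (Metric.ball_mem_nhds _ hr)) (Metric.ball_mem_nhds x0 hρ))
  have hin : ∀ x ∈ Metric.ball x0 (min ρ ρ1), f x ∈ S ∩ Metric.ball (f x0) r := by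
    intro x hx
    have hx1 : x ∈ Metric.ball x0 ρ1 := Metric.ball_subset_ball (min_le_right _ _) hx
    exact ⟨hm (hb1 hx1).2, (hb1 hx1).1⟩
  have hsub : Metric.ball x0 (min ρ ρ1) ⊆ Metric.ball x0 ρ := Metric.ball_subset_ball (min_le_left _ _)
  have hq : ∀ x ∈ Metric.ball x0 (min ρ ρ1), ∀ y ∈ Metric.ball x0 (min ρ ρ1),
      |g (f y) - g (f x)| ≤ |C| * L ^ 2 * ‖y - x‖ ^ 2 := by
    intro x hx y hy
    calc _ ≤ C * ‖f y - f x‖ ^ 2 := hg _ (hin x hx) _ (hin y hy)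
      _ ≤ |C| * ‖f y - f x‖ ^ 2 := by gcongr; exact le_abs_self C
      _ ≤ |C| * (L * ‖y - x‖) ^ 2 := by gcongr; exact hlip y (hsub hy) x (hsub hx)
      _ = _ := by ring
  have hder : ∀ x ∈ Metric.ball x0 (min ρ ρ1), HasFDerivAt (fun x => g (f x)) (0 : E2 →L[ℝ] ℝ) x := by
    intro x hx
    rw [hasFDerivAt_iff_isLittleO_nhds_zero]
    have : (fun z : E2 => g (f (x + z)) - g (f x) - (0 : E2 →L[ℝ] ℝ) z) =O[𝓝 0] fun z => ‖z‖ ^ 2 := by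
      apply Asymptotics.IsBigO.of_bound (|C| * L ^ 2)
      have hnear : ∀ᶠ z : E2 in 𝓝 0, x + z ∈ Metric.ball x0 (min ρ ρ1) := by
        have : Tendsto (fun z : E2 => x + z) (𝓝 0) (𝓝 x) := by
          have : Continuous (fun z : E2 => x + z) := by fun_prop
          simpa using this.tendsto 0
        exact this (Metric.isOpen_ball.mem_nhds hx)
      filter_upwards [hnear] with z hz
      have := hq x hx _ hz
      simpa using this
    refine this.trans_isLittleO ?_
    simpa using Asymptotics.isLittleO_norm_pow_id (E' := E2) one_lt_two
  filter_upwards [hnb (min ρ ρ1) (lt_min hρ hρ1) (min_le_left _ _)] with y hy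
  obtain ⟨x, hx, rfl⟩ := hy
  refine (convex_ball x0 (min ρ ρ1)).is_const_of_fderivWithin_eq_zero (𝕜 := ℝ)
    (f := fun x => g (f x)) (fun z hz => (hder z hz).differentiableAt.differentiableWithinAt)
    (fun z hz => ?_) hx (Metric.mem_ball_self (lt_min hρ hρ1))
  exact (hder z hz).hasFDerivWithinAt.fderivWithin (Metric.isOpen_ball.uniqueDiffWithinAt hz)

end

section
open MeasureTheory Filter Set
open scoped RealInnerProductSpace Topology

lemma local_prim (S : Set E3) (hS : IsSurface 2 S) (h : S ≃ₜ Metric.sphere (0 : E3) 1)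
    (v : E3 → E3) (hv : ContDiff ℝ 1 v) (Lv : ℝ) (hLv0 : 0 ≤ Lv) (hLv : ∀ x y, ‖v x - v y‖ ≤ Lv * ‖x - y‖)
    (hsym : ∀ p ∈ S, ∀ a b, ⟪fderiv ℝ v p a, b⟫ = ⟪fderiv ℝ v p b, a⟫)
    (p : E3) (hp : p ∈ S) :
    ∃ (r C : ℝ) (g : E3 → ℝ), 0 < r ∧ ∀ x ∈ S ∩ Metric.ball p r, ∀ y ∈ S ∩ Metric.ball p r,
      |g y - g x - ⟪v x, y - x⟫| ≤ C * ‖y - x‖ ^ 2 := by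
  classical
  obtain ⟨f, x0, ρ, K, L, hρ, hK, hL, rfl, hf, hm, hbi, hlip, himm, hnb⟩ := surf_chart S hS h p hp
  set D := Metric.ball x0 ρ with hD
  have hDo : IsOpen D := Metric.isOpen_ball
  have hfat : ∀ x ∈ D, ContDiffAt ℝ 2 f x := fun x hx => (hf x hx).contDiffAt (hDo.mem_nhds hx)
  have hfd : ∀ x ∈ D, HasFDerivAt f (fderiv ℝ f x) x := fun x hx =>
    ((hfat x hx).differentiableAt (by norm_num)).hasFDerivAt
  have hf1 : ∀ x ∈ D, DifferentiableAt ℝ (fderiv ℝ f) x := fun x hx =>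
    ((hfat x hx).fderiv_right (m := 1) (by norm_num)).differentiableAt (by norm_num)
  have hvd : ∀ x, HasFDerivAt v (fderiv ℝ v x) x := fun x =>
    (hv.differentiable (by norm_num) x).hasFDerivAt
  let ω : E2 → E2 →L[ℝ] ℝ := fun x => (innerSL ℝ (v (f x))).comp (fderiv ℝ f x)
  have hωd : ∀ x ∈ D, DifferentiableAt ℝ ω x := by
    intro x hx
    have h1 : DifferentiableAt ℝ (fun x => v (f x)) x :=
      ((hvd (f x)).comp x (hfd x hx)).differentiableAt
    have h2 : DifferentiableAt ℝ (fun x => innerSL ℝ (v (f x))) x :=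
      (innerSL ℝ (E := E3)).differentiableAt.comp x h1
    exact h2.clm_comp (hf1 x hx)
  have hωf : ∀ x ∈ D, ∀ a b, fderiv ℝ ω x a b =
      ⟪fderiv ℝ v (f x) (fderiv ℝ f x a), fderiv ℝ f x b⟫ + ⟪v (f x), fderiv ℝ (fderiv ℝ f) x a b⟫ := by
    intro x hx a b
    have e1 : HasFDerivAt (fun y => ω y b) ((ContinuousLinearMap.apply ℝ ℝ b).comp (fderiv ℝ ω x)) x :=
      (ContinuousLinearMap.apply ℝ ℝ b).hasFDerivAt.comp x (hωd x hx).hasFDerivAt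
    have e2 : HasFDerivAt (fun y => fderiv ℝ f y b)
        ((ContinuousLinearMap.apply ℝ E3 b).comp (fderiv ℝ (fderiv ℝ f) x)) x :=
      (ContinuousLinearMap.apply ℝ E3 b).hasFDerivAt.comp x (hf1 x hx).hasFDerivAt
    have e3 := ((hvd (f x)).comp x (hfd x hx)).inner ℝ e2
    have e4 := congrArg (fun l => l a) (e1.unique e3)
    simp only [ContinuousLinearMap.comp_apply, ContinuousLinearMap.apply_apply,
      fderivInnerCLM_apply, ContinuousLinearMap.prod_apply] at e4
    rw [e4, add_comm]; rfl
  have hsymω : ∀ a ∈ D, ∀ x y, fderiv ℝ ω a x y = fderiv ℝ ω a y x := by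
    intro a ha x y
    rw [hωf a ha, hωf a ha, hsym _ (hm ha)]
    have := (hfat a ha).isSymmSndFDerivAt (by simp)
    rw [this.eq]
  obtain ⟨A, hA⟩ := (convex_ball x0 ρ).exists_forall_hasFDerivAt_of_fderiv_symmetric hDo
    (fun x hx => (hωd x hx).differentiableWithinAt) hsymω
  -- operator norm bound of the derivative
  have hfn : ∀ x ∈ D, ‖fderiv ℝ f x‖ ≤ L := by
    intro x hx
    refine (hfd x hx).le_of_lip' hL ?_
    filter_upwards [hDo.mem_nhds hx] with y hy
    exact hlip y hy x hx
  have hquad : ∀ x ∈ D, ∀ y ∈ D, |A y - A x - ⟪v (f x), f y - f x⟫| ≤ Lv * L * L * ‖y - x‖ ^ 2 := by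
    intro x hx y hy
    set s := D ∩ Metric.closedBall x ‖y - x‖
    have hs : Convex ℝ s := (convex_ball x0 ρ).inter (convex_closedBall _ _)
    have hd : ∀ z ∈ s, HasFDerivWithinAt (fun z => A z - ⟪v (f x), f z⟫)
        (ω z - (innerSL ℝ (v (f x))).comp (fderiv ℝ f z)) s z := by
      intro z hz
      refine HasFDerivAt.hasFDerivWithinAt ?_
      exact (hA z hz.1).sub ((innerSL ℝ (v (f x))).hasFDerivAt.comp z (hfd z hz.1))
    have hb : ∀ z ∈ s, ‖ω z - (innerSL ℝ (v (f x))).comp (fderiv ℝ f z)‖ ≤ Lv * L * L * ‖y - x‖ := by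
      intro z hz
      have : ω z - (innerSL ℝ (v (f x))).comp (fderiv ℝ f z)
          = (innerSL ℝ (v (f z) - v (f x))).comp (fderiv ℝ f z) := by
        ext b; simp [ω, inner_sub_left]
      rw [this]
      refine (ContinuousLinearMap.opNorm_comp_le _ _).trans ?_
      rw [innerSL_apply_norm]
      have hz2 : ‖z - x‖ ≤ ‖y - x‖ := by simpa [dist_eq_norm] using hz.2
      calc _ ≤ (Lv * ‖f z - f x‖) * L := by
            gcongr
            · exact hLv _ _
            · exact hfn z hz.1
        _ ≤ (Lv * (L * ‖z - x‖)) * L := by gcongr; exact hlip z hz.1 x hx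
        _ ≤ (Lv * (L * ‖y - x‖)) * L := by gcongr
        _ = _ := by ring
    have := hs.norm_image_sub_le_of_norm_hasFDerivWithin_le hd hb
      (x := x) (y := y) ⟨hx, by simp⟩ ⟨hy, by simp [dist_eq_norm]⟩
    rw [Real.norm_eq_abs] at this
    rw [inner_sub_right]
    calc _ = |A y - ⟪v (f x), f y⟫ - (A x - ⟪v (f x), f x⟫)| := by congr 1; ring
      _ ≤ _ := this
      _ = _ := by ring
  have hx0 : x0 ∈ D := Metric.mem_ball_self hρ
  obtain ⟨r, hr, hrs⟩ := Metric.mem_nhdsWithin_iff.1 (hnb ρ hρ le_rfl)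
  refine ⟨r, Lv * L * L * K ^ 2, fun y => A (Function.invFunOn f D y), hr, ?_⟩
  have hinv : ∀ x ∈ S ∩ Metric.ball (f x0) r, Function.invFunOn f D x ∈ D ∧ f (Function.invFunOn f D x) = x := by
    intro x hx
    have : x ∈ f '' D := hrs ⟨hx.2, hx.1⟩
    exact ⟨Function.invFunOn_mem this, Function.invFunOn_eq this⟩
  intro x hx y hy
  obtain ⟨hx1, hx2⟩ := hinv x hx
  obtain ⟨hy1, hy2⟩ := hinv y hy
  have h1 := hquad _ hx1 _ hy1
  have h2 := hbi _ hy1 _ hx1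
  rw [hx2, hy2] at h1 h2
  calc _ ≤ _ := h1
    _ ≤ Lv * L * L * (K * ‖y - x‖) ^ 2 := by gcongr
    _ = _ := by ring

lemma compact_quad (S : Set E3) (hcpt : IsCompact S) (v : E3 → E3) (hv : Continuous v) (F : E3 → ℝ)
    (hFl : ∀ p ∈ S, ∃ ε > 0, ∃ C, ∀ x ∈ S ∩ Metric.ball p ε, ∀ y ∈ S ∩ Metric.ball p ε,
      |F y - F x - ⟪v x, y - x⟫| ≤ C * ‖y - x‖ ^ 2) :
    ∃ (C : ℝ), 0 ≤ C ∧ ∀ x ∈ S, ∀ y ∈ S, |F y - F x - ⟪v x, y - x⟫| ≤ C * ‖y - x‖ ^ 2 := by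
  -- boundedness of F near each point
  have hFb : ∀ p ∈ S, ∃ ε > 0, ∃ B, ∀ x ∈ S ∩ Metric.ball p ε, |F x| ≤ B := by
    intro p hp
    obtain ⟨ε, hε, C, hC⟩ := hFl p hp
    refine ⟨ε, hε, |F p| + ‖v p‖ * ε + |C| * ε ^ 2, fun x hx => ?_⟩
    have h1 := hC p ⟨hp, Metric.mem_ball_self hε⟩ x hx
    have h2 := abs_real_inner_le_norm (v p) (x - p)
    have h3 : ‖x - p‖ ≤ ε := by have := hx.2; rw [mem_ball_iff_norm] at this; exact this.le
    have h4 : C * ‖x - p‖ ^ 2 ≤ |C| * ε ^ 2 := by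
      calc _ ≤ |C| * ‖x - p‖ ^ 2 := by gcongr; exact le_abs_self C
        _ ≤ _ := by gcongr
    have h5 : ‖v p‖ * ‖x - p‖ ≤ ‖v p‖ * ε := by gcongr
    have h6 : F x = F p + ⟪v p, x - p⟫ + (F x - F p - ⟪v p, x - p⟫) := by ring
    rw [h6]
    refine (abs_add_le _ _).trans ?_
    have := abs_add_le (F p) ⟪v p, x - p⟫
    linarith
  have main : ∃ C, 0 ≤ C ∧ ∀ z ∈ S ×ˢ S, |F z.2 - F z.1 - ⟪v z.1, z.2 - z.1⟫| ≤ C * ‖z.2 - z.1‖ ^ 2 := by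
    refine (hcpt.prod hcpt).induction_on (p := fun T => ∃ C, 0 ≤ C ∧ ∀ z ∈ T, |F z.2 - F z.1 - ⟪v z.1, z.2 - z.1⟫| ≤ C * ‖z.2 - z.1‖ ^ 2)
      ⟨0, le_rfl, by simp⟩ ?_ ?_ ?_
    · rintro s t hst ⟨C, hC0, hC⟩
      exact ⟨C, hC0, fun z hz => hC z (hst hz)⟩
    · rintro s t ⟨C, hC0, hC⟩ ⟨C', hC0', hC'⟩
      refine ⟨C + C', by positivity, ?_⟩
      rintro z (hz | hz)
      · have := hC z hz; nlinarith [sq_nonneg ‖z.2 - z.1‖]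
      · have := hC' z hz; nlinarith [sq_nonneg ‖z.2 - z.1‖]
    · rintro ⟨x, y⟩ ⟨hx, hy⟩
      by_cases hxy : x = y
      · subst hxy
        obtain ⟨ε, hε, C, hC⟩ := hFl x hx
        refine ⟨(S ∩ Metric.ball x ε) ×ˢ (S ∩ Metric.ball x ε), ?_, |C|, abs_nonneg _, ?_⟩
        · rw [nhdsWithin_prod_eq]
          exact prod_mem_prod (inter_mem self_mem_nhdsWithin (mem_nhdsWithin_of_mem_nhds (Metric.ball_mem_nhds _ hε)))
            (inter_mem self_mem_nhdsWithin (mem_nhdsWithin_of_mem_nhds (Metric.ball_mem_nhds _ hε)))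
        · rintro z ⟨h1, h2⟩
          refine (hC _ h1 _ h2).trans ?_
          gcongr; exact le_abs_self C
      · obtain ⟨ε1, hε1, B1, hB1⟩ := hFb x hx
        obtain ⟨ε2, hε2, B2, hB2⟩ := hFb y hy
        have hd : 0 < ‖y - x‖ := norm_pos_iff.2 (sub_ne_zero.2 (Ne.symm hxy))
        have hc1 : ContinuousAt (fun z : E3 × E3 => ‖z.2 - z.1‖) (x, y) := by fun_prop
        have hc2 : ContinuousAt (fun z : E3 × E3 => |⟪v z.1, z.2 - z.1⟫|) (x, y) := by
          fun_prop
        have e1 := hc1.eventually (lt_mem_nhds (show ‖y - x‖ / 2 < ‖y - x‖ by linarith))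
        have e2 := hc2.eventually (gt_mem_nhds (show |⟪v x, y - x⟫| < |⟪v x, y - x⟫| + 1 by linarith))
        have e3 : (S ∩ Metric.ball x ε1) ×ˢ (S ∩ Metric.ball y ε2) ∈ 𝓝[S ×ˢ S] (x, y) := by
          rw [nhdsWithin_prod_eq]
          exact prod_mem_prod (inter_mem self_mem_nhdsWithin (mem_nhdsWithin_of_mem_nhds (Metric.ball_mem_nhds _ hε1)))
            (inter_mem self_mem_nhdsWithin (mem_nhdsWithin_of_mem_nhds (Metric.ball_mem_nhds _ hε2)))
        refine ⟨_, inter_mem e3 (inter_mem (mem_nhdsWithin_of_mem_nhds e1) (mem_nhdsWithin_of_mem_nhds e2)),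
          (|B1| + |B2| + |⟪v x, y - x⟫| + 1) / (‖y - x‖ / 2) ^ 2, by positivity, ?_⟩
        rintro z ⟨⟨h1, h2⟩, h3, h4⟩
        simp only [mem_setOf_eq] at h3 h4
        have b1 := (hB1 _ h1).trans (le_abs_self B1)
        have b2 := (hB2 _ h2).trans (le_abs_self B2)
        have b3 : |F z.2 - F z.1 - ⟪v z.1, z.2 - z.1⟫| ≤ |F z.2| + |F z.1| + |⟪v z.1, z.2 - z.1⟫| := by
          refine (abs_sub _ _).trans ?_
          gcongr; exact abs_sub _ _
        rw [div_mul_eq_mul_div, le_div_iff₀ (by positivity)]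
        calc _ ≤ (|B1| + |B2| + |⟪v x, y - x⟫| + 1) * (‖y - x‖ / 2) ^ 2 := by gcongr; linarith
          _ ≤ _ := by gcongr
  obtain ⟨C, hC0, hC⟩ := main
  exact ⟨C, hC0, fun x hx y hy => hC (x, y) ⟨hx, hy⟩⟩


end

section
open MeasureTheory Filter Set
open scoped RealInnerProductSpace Topology
lemma global_prim (S : Set E3) (hS : IsSurface 2 S) (h : S ≃ₜ Metric.sphere (0 : E3) 1)
    (hcpt : IsCompact S)
    (v : E3 → E3) (hv : ContDiff ℝ 1 v) (Lv : ℝ) (hLv0 : 0 ≤ Lv) (hLv : ∀ x y, ‖v x - v y‖ ≤ Lv * ‖x - y‖)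
    (hsym : ∀ p ∈ S, ∀ a b, ⟪fderiv ℝ v p a, b⟫ = ⟪fderiv ℝ v p b, a⟫) :
    ∃ (C : ℝ) (F : E3 → ℝ), 0 ≤ C ∧ ∀ x ∈ S, ∀ y ∈ S, |F y - F x - ⟪v x, y - x⟫| ≤ C * ‖y - x‖ ^ 2 := by
  classical
  have hloc : ∀ p : S, ∃ (r C : ℝ) (g : E3 → ℝ), 0 < r ∧ ∀ x ∈ S ∩ Metric.ball (p : E3) r,
      ∀ y ∈ S ∩ Metric.ball (p : E3) r,
      |g y - g x - ⟪v x, y - x⟫| ≤ C * ‖y - x‖ ^ 2 :=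
    fun p => local_prim S hS h v hv Lv hLv0 hLv hsym p p.2
  choose r C g hr hg using hloc
  let O : S → Set S := fun p => Subtype.val ⁻¹' Metric.ball (p : E3) (r p)
  have hO : ∀ p, IsOpen (O p) := fun p => Metric.isOpen_ball.preimage continuous_subtype_val
  have hOm : ∀ p, p ∈ O p := fun p => Metric.mem_ball_self (hr p)
  let gg : S → S → ℝ := fun p x => g p x
  have hcomp : ∀ i j, ∀ x ∈ O i ∩ O j, ∀ᶠ y in 𝓝 x, gg i y - gg j y = gg i x - gg j x := by
    intro i j x hx
    have hx1 : (x : E3) ∈ Metric.ball (i : E3) (r i) := hx.1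
    have hx2 : (x : E3) ∈ Metric.ball (j : E3) (r j) := hx.2
    obtain ⟨ε, hε, hεb⟩ := Metric.mem_nhds_iff.1 (Filter.inter_mem
      (Metric.isOpen_ball.mem_nhds hx1) (Metric.isOpen_ball.mem_nhds hx2))
    have := locconst_of_quad S hS h x x.2 (fun y => g i y - g j y) ε (C i + C j) hε (by
      intro a ha b hb
      have h1 := hg i a ⟨ha.1, (hεb ha.2).1⟩ b ⟨hb.1, (hεb hb.2).1⟩
      have h2 := hg j a ⟨ha.1, (hεb ha.2).2⟩ b ⟨hb.1, (hεb hb.2).2⟩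
      rw [abs_le] at h1 h2 ⊢
      constructor <;> nlinarith)
    rw [nhdsWithin_eq_map_subtype_coe x.2, Filter.eventually_map] at this
    exact this
  obtain ⟨G, hG⟩ := sec_sphere h O hO gg (fun x => ⟨x, hOm x⟩) hcomp
  let F : E3 → ℝ := fun y => if hy : y ∈ S then G ⟨y, hy⟩ else 0
  have hFS : ∀ y : S, F y = G y := fun y => dif_pos y.2
  have hFl : ∀ p ∈ S, ∃ ε > 0, ∃ C, ∀ x ∈ S ∩ Metric.ball p ε, ∀ y ∈ S ∩ Metric.ball p ε,
      |F y - F x - ⟪v x, y - x⟫| ≤ C * ‖y - x‖ ^ 2 := by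
    intro p hp
    have e := hG ⟨p, hp⟩ (mem_univ _) ⟨p, hp⟩ (hOm _)
    have e' : ∀ᶠ y in 𝓝[S] p, F y - g ⟨p, hp⟩ y = F p - g ⟨p, hp⟩ p := by
      rw [nhdsWithin_eq_map_subtype_coe hp, Filter.eventually_map]
      filter_upwards [e] with y hy
      rw [hFS, show F p = G ⟨p, hp⟩ from hFS ⟨p, hp⟩]; exact hy
    obtain ⟨ε, hε, hεb⟩ := Metric.mem_nhdsWithin_iff.1 e'
    refine ⟨min ε (r ⟨p, hp⟩), lt_min hε (hr _), C ⟨p, hp⟩, fun x hx y hy => ?_⟩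
    have hx1 := hεb ⟨Metric.ball_subset_ball (min_le_left _ _) hx.2, hx.1⟩
    have hy1 := hεb ⟨Metric.ball_subset_ball (min_le_left _ _) hy.2, hy.1⟩
    have := hg ⟨p, hp⟩ x ⟨hx.1, Metric.ball_subset_ball (min_le_right _ _) hx.2⟩
      y ⟨hy.1, Metric.ball_subset_ball (min_le_right _ _) hy.2⟩
    simp only [mem_setOf_eq] at hx1 hy1
    have e3 : F y - F x = g ⟨p, hp⟩ y - g ⟨p, hp⟩ x := by linarith
    rwa [e3]
  obtain ⟨C, hC0, hC⟩ := compact_quad S hcpt v hv.continuous F hFl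
  exact ⟨C, F, hC0, hC⟩

end

section
open MeasureTheory Filter Set
open scoped RealInnerProductSpace Topology

lemma infconv_ext (S : Set E3) (hcpt : IsCompact S) (hne : S.Nonempty)
    (v : E3 → E3) (L : ℝ) (hL0 : 0 ≤ L) (hL : ∀ x y, ‖v x - v y‖ ≤ L * ‖x - y‖) (f : E3 → ℝ) (C : ℝ)
    (hC0 : 0 ≤ C) (hf : ∀ x ∈ S, ∀ y ∈ S, |f y - f x - ⟪v x, y - x⟫| ≤ C * ‖y - x‖ ^ 2) (R : ℝ) (hR : 0 < R) :
    ∃ (g : E3 → ℝ) (A : NNReal) (C' : ℝ), LipschitzWith A g ∧ 0 ≤ C' ∧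
      ∀ z ∈ Metric.ball (0 : E3) R, DifferentiableAt ℝ g z → ∀ w,
        |fderiv ℝ g z w - ⟪v z, w⟫| ≤ C' * Metric.infDist z S * ‖w‖ := by
  have hvc : Continuous v := by
    have : LipschitzWith L.toNNReal v := LipschitzWith.of_dist_le_mul (fun x y => by
      rw [dist_eq_norm, dist_eq_norm, Real.coe_toNNReal _ hL0]; exact hL x y)
    exact this.continuous
  set M : ℝ := 2 * (L + 2 * C) + 1 with hM
  have hMpos : 0 < M := by positivity
  obtain ⟨B, hB⟩ := hcpt.exists_bound_of_continuousOn hvc.continuousOn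
  obtain ⟨RS, hRS⟩ := hcpt.isBounded.exists_norm_le
  have hfc : ContinuousOn f S := by
    intro x hx
    have h1 : Tendsto (fun y => f y - f x - ⟪v x, y - x⟫) (𝓝[S] x) (𝓝 0) := by
      have h2 : Tendsto (fun y : E3 => C * ‖y - x‖ ^ 2) (𝓝[S] x) (𝓝 0) := by
        have : Continuous (fun y : E3 => C * ‖y - x‖ ^ 2) := by fun_prop
        have := this.tendsto x
        simp at this
        exact this.mono_left nhdsWithin_le_nhds
      refine squeeze_zero_norm' ?_ h2
      filter_upwards [self_mem_nhdsWithin] with y hy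
      exact hf x hx y hy
    have h2 : Tendsto (fun y : E3 => f x + ⟪v x, y - x⟫) (𝓝[S] x) (𝓝 (f x)) := by
      have : Continuous (fun y : E3 => f x + ⟪v x, y - x⟫) := by fun_prop
      have := this.tendsto x
      simp at this
      exact this.mono_left nhdsWithin_le_nhds
    have h3 := h1.add h2
    simp only [zero_add] at h3
    refine h3.congr (fun y => by ring)
  let φ : E3 → E3 → ℝ := fun z y => f y + ⟪v y, z - y⟫ + M * ‖z - y‖ ^ 2
  have hmin : ∀ z, ∃ y ∈ S, ∀ y' ∈ S, φ z y ≤ φ z y' := by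
    intro z
    have : ContinuousOn (φ z) S := by
      refine (hfc.add ?_).add ?_
      · exact (by fun_prop : Continuous fun y => ⟪v y, z - y⟫).continuousOn
      · exact (by fun_prop : Continuous fun y => M * ‖z - y‖ ^ 2).continuousOn
    obtain ⟨y, hy, h⟩ := hcpt.exists_isMinOn hne this
    exact ⟨y, hy, fun y' hy' => h hy'⟩
  choose Y hYS hYm using hmin
  let H : E3 → ℝ := fun z => φ z (Y z)
  set A : ℝ := |B| + M * (2 * (R + |RS|)) with hA
  have hA0 : 0 ≤ A := by positivity
  have hlip : LipschitzOnWith A.toNNReal H (Metric.ball 0 R) := by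
    refine LipschitzOnWith.of_le_add_mul _ ?_
    intro z hz z' hz'
    rw [Real.coe_toNNReal _ hA0]
    have h1 : H z ≤ φ z (Y z') := hYm z _ (hYS z')
    set y := Y z' with hy
    have hyS : y ∈ S := hYS z'
    have h2 : φ z y - φ z' y ≤ A * dist z z' := by
      have e1 : φ z y - φ z' y = ⟪v y, z - z'⟫ + M * (‖z - y‖ ^ 2 - ‖z' - y‖ ^ 2) := by
        have : z - z' = (z - y) - (z' - y) := by abel
        rw [this, inner_sub_right (v y) (z - y)]
        simp only [φ]; ring
      have e2 : ⟪v y, z - z'⟫ ≤ |B| * ‖z - z'‖ := by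
        refine (real_inner_le_norm _ _).trans ?_
        gcongr
        exact (hB y hyS).trans (le_abs_self _)
      have n1 : ‖z - y‖ ≤ R + |RS| := by
        refine (norm_sub_le _ _).trans ?_
        have := mem_ball_zero_iff.1 hz
        have := (hRS y hyS).trans (le_abs_self _)
        linarith
      have n2 : ‖z' - y‖ ≤ R + |RS| := by
        refine (norm_sub_le _ _).trans ?_
        have := mem_ball_zero_iff.1 hz'
        have := (hRS y hyS).trans (le_abs_self _)
        linarith
      have e3 : ‖z - y‖ ^ 2 - ‖z' - y‖ ^ 2 ≤ 2 * (R + |RS|) * ‖z - z'‖ := by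
        have : ‖z - y‖ - ‖z' - y‖ ≤ ‖z - z'‖ := by
          have := norm_sub_norm_le (z - y) (z' - y)
          rwa [sub_sub_sub_cancel_right] at this
        have e : ‖z - y‖ ^ 2 - ‖z' - y‖ ^ 2 = (‖z - y‖ + ‖z' - y‖) * (‖z - y‖ - ‖z' - y‖) := by ring
        rw [e]
        calc _ ≤ (‖z - y‖ + ‖z' - y‖) * ‖z - z'‖ := by gcongr
          _ ≤ _ := by gcongr; linarith
      rw [e1, dist_eq_norm, hA, add_mul]
      have := mul_le_mul_of_nonneg_left e3 hMpos.le
      linarith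
    have h3 : H z' = φ z' y := rfl
    linarith
  obtain ⟨g, hg, hgH⟩ := hlip.extend_real
  refine ⟨g, A.toNNReal, 2 * L + 4 * M, hg, by positivity, ?_⟩
  intro z hz hdiff w
  set y := Y z with hy
  have hyS : y ∈ S := hYS z
  -- distance estimate
  have hdist : ‖z - y‖ ≤ 2 * Metric.infDist z S := by
    obtain ⟨y0, hy0, hd⟩ := hcpt.exists_infDist_eq_dist hne z
    have h1 := hYm z y0 hy0
    have h2 := (abs_le.1 (hf y hyS y0 hy0)).2
    rw [hd, dist_eq_norm]
    set e := ‖z - y‖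
    set d := ‖z - y0‖
    have he : 0 ≤ e := norm_nonneg _
    have hd0 : 0 ≤ d := norm_nonneg _
    have h3 : ‖y0 - y‖ ≤ e + d := by
      have : y0 - y = (z - y) - (z - y0) := by abel
      rw [this]; exact norm_sub_le _ _
    have h4 : ⟪v y0 - v y, z - y0⟫ ≤ L * (e + d) * d := by
      refine (real_inner_le_norm _ _).trans ?_
      have := hL y0 y
      calc _ ≤ (L * ‖y0 - y‖) * d := by gcongr
        _ ≤ _ := by gcongr
    have h5 : ⟪v y, y0 - y⟫ = ⟪v y, z - y⟫ - ⟪v y, z - y0⟫ := by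
      rw [← inner_sub_right]; congr 1; abel
    rw [inner_sub_left] at h4
    have h6 : C * ‖y0 - y‖ ^ 2 ≤ C * (e + d) ^ 2 := by gcongr
    have h7 : f y + ⟪v y, z - y⟫ + M * e ^ 2 ≤ f y0 + ⟪v y0, z - y0⟫ + M * d ^ 2 := h1
    have h8 : M * e ^ 2 ≤ L * (e + d) * d + C * (e + d) ^ 2 + M * d ^ 2 := by linarith
    have h9 : M * e ^ 2 ≤ M / 2 * e ^ 2 + 2 * M * d ^ 2 := by
      have k1 : L * (e + d) * d ≤ L * (e ^ 2 + 2 * d ^ 2) := by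
        rw [mul_assoc]; gcongr; nlinarith [sq_nonneg (e - d)]
      have k2 : C * (e + d) ^ 2 ≤ C * (2 * e ^ 2 + 2 * d ^ 2) := by
        gcongr; nlinarith [sq_nonneg (e - d)]
      nlinarith [sq_nonneg e, sq_nonneg d]
    have h10 : e ^ 2 ≤ (2 * d) ^ 2 := by
      have : M * e ^ 2 ≤ M * (2 * d) ^ 2 := by nlinarith
      exact le_of_mul_le_mul_left this hMpos
    exact le_of_sq_le_sq h10 (by positivity)
  -- derivative
  have hder : fderiv ℝ g z = innerSL ℝ (v y) + (2 * M) • innerSL ℝ (z - y) := by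
    have hφ : HasFDerivAt (fun z => φ z y) (innerSL ℝ (v y) + (2 * M) • innerSL ℝ (z - y)) z := by
      have h1 : HasFDerivAt (fun z : E3 => f y + ⟪v y, z - y⟫) (innerSL ℝ (v y)) z := by
        have : HasFDerivAt (fun z : E3 => innerSL ℝ (v y) (z - y)) ((innerSL ℝ (v y)).comp (ContinuousLinearMap.id ℝ E3)) z :=
          (innerSL ℝ (v y)).hasFDerivAt.comp z ((hasFDerivAt_id z).sub_const y)
        exact this.const_add (f y)
      have h2 : HasFDerivAt (fun z : E3 => M * ‖z - y‖ ^ 2) ((2 * M) • innerSL ℝ (z - y)) z := by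
        have h3 := (((hasFDerivAt_id z).sub_const y).norm_sq).const_mul M
        refine h3.congr_fderiv ?_
        ext w
        simp
        ring
      exact h1.add h2
    have hloc : IsLocalMin (fun x => φ x y - g x) z := by
      filter_upwards [Metric.isOpen_ball.mem_nhds hz] with x hx
      rw [← hgH hx, ← hgH hz]
      have h1 : H x ≤ φ x y := hYm x y hyS
      have h2 : H z = φ z y := rfl
      linarith
    have := hloc.hasFDerivAt_eq_zero (hφ.sub hdiff.hasFDerivAt)
    exact (sub_eq_zero.1 this).symm
  rw [hder]
  have e1 : (innerSL ℝ (v y) + (2 * M) • innerSL ℝ (z - y)) w - ⟪v z, w⟫ =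
      ⟪v y - v z, w⟫ + 2 * M * ⟪z - y, w⟫ := by
    rw [inner_sub_left (v y), inner_sub_left z]
    simp
    ring
  rw [e1]
  have i1 := abs_real_inner_le_norm (v y - v z) w
  have i2 := abs_real_inner_le_norm (z - y) w
  have i3 := hL y z
  rw [norm_sub_rev y z] at i3
  calc _ ≤ |⟪v y - v z, w⟫| + |2 * M * ⟪z - y, w⟫| := abs_add_le _ _
    _ ≤ (L * ‖z - y‖) * ‖w‖ + 2 * M * (‖z - y‖ * ‖w‖) := by
        rw [abs_mul, abs_of_pos (by positivity : 0 < 2 * M)]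
        gcongr
        exact i1.trans (by gcongr)
    _ = (L + 2 * M) * ‖z - y‖ * ‖w‖ := by ring
    _ ≤ (L + 2 * M) * (2 * Metric.infDist z S) * ‖w‖ := by gcongr
    _ = _ := by ring

end

section
open MeasureTheory Filter Set
open scoped RealInnerProductSpace Topology

lemma tangent_bound (S : Set E3) (χ : E3 → ℝ) (χ' : E3 →L[ℝ] ℝ) (x y u : E3) (n : ℝ)
    (hχ : HasFDerivAt χ χ' x) (hle : ∀ z, ∀ s ∈ S, χ z ≤ n * ‖z - s‖) (hn : 0 ≤ n)
    (heq : χ x = n * ‖x - y‖) (ht : IsTangentAt S y u) (w : E3) : |χ' w| ≤ n * ‖w - u‖ := by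
  obtain ⟨γ, hγS, hγ0, hγ⟩ := ht
  have hk : HasDerivAt (fun t : ℝ => χ (x + t • w)) (χ' w) 0 := by
    have h1 : HasDerivAt (fun t : ℝ => x + t • w) w 0 := by
      simpa using ((hasDerivAt_id (0:ℝ)).smul_const w).const_add x
    have h2 : HasFDerivAt χ χ' (x + (0:ℝ) • w) := by simpa using hχ
    exact h2.comp_hasDerivAt 0 h1
  have hm : HasDerivAt (fun t : ℝ => t • w - γ t) (w - u) 0 := by
    have h1 : HasDerivAt (fun t : ℝ => t • w) w 0 := by
      simpa using ((hasDerivAt_id (0:ℝ)).smul_const w)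
    exact h1.sub hγ
  have t1 := (hasDerivAt_iff_tendsto_slope_zero.1 hk)
  have t2 := ((hasDerivAt_iff_tendsto_slope_zero.1 hm).norm).const_mul n
  simp only [zero_add, zero_smul, add_zero, hγ0, zero_sub] at t1 t2
  have hineq : ∀ t : ℝ, χ (x + t • w) - χ x ≤ n * ‖t • w - γ t - -y‖ := by
    intro t
    have h1 := hle (x + t • w) (γ t) (hγS t)
    have h2 : x + t • w - γ t = (x - y) + (t • w - γ t - -y) := by abel
    have h3 := norm_add_le (x - y) (t • w - γ t - -y)
    rw [h2] at h1
    have := mul_le_mul_of_nonneg_left h3 hn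
    rw [heq]; linarith
  rw [abs_le]
  constructor
  · have s1 := t1.mono_left (nhdsWithin_mono (0:ℝ) (s := Iio 0) (fun t (ht : t < 0) => ht.ne))
    have s2 := t2.mono_left (nhdsWithin_mono (0:ℝ) (s := Iio 0) (fun t (ht : t < 0) => ht.ne))
    rw [neg_le]
    refine le_of_tendsto_of_tendsto s1.neg s2 ?_
    filter_upwards [self_mem_nhdsWithin] with t ht
    have ht : t < 0 := ht
    have := hineq t
    rw [norm_smul, norm_inv, Real.norm_eq_abs, abs_of_neg ht, smul_eq_mul, ← neg_mul, ← inv_neg,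
      mul_left_comm]
    exact mul_le_mul_of_nonneg_left this (inv_nonneg.2 (by linarith))
  · have s1 := t1.mono_left (nhdsWithin_mono (0:ℝ) (s := Ioi 0) (fun t (ht : 0 < t) => ht.ne'))
    have s2 := t2.mono_left (nhdsWithin_mono (0:ℝ) (s := Ioi 0) (fun t (ht : 0 < t) => ht.ne'))
    refine le_of_tendsto_of_tendsto s1 s2 ?_
    filter_upwards [self_mem_nhdsWithin] with t ht
    have ht : 0 < t := ht
    have := hineq t
    rw [norm_smul, norm_inv, Real.norm_eq_abs, abs_of_pos ht, smul_eq_mul, mul_left_comm]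
    exact mul_le_mul_of_nonneg_left this (inv_nonneg.2 ht.le)

/-- Lipschitz cutoff functions. -/
noncomputable def chi (Ω : Set E3) (n : ℕ) (x : E3) : ℝ := min (n * Metric.infDist x Ωᶜ) 1

lemma chi_lip (Ω : Set E3) (n : ℕ) : LipschitzWith n (chi Ω n) := by
  have h1 : LipschitzWith n (fun x => (n:ℝ) * Metric.infDist x Ωᶜ) := by
    have := (Metric.lipschitz_infDist_pt Ωᶜ)
    refine LipschitzWith.of_dist_le_mul (fun x y => ?_)
    have h := this.dist_le_mul x y
    rw [Real.dist_eq, ← mul_sub, abs_mul, Nat.abs_cast]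
    rw [Real.dist_eq] at h
    simp only [NNReal.coe_one, one_mul, NNReal.coe_natCast] at h ⊢
    gcongr
  exact h1.min_const 1

lemma chi_nonneg (Ω : Set E3) (n : ℕ) (x : E3) : 0 ≤ chi Ω n x :=
  le_min (mul_nonneg (Nat.cast_nonneg _) Metric.infDist_nonneg) zero_le_one

lemma chi_le_one (Ω : Set E3) (n : ℕ) (x : E3) : chi Ω n x ≤ 1 := min_le_right _ _

lemma chi_off (Ω : Set E3) (n : ℕ) (x : E3) (hx : x ∉ Ω) : chi Ω n x = 0 := by
  have : Metric.infDist x Ωᶜ = 0 := Metric.infDist_zero_of_mem hx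
  simp [chi, this]

lemma chi_cs (Ω : Set E3) (hb : Bornology.IsBounded Ω) (n : ℕ) : HasCompactSupport (chi Ω n) := by
  refine HasCompactSupport.intro hb.isCompact_closure (fun x hx => chi_off Ω n x ?_)
  exact fun h => hx (subset_closure h)

lemma compl_nonempty_of_bdd (Ω : Set E3) (hb : Bornology.IsBounded Ω) : (Ωᶜ).Nonempty := by
  rw [nonempty_compl]
  rintro rfl
  exact NormedSpace.unbounded_univ ℝ E3 hb

lemma infDist_pos_of_mem (Ω : Set E3) (ho : IsOpen Ω) (hb : Bornology.IsBounded Ω) (x : E3) (hx : x ∈ Ω) :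
    0 < Metric.infDist x Ωᶜ := by
  rw [← ho.isClosed_compl.notMem_iff_infDist_pos (compl_nonempty_of_bdd Ω hb)]
  exact fun h => h hx

lemma chi_ev_one (Ω : Set E3) (ho : IsOpen Ω) (hb : Bornology.IsBounded Ω) (x : E3) (hx : x ∈ Ω) :
    ∀ᶠ n : ℕ in atTop, ∀ᶠ y in 𝓝 x, chi Ω n y = 1 := by
  have hd := infDist_pos_of_mem Ω ho hb x hx
  obtain ⟨N, hN⟩ := exists_nat_gt (1 / Metric.infDist x Ωᶜ)
  filter_upwards [eventually_ge_atTop N] with n hn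
  have h1 : 1 < n * Metric.infDist x Ωᶜ := by
    have : (N:ℝ) ≤ n := by exact_mod_cast hn
    rw [div_lt_iff₀ hd] at hN
    nlinarith
  have hc : Continuous (fun y => (n:ℝ) * Metric.infDist y Ωᶜ) :=
    continuous_const.mul (Metric.continuous_infDist_pt _)
  filter_upwards [hc.continuousAt.eventually (lt_mem_nhds h1)] with y hy
  exact min_eq_right (le_of_lt hy)

lemma chi_tendsto (Ω : Set E3) (ho : IsOpen Ω) (hb : Bornology.IsBounded Ω) (x : E3) (hx : x ∈ Ω) :
    Tendsto (fun n => chi Ω n x) atTop (𝓝 1) := by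
  refine tendsto_const_nhds.congr' ?_
  filter_upwards [chi_ev_one Ω ho hb x hx] with n hn
  exact hn.self_of_nhds.symm

lemma chi_fderiv_off (Ω : Set E3) (n : ℕ) (x : E3) (hx : x ∉ Ω) : fderiv ℝ (chi Ω n) x = 0 := by
  apply IsLocalMin.fderiv_eq_zero
  refine Filter.Eventually.of_forall (fun y => ?_)
  rw [chi_off Ω n x hx]; exact chi_nonneg Ω n y

lemma chi_fderiv_tendsto (Ω : Set E3) (ho : IsOpen Ω) (hb : Bornology.IsBounded Ω) (x : E3) :
    ∀ᶠ n : ℕ in atTop, fderiv ℝ (chi Ω n) x = 0 := by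
  by_cases hx : x ∈ Ω
  · filter_upwards [chi_ev_one Ω ho hb x hx] with n hn
    have : chi Ω n =ᶠ[𝓝 x] fun _ => (1:ℝ) := hn
    rw [this.fderiv_eq]; simp
  · exact Filter.Eventually.of_forall (fun n => chi_fderiv_off Ω n x hx)

lemma chi_fderiv_big (Ω : Set E3) (n : ℕ) (x : E3) (hx : 1 < n * Metric.infDist x Ωᶜ) :
    fderiv ℝ (chi Ω n) x = 0 := by
  have hc : Continuous (fun y => (n:ℝ) * Metric.infDist y Ωᶜ) :=
    continuous_const.mul (Metric.continuous_infDist_pt _)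
  have : chi Ω n =ᶠ[𝓝 x] fun _ => (1:ℝ) := by
    filter_upwards [hc.continuousAt.eventually (lt_mem_nhds hx)] with y hy
    exact min_eq_right (le_of_lt hy)
  rw [this.fderiv_eq]; simp

lemma chi_fderiv_norm (Ω : Set E3) (n : ℕ) (x : E3) : ‖fderiv ℝ (chi Ω n) x‖ ≤ n := by
  simpa using norm_fderiv_le_of_lipschitz ℝ (chi_lip Ω n) (x₀ := x)

lemma nearest_pt (Ω : Set E3) (ho : IsOpen Ω) (hb : Bornology.IsBounded Ω) (x : E3) (hx : x ∈ Ω) :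
    ∃ y ∈ frontier Ω, Metric.infDist x Ωᶜ = dist x y := by
  obtain ⟨y, hy, hd⟩ := ho.isClosed_compl.exists_infDist_eq_dist (compl_nonempty_of_bdd Ω hb) x
  refine ⟨y, ?_, hd⟩
  rw [ho.frontier_eq]
  refine ⟨?_, hy⟩
  have hpos : 0 < dist x y := hd ▸ infDist_pos_of_mem Ω ho hb x hx
  have hball : Metric.ball x (dist x y) ⊆ Ω := by
    intro z hz
    by_contra hzn
    have := Metric.infDist_le_dist_of_mem (x := x) (show z ∈ Ωᶜ from hzn)
    rw [Metric.mem_ball, dist_comm] at hz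
    linarith
  refine closure_mono hball ?_
  rw [closure_ball x hpos.ne', Metric.mem_closedBall, dist_comm]

lemma chi_fderiv_tangent (Ω : Set E3) (ho : IsOpen Ω) (hb : Bornology.IsBounded Ω) (v : E3 → E3)
    (L : ℝ) (hL0 : 0 ≤ L) (hL : ∀ x y, ‖v x - v y‖ ≤ L * ‖x - y‖)
    (ht : ∀ p ∈ frontier Ω, IsTangentAt (frontier Ω) p (v p)) (n : ℕ) (x : E3) :
    |fderiv ℝ (chi Ω n) x (v x)| ≤ L := by
  by_cases hx : x ∈ Ω
  swap
  · rw [chi_fderiv_off Ω n x hx]; simpa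
  by_cases hd : DifferentiableAt ℝ (chi Ω n) x
  swap
  · rw [fderiv_zero_of_not_differentiableAt hd]; simpa
  by_cases h1 : 1 < n * Metric.infDist x Ωᶜ
  · rw [chi_fderiv_big Ω n x h1]; simpa
  push Not at h1
  obtain ⟨y, hy, hxy⟩ := nearest_pt Ω ho hb x hx
  have := tangent_bound (frontier Ω) (chi Ω n) _ x y (v y) n hd.hasFDerivAt (by
    intro z s hs
    have hs' : s ∈ Ωᶜ := by rw [ho.frontier_eq] at hs; exact hs.2
    refine (min_le_left _ _).trans ?_
    gcongr
    rw [← dist_eq_norm]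
    exact Metric.infDist_le_dist_of_mem hs') (Nat.cast_nonneg n) (by
    rw [← dist_eq_norm, ← hxy]; exact min_eq_left h1) (ht y hy) (v x)
  refine this.trans ?_
  rw [hxy, dist_eq_norm] at h1
  calc _ ≤ n * (L * ‖x - y‖) := by gcongr; exact hL x y
    _ = L * (n * ‖x - y‖) := by ring
    _ ≤ L * 1 := by gcongr
    _ = L := mul_one L

end

section
open MeasureTheory Filter Set
open scoped RealInnerProductSpace Topology

lemma e3_expand (w : E3) : w = ∑ i, w i • e3 i := by
  ext j
  fin_cases j <;> simp [e3, Fin.sum_univ_three]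

lemma clm_expand {F : Type*} [NormedAddCommGroup F] [NormedSpace ℝ F] (l : E3 →L[ℝ] F) (w : E3) :
    l w = ∑ i, w i • l (e3 i) := by
  conv_lhs => rw [e3_expand w]
  simp [map_sum]

lemma integ_bdd {F : Type*} [NormedAddCommGroup F] (f : E3 → F) (hf : AEStronglyMeasurable f volume)
    (A : ℝ) (hA : ∀ᵐ x, ‖f x‖ ≤ A)
    (T : Set E3) (hT : Bornology.IsBounded T) (h0 : ∀ x ∉ T, f x = 0) : Integrable f volume := by
  have hc := hT.isCompact_closure
  have h1 : IntegrableOn f (closure T) volume :=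
    Measure.integrableOn_of_bounded hc.measure_lt_top.ne hf (ae_restrict_of_ae hA)
  rw [integrableOn_iff_integrable_of_support_subset] at h1
  · exact h1
  · intro x hx
    by_contra h
    exact hx (h0 x (fun h' => h (subset_closure h')))

lemma dct_bdd (f : ℕ → E3 → ℝ) (g : E3 → ℝ) (hf : ∀ n, AEStronglyMeasurable (f n) volume)
    (A : ℝ) (T : Set E3) (hT : Bornology.IsBounded T) (hA : ∀ n, ∀ᵐ x, x ∈ T → |f n x| ≤ A)
    (h0 : ∀ n, ∀ᵐ x, x ∉ T → f n x = 0)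
    (hlim : ∀ᵐ x, Tendsto (fun n => f n x) atTop (𝓝 (g x))) :
    Tendsto (fun n => ∫ x, f n x) atTop (𝓝 (∫ x, g x)) := by
  have hc := hT.isCompact_closure
  refine tendsto_integral_of_dominated_convergence ((closure T).indicator (fun _ => |A|)) hf ?_ ?_ hlim
  · rw [integrable_indicator_iff hc.measurableSet]
    exact integrableOn_const hc.measure_lt_top.ne
  · intro n
    filter_upwards [hA n, h0 n] with x h1 h2
    by_cases hx : x ∈ T
    · rw [indicator_of_mem (subset_closure hx)]
      exact (h1 hx).trans (le_abs_self A)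
    · rw [h2 hx, norm_zero]
      exact indicator_nonneg (fun _ _ => abs_nonneg _) _

lemma lip_mul (f g : E3 → ℝ) (Kf Kg : NNReal) (hf : LipschitzWith Kf f) (hg : LipschitzWith Kg g)
    (A : NNReal) (hA : ∀ x, |f x| ≤ A) (T : Set E3) (h0 : ∀ x ∉ T, f x = 0) (B : NNReal)
    (hB : ∀ x ∈ T, |g x| ≤ B) : LipschitzWith (Kf * B + A * Kg) (fun x => f x * g x) := by
  have key : ∀ x y, y ∈ T → |f x * g x - f y * g y| ≤ (Kf * B + A * Kg) * dist x y := by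
    intro x y hy
    have h1 := hf.dist_le_mul x y
    have h2 := hg.dist_le_mul x y
    rw [Real.dist_eq] at h1 h2
    have e : f x * g x - f y * g y = (f x - f y) * g y + f x * (g x - g y) := by ring
    rw [e]
    refine (abs_add_le _ _).trans ?_
    rw [abs_mul, abs_mul]
    calc _ ≤ (Kf * dist x y) * B + A * (Kg * dist x y) := by
          gcongr
          · exact hB y hy
          · exact hA x
      _ = _ := by ring
  refine LipschitzWith.of_dist_le_mul (fun x y => ?_)
  push_cast
  rw [Real.dist_eq]
  by_cases hy : y ∈ T
  · exact key x y hy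
  · by_cases hx : x ∈ T
    · rw [abs_sub_comm, dist_comm]; exact key y x hx
    · rw [h0 x hx, h0 y hy]; simp; positivity

lemma meas_fderiv_apply (ψ : E3 → ℝ) (v : E3 → E3) (hv : Continuous v) :
    Measurable (fun x => fderiv ℝ ψ x (v x)) := by
  have : (fun x => fderiv ℝ ψ x (v x)) = fun x => ∑ i, v x i • fderiv ℝ ψ x (e3 i) := by
    ext x; exact clm_expand _ _
  rw [this]
  refine Finset.measurable_sum _ (fun i _ => ?_)
  have h1 : Measurable fun x => v x i := by
    have : Continuous fun x => v x i := by fun_prop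
    exact this.measurable
  exact h1.smul (measurable_fderiv_apply_const ℝ ψ (e3 i))

lemma fderiv_off_tsupport (g : E3 → ℝ) (x : E3) (hx : x ∉ tsupport g) : fderiv ℝ g x = 0 := by
  by_contra h
  exact hx (support_fderiv_subset ℝ (Function.mem_support.2 h))

lemma lip_ibp (f g : E3 → ℝ) (Kf Kg : NNReal) (hf : LipschitzWith Kf f) (hg : LipschitzWith Kg g)
    (hgc : HasCompactSupport g) (w : E3) :
    ∫ x, fderiv ℝ f x w * g x = - ∫ x, fderiv ℝ g x w * f x := by
  have h := LipschitzWith.integral_lineDeriv_mul_eq (μ := (volume : Measure E3)) hf hg hgc w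
  have h1 : ∫ x, fderiv ℝ f x w * g x = ∫ x, lineDeriv ℝ f x w * g x := by
    apply integral_congr_ae
    filter_upwards [hf.ae_differentiableAt (μ := (volume : Measure E3))] with x hx
    rw [hx.lineDeriv_eq_fderiv]
  have h2 : - ∫ x, fderiv ℝ g x w * f x = ∫ x, lineDeriv ℝ g x (-w) * f x := by
    rw [← integral_neg]
    apply integral_congr_ae
    filter_upwards [hg.ae_differentiableAt (μ := (volume : Measure E3))] with x hx
    rw [hx.lineDeriv_eq_fderiv]; simp
  rw [h1, h2, h]

lemma lip_fderiv_abs (g : E3 → ℝ) (K : NNReal) (hg : LipschitzWith K g) (x w : E3) :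
    |fderiv ℝ g x w| ≤ K * ‖w‖ := by
  have h1 := norm_fderiv_le_of_lipschitz ℝ hg (x₀ := x)
  calc _ ≤ ‖fderiv ℝ g x‖ * ‖w‖ := (fderiv ℝ g x).le_opNorm w
    _ ≤ _ := by gcongr

lemma integ_fderiv (g : E3 → ℝ) (K : NNReal) (hg : LipschitzWith K g) (hgc : HasCompactSupport g)
    (w : E3) : Integrable (fun x => fderiv ℝ g x w) volume := by
  refine integ_bdd _ (measurable_fderiv_apply_const ℝ g w).aestronglyMeasurable (K * ‖w‖)
    (ae_of_all _ (fun x => lip_fderiv_abs g K hg x w)) (tsupport g) hgc.isCompact.isBounded ?_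
  intro x hx
  rw [fderiv_off_tsupport g x hx]; rfl

/-- Weak commutation of derivatives for Lipschitz functions. -/
lemma lip_comm (f g : E3 → ℝ) (Kf Kg : NNReal) (hf : LipschitzWith Kf f) (hg : LipschitzWith Kg g)
    (hgc : HasCompactSupport g) (a c : E3) :
    ∫ x, fderiv ℝ f x a * fderiv ℝ g x c = ∫ x, fderiv ℝ g x a * fderiv ℝ f x c := by
  have hfd := hf.ae_differentiableAt (μ := (volume : Measure E3))
  have hgd := hg.ae_differentiableAt (μ := (volume : Measure E3))
  set T := Metric.cthickening ‖a‖ (tsupport g) with hT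
  have hTb : Bornology.IsBounded T := hgc.isCompact.isBounded.cthickening
  have hTm : MeasurableSet T := Metric.isClosed_cthickening.measurableSet
  have hsT : tsupport g ⊆ T := Metric.self_subset_cthickening _
  let k : E3 → ℝ := T.indicator (fun x => fderiv ℝ f x c)
  have hmf : Measurable fun x => fderiv ℝ f x c := measurable_fderiv_apply_const ℝ f c
  have hk : Integrable k volume := by
    refine integ_bdd _ (hmf.indicator hTm).aestronglyMeasurable (Kf * ‖c‖) (ae_of_all _ fun x => ?_) T hTb
      (fun x hx => indicator_of_notMem hx _)
    refine (norm_indicator_le_norm_self _ _).trans ?_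
    exact lip_fderiv_abs f Kf hf x c
  have t1 := LipschitzWith.integral_inv_smul_sub_mul_tendsto_integral_lineDeriv_mul (μ := (volume : Measure E3)) hf
    (integ_fderiv g Kg hg hgc c) a
  have t2 := (LipschitzWith.integral_inv_smul_sub_mul_tendsto_integral_lineDeriv_mul (μ := (volume : Measure E3)) hg
    hk (-a)).neg
  have l1 : ∫ x, lineDeriv ℝ f x a * fderiv ℝ g x c = ∫ x, fderiv ℝ f x a * fderiv ℝ g x c := by
    apply integral_congr_ae
    filter_upwards [hfd] with x hx
    rw [hx.lineDeriv_eq_fderiv]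
  have l2 : - ∫ x, lineDeriv ℝ g x (-a) * k x = ∫ x, fderiv ℝ g x a * fderiv ℝ f x c := by
    rw [← integral_neg]
    apply integral_congr_ae
    filter_upwards [hgd] with x hx
    rw [hx.lineDeriv_eq_fderiv]
    by_cases hxT : x ∈ T
    · simp [k, hxT]
    · rw [fderiv_off_tsupport g x (fun h => hxT (hsT h))]; simp
  rw [l1] at t1
  rw [l2] at t2
  refine tendsto_nhds_unique t1 (t2.congr' ?_)
  have hpos : Ioo (0:ℝ) 1 ∈ 𝓝[>] (0:ℝ) := Ioo_mem_nhdsGT one_pos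
  filter_upwards [hpos] with t ht
  -- difference quotient
  let Q : E3 → ℝ := fun x => t⁻¹ • (f (x + t • a) - f x)
  have hQ : ∃ K, LipschitzWith K Q := by
    refine ⟨‖t⁻¹‖₊ * (Kf + Kf), ?_⟩
    have h1 : LipschitzWith Kf (fun x => f (x + t • a)) := by
      refine LipschitzWith.of_dist_le_mul (fun x y => ?_)
      have := hf.dist_le_mul (x + t • a) (y + t • a)
      rwa [dist_add_right] at this
    exact (lipschitzWith_smul (t⁻¹)).comp (h1.sub hf)
  obtain ⟨KQ, hQ⟩ := hQ
  have e1 := lip_ibp Q g KQ Kg hQ hg hgc c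
  have hfd' : ∀ᵐ x, DifferentiableAt ℝ f (x + t • a) :=
    (measurePreserving_add_right (volume : Measure E3) (t • a)).quasiMeasurePreserving.ae hfd
  have e2 : ∫ x, fderiv ℝ Q x c * g x =
      ∫ x, (t⁻¹ * (fderiv ℝ f (x + t • a) c * g x) - t⁻¹ * (fderiv ℝ f x c * g x)) := by
    apply integral_congr_ae
    filter_upwards [hfd, hfd'] with x h1 h2
    have h3 : HasFDerivAt (fun x => f (x + t • a)) (fderiv ℝ f (x + t • a)) x := by
      have := h2.hasFDerivAt.comp x ((hasFDerivAt_id x).add_const (t • a))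
      rw [ContinuousLinearMap.comp_id] at this
      exact this
    have h4 : HasFDerivAt Q (t⁻¹ • (fderiv ℝ f (x + t • a) - fderiv ℝ f x)) x :=
      (h3.sub h1.hasFDerivAt).const_smul t⁻¹
    rw [h4.fderiv]
    simp; ring
  have hgb : ∃ B, ∀ x, |g x| ≤ B := by
    obtain ⟨B, hB⟩ := hgc.exists_bound_of_continuous hg.continuous
    exact ⟨B, hB⟩
  obtain ⟨B, hB⟩ := hgb
  have hB0 : 0 ≤ B := (abs_nonneg _).trans (hB 0)
  have i1 : Integrable (fun x => fderiv ℝ f x c * g x) volume := by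
    refine integ_bdd _ (hmf.mul hg.continuous.measurable).aestronglyMeasurable (Kf * ‖c‖ * B)
      (ae_of_all _ fun x => ?_) (tsupport g) hgc.isCompact.isBounded
      (fun x hx => by rw [image_eq_zero_of_notMem_tsupport hx, mul_zero])
    rw [norm_mul]
    exact mul_le_mul (lip_fderiv_abs f Kf hf x c) (hB x) (norm_nonneg _) (by positivity)
  have i2 : Integrable (fun x => fderiv ℝ f (x + t • a) c * g x) volume := by
    refine integ_bdd _ ((hmf.comp (measurable_add_const (t • a))).mul hg.continuous.measurable).aestronglyMeasurable (Kf * ‖c‖ * B)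
      (ae_of_all _ fun x => ?_) (tsupport g) hgc.isCompact.isBounded
      (fun x hx => by rw [image_eq_zero_of_notMem_tsupport hx, mul_zero])
    rw [norm_mul]
    exact mul_le_mul (lip_fderiv_abs f Kf hf _ c) (hB x) (norm_nonneg _) (by positivity)
  have hsh : ∫ x, fderiv ℝ f (x + t • a) c * g x = ∫ x, fderiv ℝ f x c * g (x + t • (-a)) := by
    have := integral_add_right_eq_self (μ := (volume : Measure E3)) (fun x => fderiv ℝ f x c * g (x + t • (-a))) (t • a)
    rw [← this]
    congr 1; ext x; congr 2; simp
  have i3 : Integrable (fun x => fderiv ℝ f x c * g (x + t • (-a))) volume := by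
    have := i2.comp_add_right (t • (-a))
    refine this.congr (ae_of_all _ fun x => ?_)
    simp
  rw [e2, integral_sub (i2.const_mul _) (i1.const_mul _), integral_const_mul, integral_const_mul, hsh] at e1
  have e3 : ∫ x, (t⁻¹ • (g (x + t • (-a)) - g x)) * k x =
      (t⁻¹ * ∫ x, fderiv ℝ f x c * g (x + t • (-a))) - (t⁻¹ * ∫ x, fderiv ℝ f x c * g x) := by
    rw [← integral_const_mul, ← integral_const_mul, ← integral_sub (i3.const_mul _) (i1.const_mul _)]
    congr 1; ext x
    by_cases hxT : x ∈ T
    · simp only [k, indicator_of_mem hxT, smul_eq_mul]; ring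
    · have h1 : g x = 0 := image_eq_zero_of_notMem_tsupport (fun h => hxT (hsT h))
      have h2 : g (x + t • (-a)) = 0 := by
        apply image_eq_zero_of_notMem_tsupport
        intro h
        apply hxT
        refine Metric.mem_cthickening_of_dist_le x _ _ _ h ?_
        rw [dist_eq_norm]
        simp only [smul_neg, sub_add_cancel_left, neg_neg]
        have : ‖x - (x + -(t • a))‖ = t * ‖a‖ := by
          rw [sub_add_cancel_left, neg_neg, norm_smul, Real.norm_eq_abs, abs_of_pos ht.1]
        simp only [sub_add_cancel_left, neg_neg] at this
        rw [this]
        nlinarith [ht.2, norm_nonneg a]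
      rw [h1, h2]; simp
  have e4 : ∫ x, (t⁻¹ • (f (x + t • a) - f x)) * fderiv ℝ g x c = ∫ x, fderiv ℝ g x c * Q x := by
    congr 1; ext x; rw [mul_comm]
  rw [e3, e4]
  linarith

end

section
open MeasureTheory Filter Set
open scoped RealInnerProductSpace Topology

lemma lip_bdd (Ω : Set E3) (hb : Bornology.IsBounded Ω) (ψ : E3 → ℝ) (hψ : Continuous ψ) :
    ∃ B : NNReal, ∀ x ∈ Ω, |ψ x| ≤ B := by
  obtain ⟨B, hB⟩ := hb.isCompact_closure.exists_bound_of_continuousOn hψ.continuousOn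
  refine ⟨⟨max B 0, le_max_right _ _⟩, fun x hx => ?_⟩
  exact (hB x (subset_closure hx)).trans (le_max_left _ _)

lemma chi_mul_lip (Ω : Set E3) (hb : Bornology.IsBounded Ω) (ψ : E3 → ℝ) (K : NNReal)
    (hψ : LipschitzWith K ψ) (n : ℕ) : ∃ K', LipschitzWith K' (fun x => chi Ω n x * ψ x) := by
  obtain ⟨B, hB⟩ := lip_bdd Ω hb ψ hψ.continuous
  refine ⟨_, lip_mul (chi Ω n) ψ n K (chi_lip Ω n) hψ 1 ?_ Ω (fun x hx => chi_off Ω n x hx) B hB⟩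
  intro x
  rw [abs_of_nonneg (chi_nonneg Ω n x)]
  exact chi_le_one Ω n x

lemma chi_mul_fderiv (Ω : Set E3) (ψ : E3 → ℝ) (K : NNReal)
    (hψ : LipschitzWith K ψ) (n : ℕ) : ∀ᵐ x, ∀ w, fderiv ℝ (fun x => chi Ω n x * ψ x) x w =
      chi Ω n x * fderiv ℝ ψ x w + ψ x * fderiv ℝ (chi Ω n) x w := by
  filter_upwards [hψ.ae_differentiableAt (μ := (volume : Measure E3)),
    (chi_lip Ω n).ae_differentiableAt (μ := (volume : Measure E3))] with x h1 h2
  intro w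
  have := (h2.hasFDerivAt.mul h1.hasFDerivAt).fderiv
  have e : (fun x => chi Ω n x * ψ x) = chi Ω n * ψ := rfl
  rw [e, this]
  simp

lemma coord_lip (v : E3 → E3) (L : NNReal) (hL : ∀ x y, ‖v x - v y‖ ≤ L * ‖x - y‖) (i : Fin 3) :
    LipschitzWith L (fun x => v x i) := by
  refine LipschitzWith.of_dist_le_mul (fun x y => ?_)
  rw [dist_eq_norm, dist_eq_norm]
  have := PiLp.norm_apply_le (v x - v y) i
  exact le_trans this (hL x y)

lemma inner_lip (v : E3 → E3) (L : NNReal) (hL : ∀ x y, ‖v x - v y‖ ≤ L * ‖x - y‖) (c : E3) :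
    LipschitzWith (L * ‖c‖₊) (fun x => ⟪v x, c⟫) := by
  refine LipschitzWith.of_dist_le_mul (fun x y => ?_)
  rw [dist_eq_norm, dist_eq_norm, ← inner_sub_left]
  refine (norm_inner_le_norm _ _).trans ?_
  push_cast
  calc _ ≤ (L * ‖x - y‖) * ‖c‖ := by gcongr; exact hL x y
    _ = _ := by ring

lemma fderiv_coord (v : E3 → E3) (x : E3) (hv : DifferentiableAt ℝ v x) (i : Fin 3) (w : E3) :
    fderiv ℝ (fun x => v x i) x w = fderiv ℝ v x w i := by
  have := ((EuclideanSpace.proj i : E3 →L[ℝ] ℝ).hasFDerivAt.comp x hv.hasFDerivAt).fderiv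
  have e : (fun x => v x i) = (EuclideanSpace.proj i : E3 →L[ℝ] ℝ) ∘ v := rfl
  rw [e, this]; rfl

lemma fderiv_innerc (v : E3 → E3) (x : E3) (hv : DifferentiableAt ℝ v x) (c : E3) (w : E3) :
    fderiv ℝ (fun x => ⟪v x, c⟫) x w = ⟪fderiv ℝ v x w, c⟫ := by
  rw [fderiv_inner_apply ℝ hv (differentiableAt_const c)]
  simp

lemma weak_div (Ω : Set E3) (ho : IsOpen Ω) (hb : Bornology.IsBounded Ω) (v : E3 → E3)
    (hv : ContDiff ℝ 1 v) (L : NNReal) (hL : ∀ x y, ‖v x - v y‖ ≤ L * ‖x - y‖)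
    (ht : ∀ p ∈ frontier Ω, IsTangentAt (frontier Ω) p (v p)) (hdiv : ∀ p ∈ Ω, div3 v p = 0)
    (ψ : E3 → ℝ) (K : NNReal) (hψ : LipschitzWith K ψ) :
    ∫ x in Ω, fderiv ℝ ψ x (v x) = 0 := by
  have hvd : ∀ x, DifferentiableAt ℝ v x := fun x => hv.differentiable one_ne_zero x
  let g : ℕ → E3 → ℝ := fun n x => chi Ω n x * ψ x
  have hgc : ∀ n, HasCompactSupport (g n) := fun n => (chi_cs Ω hb n).mul_right
  have hgoff : ∀ n, ∀ x ∉ Ω, g n x = 0 := fun n x hx => by simp [g, chi_off Ω n x hx]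
  have hz : ∀ n, ∫ x, fderiv ℝ (g n) x (v x) = 0 := by
    intro n
    obtain ⟨K', hg⟩ := chi_mul_lip Ω hb ψ K hψ n
    have hintg : ∀ i : Fin 3, Integrable (fun x => fderiv ℝ (g n) x (e3 i) * v x i) volume := by
      intro i
      obtain ⟨B, hB⟩ := (hgc n).isCompact.exists_bound_of_continuousOn (f := fun x => v x i)
        (coord_lip v L hL i).continuous.continuousOn
      refine integ_bdd _ ((measurable_fderiv_apply_const ℝ _ _).mul
        (coord_lip v L hL i).continuous.measurable).aestronglyMeasurable (K' * ‖e3 i‖ * |B|)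
        (ae_of_all _ fun x => ?_) (tsupport (g n)) (hgc n).isCompact.isBounded ?_
      · by_cases hx : x ∈ tsupport (g n)
        · rw [norm_mul]
          exact mul_le_mul (lip_fderiv_abs (g n) K' hg x _) ((hB x hx).trans (le_abs_self _)) (norm_nonneg _) (by positivity)
        · rw [fderiv_off_tsupport _ x hx]; simp; positivity
      · intro x hx
        rw [fderiv_off_tsupport _ x hx]; simp
    have hint2 : ∀ i : Fin 3, Integrable (fun x => fderiv ℝ (fun x => v x i) x (e3 i) * g n x) volume := by
      intro i
      obtain ⟨B, hB⟩ := (hgc n).exists_bound_of_continuous hg.continuous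
      refine integ_bdd _ ((measurable_fderiv_apply_const ℝ _ _).mul
        hg.continuous.measurable).aestronglyMeasurable (L * ‖e3 i‖ * B)
        (ae_of_all _ fun x => ?_) (tsupport (g n)) (hgc n).isCompact.isBounded ?_
      · rw [norm_mul]
        exact mul_le_mul (lip_fderiv_abs _ L (coord_lip v L hL i) x _) (hB x) (norm_nonneg _) (by positivity)
      · intro x hx
        rw [image_eq_zero_of_notMem_tsupport hx, mul_zero]
    have e1 : ∀ x, fderiv ℝ (g n) x (v x) = ∑ i, fderiv ℝ (g n) x (e3 i) * v x i := by
      intro x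
      rw [clm_expand]
      exact Finset.sum_congr rfl fun i _ => by rw [smul_eq_mul, mul_comm]
    simp_rw [e1]
    rw [integral_finsetSum _ (fun i _ => hintg i)]
    have e2 : ∀ i : Fin 3, ∫ x, fderiv ℝ (g n) x (e3 i) * v x i =
        - ∫ x, fderiv ℝ (fun x => v x i) x (e3 i) * g n x := by
      intro i
      have := lip_ibp (fun x => v x i) (g n) L K' (coord_lip v L hL i) hg (hgc n) (e3 i)
      linarith
    simp_rw [e2]
    rw [Finset.sum_neg_distrib, ← integral_finsetSum _ (fun i _ => hint2 i)]
    have : ∀ x, ∑ i, fderiv ℝ (fun x => v x i) x (e3 i) * g n x = 0 := by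
      intro x
      by_cases hx : x ∈ Ω
      · rw [← Finset.sum_mul]
        have h := hdiv x hx
        have : ∑ i, fderiv ℝ (fun x => v x i) x (e3 i) = div3 v x := by
          unfold div3 pder
          exact Finset.sum_congr rfl fun i _ => fderiv_coord v x (hvd x) i _
        rw [this, h, zero_mul]
      · simp [hgoff n x hx]
    simp_rw [this]
    simp
  obtain ⟨B, hB⟩ := lip_bdd Ω hb ψ hψ.continuous
  obtain ⟨M, hM⟩ := lip_bdd Ω hb (fun x => ‖v x‖) hv.continuous.norm
  have hlim : Tendsto (fun n => ∫ x, fderiv ℝ (g n) x (v x)) atTop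
      (𝓝 (∫ x, Ω.indicator (fun x => fderiv ℝ ψ x (v x)) x)) := by
    refine dct_bdd (fun n x => fderiv ℝ (g n) x (v x)) _
      (fun n => (meas_fderiv_apply (g n) v hv.continuous).aestronglyMeasurable) (K * M + B * L) Ω hb ?_ ?_ ?_
    · intro n
      filter_upwards [chi_mul_fderiv Ω ψ K hψ n] with x hx hxΩ
      rw [hx]
      refine (abs_add_le _ _).trans ?_
      rw [abs_mul, abs_mul]
      have h1 : |chi Ω n x| ≤ 1 := by
        rw [abs_of_nonneg (chi_nonneg Ω n x)]; exact chi_le_one Ω n x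
      have h2 := lip_fderiv_abs ψ K hψ x (v x)
      have h3 := hM x hxΩ
      rw [abs_of_nonneg (norm_nonneg _)] at h3
      have h4 := chi_fderiv_tangent Ω ho hb v L L.2 hL ht n x
      have h5 := hB x hxΩ
      have : |chi Ω n x| * |fderiv ℝ ψ x (v x)| ≤ 1 * (K * M) :=
        mul_le_mul h1 (h2.trans (by gcongr)) (abs_nonneg _) zero_le_one
      have : |ψ x| * |fderiv ℝ (chi Ω n) x (v x)| ≤ B * L :=
        mul_le_mul h5 h4 (abs_nonneg _) B.2
      linarith
    · intro n
      filter_upwards [chi_mul_fderiv Ω ψ K hψ n] with x hx hxΩ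
      rw [hx, chi_off Ω n x hxΩ, chi_fderiv_off Ω n x hxΩ]; simp
    · have hall : ∀ᵐ x, ∀ n, ∀ w, fderiv ℝ (g n) x w =
        chi Ω n x * fderiv ℝ ψ x w + ψ x * fderiv ℝ (chi Ω n) x w :=
        ae_all_iff.2 fun n => chi_mul_fderiv Ω ψ K hψ n
      filter_upwards [hall] with x hx
      simp_rw [hx]
      by_cases hxΩ : x ∈ Ω
      · rw [indicator_of_mem hxΩ]
        have h1 := (chi_tendsto Ω ho hb x hxΩ).mul_const (fderiv ℝ ψ x (v x))
        rw [one_mul] at h1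
        refine h1.congr' ?_
        filter_upwards [chi_fderiv_tendsto Ω ho hb x] with n hn
        rw [hn]; simp
      · rw [indicator_of_notMem hxΩ]
        refine tendsto_const_nhds.congr (fun n => ?_)
        rw [chi_off Ω n x hxΩ, chi_fderiv_off Ω n x hxΩ]; simp
  simp_rw [hz] at hlim
  rw [← integral_indicator ho.measurableSet]
  exact (tendsto_nhds_unique hlim tendsto_const_nhds)

lemma weak_curl (Ω : Set E3) (ho : IsOpen Ω) (hb : Bornology.IsBounded Ω) (v : E3 → E3)
    (hv : ContDiff ℝ 1 v) (L : NNReal) (hL : ∀ x y, ‖v x - v y‖ ≤ L * ‖x - y‖)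
    (hsym : ∀ p ∈ Ω, ∀ a b, ⟪fderiv ℝ v p a, b⟫ = ⟪fderiv ℝ v p b, a⟫)
    (F : E3 → ℝ) (A : NNReal) (hF : LipschitzWith A F) (C : ℝ) (hC0 : 0 ≤ C)
    (hC : ∀ z ∈ Ω, DifferentiableAt ℝ F z → ∀ w,
      |fderiv ℝ F z w - ⟪v z, w⟫| ≤ C * Metric.infDist z (frontier Ω) * ‖w‖)
    (ψ : E3 → ℝ) (K : NNReal) (hψ : LipschitzWith K ψ) (a c : E3) :
    ∫ x in Ω, (fderiv ℝ ψ x a * (⟪v x, c⟫ - fderiv ℝ F x c)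
      - fderiv ℝ ψ x c * (⟪v x, a⟫ - fderiv ℝ F x a)) = 0 := by
  have hvd : ∀ x, DifferentiableAt ℝ v x := fun x => hv.differentiable one_ne_zero x
  let g : ℕ → E3 → ℝ := fun n x => chi Ω n x * ψ x
  have hgc : ∀ n, HasCompactSupport (g n) := fun n => (chi_cs Ω hb n).mul_right
  have hgoff : ∀ n, ∀ x ∉ Ω, g n x = 0 := fun n x hx => by simp [g, chi_off Ω n x hx]
  have hmD : ∀ (h : E3 → ℝ) (w : E3), Measurable fun x => fderiv ℝ h x w :=
    fun h w => measurable_fderiv_apply_const ℝ h w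
  have hmv : ∀ w : E3, Measurable fun x => ⟪v x, w⟫ := fun w => (inner_lip v L hL w).continuous.measurable
  have hz : ∀ n, ∫ x, (fderiv ℝ (g n) x a * (⟪v x, c⟫ - fderiv ℝ F x c)
      - fderiv ℝ (g n) x c * (⟪v x, a⟫ - fderiv ℝ F x a)) = 0 := by
    intro n
    obtain ⟨K', hg⟩ := chi_mul_lip Ω hb ψ K hψ n
    have hg' : LipschitzWith K' (g n) := hg
    have i1 : ∀ a c : E3, Integrable (fun x => fderiv ℝ (g n) x a * ⟪v x, c⟫) volume := by
      intro a c
      obtain ⟨B, hB⟩ := (hgc n).isCompact.exists_bound_of_continuousOn (f := fun x => ⟪v x, c⟫)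
        (inner_lip v L hL c).continuous.continuousOn
      refine integ_bdd _ ((hmD _ _).mul (hmv c)).aestronglyMeasurable (K' * ‖a‖ * |B|)
        (ae_of_all _ fun x => ?_) (tsupport (g n)) (hgc n).isCompact.isBounded ?_
      · by_cases hx : x ∈ tsupport (g n)
        · rw [norm_mul]
          exact mul_le_mul (lip_fderiv_abs (g n) K' hg x _) ((hB x hx).trans (le_abs_self _)) (norm_nonneg _) (by positivity)
        · rw [fderiv_off_tsupport _ x hx]; simp; positivity
      · intro x hx
        rw [fderiv_off_tsupport _ x hx]; simp
    have i2 : ∀ a c : E3, Integrable (fun x => fderiv ℝ (g n) x a * fderiv ℝ F x c) volume := by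
      intro a c
      refine integ_bdd _ ((hmD _ _).mul (hmD _ _)).aestronglyMeasurable (K' * ‖a‖ * (A * ‖c‖))
        (ae_of_all _ fun x => ?_) (tsupport (g n)) (hgc n).isCompact.isBounded ?_
      · rw [norm_mul]
        exact mul_le_mul (lip_fderiv_abs (g n) K' hg x _) (lip_fderiv_abs F A hF x c) (norm_nonneg _) (by positivity)
      · intro x hx
        rw [fderiv_off_tsupport _ x hx]; simp
    have s1 : ∫ x, fderiv ℝ (g n) x a * ⟪v x, c⟫ = ∫ x, fderiv ℝ (g n) x c * ⟪v x, a⟫ := by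
      have h1 := lip_ibp (fun x => ⟪v x, c⟫) (g n) _ K' (inner_lip v L hL c) hg (hgc n) a
      have h2 := lip_ibp (fun x => ⟪v x, a⟫) (g n) _ K' (inner_lip v L hL a) hg (hgc n) c
      have h3 : ∫ x, fderiv ℝ (fun x => ⟪v x, c⟫) x a * g n x = ∫ x, fderiv ℝ (fun x => ⟪v x, a⟫) x c * g n x := by
        congr 1; ext x
        by_cases hx : x ∈ Ω
        · rw [fderiv_innerc v x (hvd x), fderiv_innerc v x (hvd x), hsym x hx]
        · rw [hgoff n x hx]; simp
      linarith
    have s2 : ∫ x, fderiv ℝ (g n) x a * fderiv ℝ F x c = ∫ x, fderiv ℝ (g n) x c * fderiv ℝ F x a := by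
      rw [← lip_comm F (g n) A K' hF hg (hgc n) a c]
      congr 1; ext x; rw [mul_comm]
    simp_rw [mul_sub]
    have i3 : ∀ a c : E3, Integrable (fun x => fderiv ℝ (g n) x a * ⟪v x, c⟫ - fderiv ℝ (g n) x a * fderiv ℝ F x c) volume :=
      fun a c => (i1 a c).sub (i2 a c)
    rw [integral_sub (i3 a c) (i3 c a), integral_sub (i1 a c) (i2 a c),
      integral_sub (i1 c a) (i2 c a), s1, s2, sub_self]
  obtain ⟨B, hB⟩ := lip_bdd Ω hb ψ hψ.continuous
  obtain ⟨M, hM⟩ := lip_bdd Ω hb (fun x => ‖v x‖) hv.continuous.norm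
  have hlim : Tendsto (fun n => ∫ x, (fderiv ℝ (g n) x a * (⟪v x, c⟫ - fderiv ℝ F x c)
      - fderiv ℝ (g n) x c * (⟪v x, a⟫ - fderiv ℝ F x a))) atTop
      (𝓝 (∫ x, Ω.indicator (fun x => (fderiv ℝ ψ x a * (⟪v x, c⟫ - fderiv ℝ F x c)
      - fderiv ℝ ψ x c * (⟪v x, a⟫ - fderiv ℝ F x a))) x)) := by
    refine dct_bdd _ _
      (fun n => (((hmD _ _).mul ((hmv c).sub (hmD _ _))).sub
        ((hmD _ _).mul ((hmv a).sub (hmD _ _)))).aestronglyMeasurable)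
        (2 * ((K * (M + A) + B * C) * ‖a‖ * ‖c‖)) Ω hb ?_ ?_ ?_
    · intro n
      filter_upwards [chi_mul_fderiv Ω ψ K hψ n, hF.ae_differentiableAt (μ := (volume : Measure E3))]
        with x hx hFx hxΩ
      have h1 : |chi Ω n x| ≤ 1 := by
        rw [abs_of_nonneg (chi_nonneg Ω n x)]; exact chi_le_one Ω n x
      have h3 := hM x hxΩ
      rw [abs_of_nonneg (norm_nonneg _)] at h3
      have h5 := hB x hxΩ
      have key : ∀ a c : E3, |fderiv ℝ (g n) x a * (⟪v x, c⟫ - fderiv ℝ F x c)| ≤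
          (K * (M + A) + B * C) * ‖a‖ * ‖c‖ := by
        intro a c
        have h2 := lip_fderiv_abs ψ K hψ x a
        have hβ1 : |⟪v x, c⟫ - fderiv ℝ F x c| ≤ (M + A) * ‖c‖ := by
          refine (abs_sub _ _).trans ?_
          have := lip_fderiv_abs F A hF x c
          have h6 : |⟪v x, c⟫| ≤ ‖v x‖ * ‖c‖ := abs_real_inner_le_norm _ _
          have : ‖v x‖ * ‖c‖ ≤ M * ‖c‖ := by gcongr
          linarith
        rw [hx, add_mul]
        refine (abs_add_le _ _).trans ?_
        have p1 : |chi Ω n x * fderiv ℝ ψ x a * (⟪v x, c⟫ - fderiv ℝ F x c)| ≤ 1 * (K * ‖a‖) * ((M + A) * ‖c‖) := by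
          rw [abs_mul, abs_mul]
          gcongr
        have p2 : |ψ x * fderiv ℝ (chi Ω n) x a * (⟪v x, c⟫ - fderiv ℝ F x c)| ≤ B * (C * ‖a‖ * ‖c‖) := by
          rw [mul_assoc, abs_mul]
          refine mul_le_mul h5 ?_ (abs_nonneg _) B.2
          by_cases hbig : 1 < n * Metric.infDist x Ωᶜ
          · rw [chi_fderiv_big Ω n x hbig]; simp; positivity
          · rw [abs_mul]
            have q1 : |fderiv ℝ (chi Ω n) x a| ≤ n * ‖a‖ := by
              have := lip_fderiv_abs (chi Ω n) n (chi_lip Ω n) x a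
              simpa using this
            obtain ⟨y, hy, hyd⟩ := nearest_pt Ω ho hb x hxΩ
            have q2 : Metric.infDist x (frontier Ω) ≤ Metric.infDist x Ωᶜ := by
              rw [hyd]; exact Metric.infDist_le_dist_of_mem hy
            have q3 := hC x hxΩ hFx c
            rw [abs_sub_comm] at q3
            have q4 : |⟪v x, c⟫ - fderiv ℝ F x c| ≤ C * Metric.infDist x Ωᶜ * ‖c‖ :=
              q3.trans (by gcongr)
            calc _ ≤ (n * ‖a‖) * (C * Metric.infDist x Ωᶜ * ‖c‖) := by gcongr
              _ = (n * Metric.infDist x Ωᶜ) * (C * ‖a‖ * ‖c‖) := by ring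
              _ ≤ 1 * (C * ‖a‖ * ‖c‖) := by gcongr; exact not_lt.1 hbig
              _ = _ := one_mul _
        calc _ ≤ 1 * (K * ‖a‖) * ((M + A) * ‖c‖) + B * (C * ‖a‖ * ‖c‖) := add_le_add p1 p2
          _ = _ := by ring
      refine (abs_sub _ _).trans ?_
      have k1 := key a c
      have k2 := key c a
      rw [mul_right_comm] at k2
      linarith
    · intro n
      filter_upwards [chi_mul_fderiv Ω ψ K hψ n] with x hx hxΩ
      have : ∀ w, fderiv ℝ (g n) x w = 0 := by
        intro w
        rw [hx, chi_off Ω n x hxΩ, chi_fderiv_off Ω n x hxΩ]; simp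
      simp [this]
    · have hall : ∀ᵐ x, ∀ n, ∀ w, fderiv ℝ (g n) x w =
        chi Ω n x * fderiv ℝ ψ x w + ψ x * fderiv ℝ (chi Ω n) x w :=
        ae_all_iff.2 fun n => chi_mul_fderiv Ω ψ K hψ n
      filter_upwards [hall] with x hx
      simp_rw [hx]
      by_cases hxΩ : x ∈ Ω
      · rw [indicator_of_mem hxΩ]
        have h0 := chi_tendsto Ω ho hb x hxΩ
        have h1 := ((h0.mul_const (fderiv ℝ ψ x a)).mul_const (⟪v x, c⟫ - fderiv ℝ F x c)).sub
          ((h0.mul_const (fderiv ℝ ψ x c)).mul_const (⟪v x, a⟫ - fderiv ℝ F x a))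
        rw [one_mul, one_mul] at h1
        refine h1.congr' ?_
        filter_upwards [chi_fderiv_tendsto Ω ho hb x] with n hn
        rw [hn]; simp
      · rw [indicator_of_notMem hxΩ]
        refine tendsto_const_nhds.congr (fun n => ?_)
        rw [chi_off Ω n x hxΩ, chi_fderiv_off Ω n x hxΩ]; simp
  simp_rw [hz] at hlim
  rw [← integral_indicator ho.measurableSet]
  exact (tendsto_nhds_unique hlim tendsto_const_nhds)

end

section
open MeasureTheory Filter Set
open scoped RealInnerProductSpace Topology
open scoped Convolution

/-- Mollification of a bounded compactly supported weakly curl free field is a gradient. -/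
lemma mollify_grad (Ω : Set E3) (ho : IsOpen Ω) (B : E3 → E3) (hB : Integrable B volume)
    (hoff : ∀ x ∉ Ω, B x = 0)
    (hcurl : ∀ (ψ : E3 → ℝ) (K : NNReal), LipschitzWith K ψ → ∀ a c : E3,
      ∫ x in Ω, (fderiv ℝ ψ x a * ⟪B x, c⟫ - fderiv ℝ ψ x c * ⟪B x, a⟫) = 0)
    (φ : E3 → ℝ) (hφ : ContDiff ℝ 1 φ) (hφc : HasCompactSupport φ) :
    ∃ G : E3 → ℝ, ∀ x, HasFDerivAt G
      (innerSL ℝ ((φ ⋆[ContinuousLinearMap.lsmul ℝ ℝ, (volume : Measure E3)] B) x)) x := by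
  set b : E3 → E3 := (φ ⋆[ContinuousLinearMap.lsmul ℝ ℝ, (volume : Measure E3)] B) with hb
  have hBl : LocallyIntegrable B volume := hB.locallyIntegrable
  have hd := fun x => HasCompactSupport.hasFDerivAt_convolution_left
    (ContinuousLinearMap.lsmul ℝ ℝ : ℝ →L[ℝ] E3 →L[ℝ] E3) (μ := (volume : Measure E3)) hφc hφ hBl x
  have hφD : Continuous (fderiv ℝ φ) := hφ.continuous_fderiv one_ne_zero
  have hdf : ∀ x a, fderiv ℝ b x a = ∫ t, (fderiv ℝ φ t a) • B (x - t) := by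
    intro x a
    rw [(hd x).fderiv]
    have := (hφc.fderiv ℝ).convolutionExists_left
      ((ContinuousLinearMap.lsmul ℝ ℝ : ℝ →L[ℝ] E3 →L[ℝ] E3).precompL E3) hφD hBl x
    rw [convolution_def, ContinuousLinearMap.integral_apply this]
    rfl
  have hintg : ∀ x a, Integrable (fun t => (fderiv ℝ φ t a) • B (x - t)) volume := by
    intro x a
    have hc : HasCompactSupport fun t => fderiv ℝ φ t a :=
      (hφc.fderiv ℝ).comp_left (g := fun l : E3 →L[ℝ] ℝ => l a) rfl
    have hcc : Continuous fun t => fderiv ℝ φ t a := hφD.clm_apply continuous_const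
    exact hc.convolutionExists_left
      (ContinuousLinearMap.lsmul ℝ ℝ : ℝ →L[ℝ] E3 →L[ℝ] E3) hcc hBl x
  obtain ⟨K, hK⟩ := ContDiff.lipschitzWith_of_hasCompactSupport hφc hφ one_ne_zero
  have hdi : ∀ x a c, ⟪fderiv ℝ b x a, c⟫ = ∫ y, fderiv ℝ φ (x - y) a * ⟪B y, c⟫ := by
    intro x a c
    rw [hdf, real_inner_comm, ← integral_inner (hintg x a)]
    rw [← integral_sub_left_eq_self (fun t => ⟪c, (fderiv ℝ φ t a) • B (x - t)⟫) _ x]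
    congr 1; ext y
    rw [inner_smul_right, sub_sub_cancel, real_inner_comm]
  have hii : ∀ x a c, Integrable (fun y => fderiv ℝ φ (x - y) a * ⟪B y, c⟫) volume := by
    intro x a c
    have h1 := (hintg x a).inner_const (𝕜 := ℝ) c
    have h2 := h1.comp_sub_left x
    refine h2.congr (ae_of_all _ fun y => ?_)
    simp only [sub_sub_cancel, inner_smul_left]
    rfl
  have hsym : ∀ x a c, ⟪fderiv ℝ b x a, c⟫ = ⟪fderiv ℝ b x c, a⟫ := by
    intro x a c
    rw [hdi, hdi]
    have hψ : LipschitzWith K (fun y => φ (x - y)) := by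
      refine LipschitzWith.of_dist_le_mul (fun y z => ?_)
      have := hK.dist_le_mul (x - y) (x - z)
      rwa [dist_sub_left] at this
    have hψd : ∀ y w, fderiv ℝ (fun y => φ (x - y)) y w = - fderiv ℝ φ (x - y) w := by
      intro y w
      have h1 := (hφ.differentiable one_ne_zero (x - y)).hasFDerivAt.comp y ((hasFDerivAt_id y).const_sub x)
      have h2 : HasFDerivAt (fun y => φ (x - y)) ((fderiv ℝ φ (x - y)).comp (-(ContinuousLinearMap.id ℝ E3))) y := h1
      rw [h2.fderiv]; simp
    have h := hcurl _ K hψ a c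
    rw [← integral_indicator ho.measurableSet] at h
    have e : ∀ y, Ω.indicator (fun y => fderiv ℝ (fun y => φ (x - y)) y a * ⟪B y, c⟫ -
        fderiv ℝ (fun y => φ (x - y)) y c * ⟪B y, a⟫) y =
        fderiv ℝ φ (x - y) c * ⟪B y, a⟫ - fderiv ℝ φ (x - y) a * ⟪B y, c⟫ := by
      intro y
      by_cases hy : y ∈ Ω
      · rw [indicator_of_mem hy, hψd, hψd]; ring
      · rw [indicator_of_notMem hy, hoff y hy]; simp
    simp_rw [e] at h
    rw [integral_sub (hii x c a) (hii x a c)] at h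
    linarith
  have hbd : ∀ x, DifferentiableAt ℝ b x := fun x => (hd x).differentiableAt
  obtain ⟨G, hG⟩ := Convex.exists_forall_hasFDerivAt_of_fderiv_symmetric (E := E3) (F := ℝ)
    (ω := fun x => innerSL ℝ (b x)) (s := univ) convex_univ isOpen_univ
    (fun x _ => ((innerSL ℝ : E3 →L[ℝ] E3 →L[ℝ] ℝ).differentiableAt.comp x (hbd x)).differentiableWithinAt) (by
      intro x _ a c
      have h1 : fderiv ℝ (fun x => innerSL ℝ (b x)) x = (innerSL ℝ : E3 →L[ℝ] E3 →L[ℝ] ℝ).comp (fderiv ℝ b x) :=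
        ((innerSL ℝ : E3 →L[ℝ] E3 →L[ℝ] ℝ).hasFDerivAt.comp x (hbd x).hasFDerivAt).fderiv
      rw [h1]
      simpa using hsym x a c)
  exact ⟨G, fun x => hG x (mem_univ x)⟩

lemma cutoff_exists (T : Set E3) (hT : Bornology.IsBounded T) :
    ∃ η : E3 → ℝ, ContDiff ℝ 1 η ∧ HasCompactSupport η ∧ ∀ x ∈ T, ∀ᶠ y in 𝓝 x, η y = 1 := by
  obtain ⟨R, hR⟩ := hT.subset_ball (0 : E3)
  let f : ContDiffBump (0 : E3) := ⟨max R 1, max R 1 + 1, by positivity, by linarith⟩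
  refine ⟨f, f.contDiff, f.hasCompactSupport, fun x hx => ?_⟩
  have : Metric.ball (0:E3) (max R 1) ∈ 𝓝 x :=
    Metric.isOpen_ball.mem_nhds (Metric.ball_subset_ball (le_max_left _ _) (hR hx))
  filter_upwards [this] with y hy
  exact f.one_of_mem_closedBall (Metric.ball_subset_closedBall hy)

lemma inner_grad_zero (Ω : Set E3) (hb : Bornology.IsBounded Ω) (v b : E3 → E3)
    (hdiv : ∀ (ψ : E3 → ℝ) (K : NNReal), LipschitzWith K ψ → ∫ x in Ω, fderiv ℝ ψ x (v x) = 0)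
    (ho : IsOpen Ω)
    (hbc : Continuous b) (G : E3 → ℝ) (hG : ∀ x, HasFDerivAt G (innerSL ℝ (b x)) x) :
    ∫ x in Ω, ⟪b x, v x⟫ = 0 := by
  obtain ⟨η, hη, hηc, hη1⟩ := cutoff_exists Ω hb
  have hGc : ContDiff ℝ 1 G := by
    rw [contDiff_one_iff_fderiv]
    refine ⟨fun x => (hG x).differentiableAt, ?_⟩
    have : fderiv ℝ G = fun x => innerSL ℝ (b x) := funext fun x => (hG x).fderiv
    rw [this]
    exact (innerSL ℝ).continuous.comp hbc
  obtain ⟨K, hK⟩ := ContDiff.lipschitzWith_of_hasCompactSupport (f := fun x => η x * G x) (hηc.mul_right)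
    (hη.mul hGc) one_ne_zero
  rw [← hdiv _ K hK]
  apply setIntegral_congr_fun ho.measurableSet
  intro x hx
  have : (fun x => η x * G x) =ᶠ[𝓝 x] G := by
    filter_upwards [hη1 x hx] with y hy
    rw [hy, one_mul]
  simp only
  rw [this.fderiv_eq, (hG x).fderiv]
  rfl

lemma interior_zero (Ω : Set E3) (ho : IsOpen Ω) (hb : Bornology.IsBounded Ω) (v : E3 → E3)
    (hv : ContDiff ℝ 1 v) (L : NNReal) (hL : ∀ x y, ‖v x - v y‖ ≤ L * ‖x - y‖)
    (ht : ∀ p ∈ frontier Ω, IsTangentAt (frontier Ω) p (v p)) (hdiv : ∀ p ∈ Ω, div3 v p = 0)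
    (hsym : ∀ p ∈ Ω, ∀ a b, ⟪fderiv ℝ v p a, b⟫ = ⟪fderiv ℝ v p b, a⟫)
    (F : E3 → ℝ) (A : NNReal) (hF : LipschitzWith A F) (C : ℝ) (hC0 : 0 ≤ C)
    (hC : ∀ z ∈ Ω, DifferentiableAt ℝ F z → ∀ w,
      |fderiv ℝ F z w - ⟪v z, w⟫| ≤ C * Metric.infDist z (frontier Ω) * ‖w‖) :
    ∀ x ∈ Ω, v x = 0 := by
  have hdivw := weak_div Ω ho hb v hv L hL ht hdiv
  have hcurlw := weak_curl Ω ho hb v hv L hL hsym F A hF C hC0 hC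
  let B : E3 → E3 := Ω.indicator (fun x => v x - gradient F x)
  have hgrad : ∀ x w, ⟪gradient F x, w⟫ = fderiv ℝ F x w := by
    intro x w
    simp [gradient]
  have hBin : ∀ x ∈ Ω, ∀ c, ⟪B x, c⟫ = ⟪v x, c⟫ - fderiv ℝ F x c := by
    intro x hx c
    simp only [B, indicator_of_mem hx, inner_sub_left, hgrad]
  have hgm : Measurable (gradient F) := by
    have h1 : Measurable (fderiv ℝ F) := measurable_fderiv ℝ F
    exact ((InnerProductSpace.toDual ℝ E3).symm.continuous.measurable).comp h1
  have hBm : Measurable B := (hv.continuous.measurable.sub hgm).indicator ho.measurableSet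
  obtain ⟨M, hM⟩ := lip_bdd Ω hb (fun x => ‖v x‖) hv.continuous.norm
  have hBb : ∀ x, ‖B x‖ ≤ M + A := by
    intro x
    by_cases hx : x ∈ Ω
    · simp only [B, indicator_of_mem hx]
      refine (norm_sub_le _ _).trans ?_
      have h3 := hM x hx
      rw [abs_of_nonneg (norm_nonneg _)] at h3
      have : ‖gradient F x‖ ≤ A := by
        simp only [gradient, LinearIsometryEquiv.norm_map]
        exact norm_fderiv_le_of_lipschitz ℝ hF
      exact add_le_add h3 this
    · simp only [B, indicator_of_notMem hx, norm_zero]; positivity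
  have hoff : ∀ x ∉ Ω, B x = 0 := fun x hx => indicator_of_notMem hx _
  have hBi : Integrable B volume := integ_bdd B hBm.aestronglyMeasurable _ (ae_of_all _ hBb) Ω hb hoff
  let φ : ℕ → ContDiffBump (0 : E3) := fun n =>
    ⟨1 / (n + 1), 2 / (n + 1), by positivity, by gcongr; norm_num⟩
  let b : ℕ → E3 → E3 := fun n => ((φ n).normed volume ⋆[ContinuousLinearMap.lsmul ℝ ℝ, (volume : Measure E3)] B)
  have hbc : ∀ n, Continuous (b n) := by
    intro n
    exact HasCompactSupport.continuous_convolution_left _ (φ n).hasCompactSupport_normed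
      (φ n).continuous_normed hBi.locallyIntegrable
  have hb0 : ∀ n, ∫ x in Ω, ⟪b n x, v x⟫ = 0 := by
    intro n
    obtain ⟨G, hG⟩ := mollify_grad Ω ho B hBi hoff (by
      intro ψ K hψ a c
      rw [← hcurlw ψ K hψ a c]
      apply setIntegral_congr_fun ho.measurableSet
      intro x hx
      simp only [hBin x hx]) ((φ n).normed volume) (φ n).contDiff_normed (φ n).hasCompactSupport_normed
    exact inner_grad_zero Ω hb v (b n) hdivw ho (hbc n) G hG
  have hbb : ∀ n x, ‖b n x‖ ≤ M + A := by
    intro n x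
    have := dist_convolution_le (μ := (volume : Measure E3)) (f := (φ n).normed volume) (g := B) (x₀ := x)
      (z₀ := 0) (R := (φ n).rOut) (ε := M + A) (by positivity)
      (φ n).support_normed_eq.subset (φ n).nonneg_normed (φ n).integral_normed hBm.aestronglyMeasurable
      (fun y _ => by rw [dist_zero_right]; exact hBb y)
    rwa [dist_zero_right] at this
  have hae := ContDiffBump.ae_convolution_tendsto_right_of_locallyIntegrable (μ := (volume : Measure E3))
    (φ := φ) (l := atTop) (K := 2) (g := B) (by
      have h1 := (tendsto_one_div_add_atTop_nhds_zero_nat (𝕜 := ℝ)).const_mul 2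
      rw [mul_zero] at h1
      refine h1.congr (fun n => ?_)
      simp [φ]; ring) (Eventually.of_forall fun n => by simp only [φ]; apply le_of_eq; ring) hBi.locallyIntegrable
  have hlim : Tendsto (fun n => ∫ x, Ω.indicator (fun x => ⟪b n x, v x⟫) x) atTop
      (𝓝 (∫ x, Ω.indicator (fun x => ⟪B x, v x⟫) x)) := by
    refine dct_bdd _ _ (fun n => (((hbc n).inner hv.continuous).measurable.indicator
      ho.measurableSet).aestronglyMeasurable) ((M + A) * M) Ω hb ?_ ?_ ?_
    · intro n
      refine ae_of_all _ fun x hx => ?_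
      rw [indicator_of_mem hx]
      refine (abs_real_inner_le_norm _ _).trans ?_
      have h3 := hM x hx
      rw [abs_of_nonneg (norm_nonneg _)] at h3
      exact mul_le_mul (hbb n x) h3 (norm_nonneg _) (by positivity)
    · intro n
      exact ae_of_all _ fun x hx => indicator_of_notMem hx _
    · filter_upwards [hae] with x hx
      by_cases hxΩ : x ∈ Ω
      · simp only [indicator_of_mem hxΩ]
        exact hx.inner tendsto_const_nhds
      · simp only [indicator_of_notMem hxΩ]
        exact tendsto_const_nhds
  simp_rw [integral_indicator ho.measurableSet, hb0] at hlim
  have hz := tendsto_nhds_unique hlim tendsto_const_nhds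
  have hio : ∀ (f : E3 → ℝ), Measurable f → (∃ A, ∀ x ∈ Ω, |f x| ≤ A) → IntegrableOn f Ω volume := by
    rintro f hf ⟨A, hA⟩
    refine Measure.integrableOn_of_bounded (M := A) (hb.measure_lt_top).ne hf.aestronglyMeasurable ?_
    exact (ae_restrict_iff' ho.measurableSet).2 (ae_of_all _ hA)
  have i1 : IntegrableOn (fun x => ‖v x‖ ^ 2) Ω volume := by
    refine hio _ (hv.continuous.norm.pow 2).measurable ⟨M ^ 2, fun x hx => ?_⟩
    have h3 := hM x hx
    rw [abs_of_nonneg (by positivity)] at h3 ⊢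
    gcongr
  have i2 : IntegrableOn (fun x => fderiv ℝ F x (v x)) Ω volume := by
    refine hio _ (meas_fderiv_apply F v hv.continuous) ⟨A * M, fun x hx => ?_⟩
    have h3 := hM x hx
    rw [abs_of_nonneg (by positivity)] at h3
    refine (lip_fderiv_abs F A hF x (v x)).trans ?_
    gcongr
  have hz2 : ∫ x in Ω, ‖v x‖ ^ 2 = 0 := by
    have e : ∫ x in Ω, ⟪B x, v x⟫ = ∫ x in Ω, (‖v x‖ ^ 2 - fderiv ℝ F x (v x)) := by
      apply setIntegral_congr_fun ho.measurableSet
      intro x hx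
      simp only [hBin x hx, real_inner_self_eq_norm_sq]
    rw [e, integral_sub i1 i2, hdivw F A hF, sub_zero] at hz
    exact hz
  rw [setIntegral_eq_zero_iff_of_nonneg_ae (ae_of_all _ fun x => by positivity) i1] at hz2
  have := Measure.eqOn_open_of_ae_eq hz2 ho (hv.continuous.norm.pow 2).continuousOn continuousOn_const
  intro x hx
  have := this hx
  simpa using this

end

section
open MeasureTheory Filter Set
open scoped RealInnerProductSpace Topology
open scoped Manifold ContDiff

lemma cut_field (K W : Set E3) (hK : IsCompact K) (hW : IsOpen W) (hKW : K ⊆ W) (v : E3 → E3)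
    (hv : ContDiffOn ℝ 1 v W) : ∃ w : E3 → E3, ContDiff ℝ 1 w ∧ HasCompactSupport w ∧
      ∀ x ∈ K, w =ᶠ[𝓝 x] v := by
  obtain ⟨K', hK', h1, h2⟩ := exists_compact_between hK hW hKW
  obtain ⟨f, hf1, hf0, -⟩ := exists_contMDiffMap_one_nhds_of_subset_interior (n := 1) (𝓘(ℝ, E3)) hK.isClosed h1
  have hfc : ContDiff ℝ 1 f := f.contMDiff.contDiff
  refine ⟨fun x => f x • v x, ?_, ?_, ?_⟩
  · rw [contDiff_iff_contDiffAt]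
    intro x
    by_cases hx : x ∈ W
    · exact hfc.contDiffAt.smul (hv.contDiffAt (hW.mem_nhds hx))
    · have : (fun x => f x • v x) =ᶠ[𝓝 x] fun _ => 0 := by
        have : K'ᶜ ∈ 𝓝 x := hK'.isClosed.isOpen_compl.mem_nhds (fun h => hx (h2 h))
        filter_upwards [this] with y hy
        rw [hf0 y hy, zero_smul]
      exact contDiffAt_const.congr_of_eventuallyEq this
  · exact HasCompactSupport.intro hK' (fun x hx => by simp only [hf0 x hx, zero_smul])
  · intro x hx
    have := (eventually_nhdsSet_iff_forall.1 hf1) x hx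
    filter_upwards [this] with y hy
    rw [hy, one_smul]

lemma e3_inner (w : E3) (i : Fin 3) : ⟪w, e3 i⟫ = w i := by
  simp [e3, EuclideanSpace.inner_single_right]

lemma sym_of_curl (v : E3 → E3) (p : E3) (h : curl3 v p = 0) (a b : E3) :
    ⟪fderiv ℝ v p a, b⟫ = ⟪fderiv ℝ v p b, a⟫ := by
  have h0 : pder v 2 1 p = pder v 1 2 p := by
    have := congrArg (fun w : E3 => w 0) h; simp [curl3, mk3] at this; linarith
  have h1 : pder v 0 2 p = pder v 2 0 p := by
    have := congrArg (fun w : E3 => w 1) h; simp [curl3, mk3] at this; linarith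
  have h2 : pder v 1 0 p = pder v 0 1 p := by
    have := congrArg (fun w : E3 => w 2) h; simp [curl3, mk3] at this; linarith
  have hpd : ∀ i j, ⟪fderiv ℝ v p (e3 j), e3 i⟫ = pder v i j p := fun i j => e3_inner _ _
  rw [clm_expand (fderiv ℝ v p) a, clm_expand (fderiv ℝ v p) b, e3_expand a, e3_expand b]
  simp only [Fin.sum_univ_three, inner_add_left, inner_add_right, inner_smul_left, inner_smul_right, hpd,
    h0, h1, h2, conj_trivial]
  have ea : ∀ (w : E3) (j : Fin 3), (w 0 • e3 0 + w 1 • e3 1 + w 2 • e3 2 : E3) j = w j := by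
    intro w j
    have := e3_expand w
    rw [Fin.sum_univ_three] at this
    rw [← this]
  simp only [ea]
  ring

lemma trace_inner (v : E3 → E3) (p : E3) : div3 v p = ∑ i, ⟪fderiv ℝ v p (e3 i), e3 i⟫ := by
  unfold div3 pder
  simp_rw [e3_inner]

lemma germ_div (v w : E3 → E3) (p : E3) (h : w =ᶠ[𝓝 p] v) : div3 w p = div3 v p := by
  unfold div3 pder; rw [h.fderiv_eq]

/-- symmetry passes to the closure. -/
lemma sym_closure (Ω W : Set E3) (hW : IsOpen W) (v : E3 → E3) (hv : ContDiffOn ℝ 1 v W)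
    (h : ∀ p ∈ Ω, ∀ a b, ⟪fderiv ℝ v p a, b⟫ = ⟪fderiv ℝ v p b, a⟫) (p : E3) (hp : p ∈ closure Ω)
    (hpW : p ∈ W) (a b : E3) : ⟪fderiv ℝ v p a, b⟫ = ⟪fderiv ℝ v p b, a⟫ := by
  have hc : ContinuousAt (fderiv ℝ v) p :=
    (hv.continuousOn_fderiv_of_isOpen hW le_rfl).continuousAt (hW.mem_nhds hpW)
  have hne : (𝓝[Ω] p).NeBot := mem_closure_iff_nhdsWithin_neBot.1 hp
  have hca : ∀ a : E3, Tendsto (fun q => fderiv ℝ v q a) (𝓝[Ω] p) (𝓝 (fderiv ℝ v p a)) := fun a =>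
    (hc.clm_apply continuousAt_const).tendsto.mono_left nhdsWithin_le_nhds
  have t1 := (hca a).inner (𝕜 := ℝ) (tendsto_const_nhds (x := b))
  have t2 := (hca b).inner (𝕜 := ℝ) (tendsto_const_nhds (x := a))
  refine tendsto_nhds_unique t1 (t2.congr' ?_)
  filter_upwards [self_mem_nhdsWithin] with q hq
  exact (h q hq a b).symm

lemma div_closure (Ω W : Set E3) (hW : IsOpen W) (v : E3 → E3) (hv : ContDiffOn ℝ 1 v W)
    (h : ∀ p ∈ Ω, div3 v p = 0) (p : E3) (hp : p ∈ closure Ω)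
    (hpW : p ∈ W) : div3 v p = 0 := by
  have hc : ContinuousAt (fderiv ℝ v) p :=
    (hv.continuousOn_fderiv_of_isOpen hW le_rfl).continuousAt (hW.mem_nhds hpW)
  have hne : (𝓝[Ω] p).NeBot := mem_closure_iff_nhdsWithin_neBot.1 hp
  have hca : ∀ a : E3, Tendsto (fun q => fderiv ℝ v q a) (𝓝[Ω] p) (𝓝 (fderiv ℝ v p a)) := fun a =>
    (hc.clm_apply continuousAt_const).tendsto.mono_left nhdsWithin_le_nhds
  have t1 : Tendsto (fun q => div3 v q) (𝓝[Ω] p) (𝓝 (div3 v p)) := by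
    simp_rw [trace_inner]
    exact tendsto_finsetSum _ fun i _ => (hca (e3 i)).inner (𝕜 := ℝ) (tendsto_const_nhds (x := e3 i))
  refine tendsto_nhds_unique t1 (tendsto_const_nhds.congr' ?_)
  filter_upwards [self_mem_nhdsWithin] with q hq
  exact (h q hq).symm

lemma zero_closure (Ω W : Set E3) (ho : IsOpen Ω) (hW : IsOpen W) (v : E3 → E3) (hv : ContDiffOn ℝ 1 v W)
    (h : ∀ p ∈ Ω, v p = 0) (p : E3) (hp : p ∈ closure Ω)
    (hpW : p ∈ W) : v p = 0 ∧ fderiv ℝ v p = 0 := by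
  have hc : ContinuousAt (fderiv ℝ v) p :=
    (hv.continuousOn_fderiv_of_isOpen hW le_rfl).continuousAt (hW.mem_nhds hpW)
  have hc0 : ContinuousAt v p := hv.continuousOn.continuousAt (hW.mem_nhds hpW)
  have hne : (𝓝[Ω] p).NeBot := mem_closure_iff_nhdsWithin_neBot.1 hp
  constructor
  · refine tendsto_nhds_unique (hc0.tendsto.mono_left (nhdsWithin_le_nhds (s := Ω))) (tendsto_const_nhds.congr' ?_)
    filter_upwards [self_mem_nhdsWithin] with q hq
    exact (h q hq).symm
  · refine tendsto_nhds_unique (hc.tendsto.mono_left (nhdsWithin_le_nhds (s := Ω))) (tendsto_const_nhds.congr' ?_)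
    filter_upwards [self_mem_nhdsWithin] with q hq
    have : v =ᶠ[𝓝 q] fun _ => 0 := by
      filter_upwards [ho.mem_nhds hq] with y hy
      exact h y hy
    rw [this.fderiv_eq]; simp

lemma inner_part (S Ωm Ωp : Set E3) (vm vp : E3 → E3)
    (hS : IsSurface 2 S) (hcpt : IsCompact S)
    (h : S ≃ₜ (Metric.sphere (0 : E3) 1))
    (henc : EnclosedBy S Ωm Ωp)
    (hCVS : CVSPair S Ωm Ωp vm vp) : ∀ p ∈ Ωm, vm p = 0 := by
  have hcl : closure Ωm = Ωm ∪ S := by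
    rw [← henc.fr, ← closure_eq_self_union_frontier]
  obtain ⟨W, hW, hWs, hv⟩ := hCVS.smoothm
  obtain ⟨w, hw, hwc, hwv⟩ := cut_field (closure Ωm) W henc.bounded.isCompact_closure hW (hcl ▸ hWs) vm hv
  obtain ⟨L, hL⟩ := ContDiff.lipschitzWith_of_hasCompactSupport hwc hw one_ne_zero
  have hL' : ∀ x y, ‖w x - w y‖ ≤ L * ‖x - y‖ := by
    intro x y
    have := hL.dist_le_mul x y
    rwa [dist_eq_norm, dist_eq_norm] at this
  have hwm : ∀ x ∈ Ωm, w =ᶠ[𝓝 x] vm := fun x hx => hwv x (subset_closure hx)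
  have hwS : ∀ x ∈ S, w =ᶠ[𝓝 x] vm := fun x hx => hwv x (by rw [hcl]; exact Or.inr hx)
  have hsymm : ∀ p ∈ Ωm, ∀ a b, ⟪fderiv ℝ w p a, b⟫ = ⟪fderiv ℝ w p b, a⟫ := by
    intro p hp a b
    rw [(hwm p hp).fderiv_eq]
    exact sym_of_curl vm p (hCVS.curlm p hp) a b
  have hsymS : ∀ p ∈ S, ∀ a b, ⟪fderiv ℝ w p a, b⟫ = ⟪fderiv ℝ w p b, a⟫ := fun p hp =>
    sym_closure Ωm univ isOpen_univ w hw.contDiffOn hsymm p (hCVS.clm hp) (mem_univ p)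
  obtain ⟨C, f, hC0, hf⟩ := global_prim S hS h hcpt w hw L L.2 hL' hsymS
  obtain ⟨R, hR0, hR⟩ := henc.bounded.subset_ball_lt 0 (0 : E3)
  have hne : S.Nonempty := by
    have : (Metric.sphere (0 : E3) 1).Nonempty := NormedSpace.sphere_nonempty.2 zero_le_one
    exact ⟨_, (h.symm ⟨_, this.some_mem⟩).2⟩
  obtain ⟨F, A, C', hF, hC'0, hC'⟩ := infconv_ext S hcpt hne w L L.2 hL' f C hC0 hf R hR0
  have key := interior_zero Ωm henc.openm henc.bounded w hw L hL' (by
    rw [henc.fr]; intro p hp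
    rw [(hwS p hp).self_of_nhds]
    exact hCVS.tangentm p hp) (by
    intro p hp
    rw [germ_div _ _ p (hwm p hp)]
    exact hCVS.divm p hp) hsymm F A hF C' hC'0 (by
    rw [henc.fr]
    intro z hz
    exact hC' z (hR hz))
  intro p hp
  rw [← (hwm p hp).self_of_nhds]
  exact key p hp

end

section
open MeasureTheory Filter Set
open scoped RealInnerProductSpace Topology

lemma tangent_deriv_zero (S : Set E3) (Φ : E3 → ℝ) (p u : E3) (hΦ : DifferentiableAt ℝ Φ p)
    (ht : IsTangentAt S p u) (hex : (∀ q ∈ S, Φ q ≤ Φ p) ∨ (∀ q ∈ S, Φ p ≤ Φ q)) :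
    fderiv ℝ Φ p u = 0 := by
  obtain ⟨γ, h1, h2, h3⟩ := ht
  have hd : HasDerivAt (fun t => Φ (γ t)) (fderiv ℝ Φ p u) 0 := by
    have : HasFDerivAt Φ (fderiv ℝ Φ p) (γ 0) := by rw [h2]; exact hΦ.hasFDerivAt
    exact this.comp_hasDerivAt 0 h3
  rcases hex with hex | hex
  · have : IsLocalMax (fun t => Φ (γ t)) 0 := Eventually.of_forall fun t => by
      simp only [h2]; exact hex _ (h1 t)
    exact this.hasDerivAt_eq_zero hd
  · have : IsLocalMin (fun t => Φ (γ t)) 0 := Eventually.of_forall fun t => by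
      simp only [h2]; exact hex _ (h1 t)
    exact this.hasDerivAt_eq_zero hd

lemma surface_zero (S : Set E3) (hcpt : IsCompact S) (v : E3 → E3)
    (hv : ∀ p ∈ S, DifferentiableAt ℝ v p) (ht : ∀ p ∈ S, IsTangentAt S p (v p))
    (hst : ∀ p ∈ S, fderiv ℝ v p (v p) = 0) : ∀ p ∈ S, v p = 0 := by
  let Φ : E3 → ℝ := fun q => ⟪v q, q⟫
  have hΦ : ∀ p ∈ S, DifferentiableAt ℝ Φ p := fun p hp => (hv p hp).inner ℝ differentiableAt_id
  have hΦd : ∀ p ∈ S, fderiv ℝ Φ p (v p) = ‖v p‖ ^ 2 := by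
    intro p hp
    have := fderiv_inner_apply ℝ (hv p hp) (differentiableAt_id (x := p)) (v p)
    have e : Φ = fun t => ⟪v t, id t⟫ := rfl
    rw [e, this, hst p hp]
    simp
  have hcont : ContinuousOn Φ S := fun p hp => (hΦ p hp).continuousAt.continuousWithinAt
  intro p hp
  obtain ⟨qM, hqM, hM⟩ := hcpt.exists_isMaxOn ⟨p, hp⟩ hcont
  obtain ⟨qm, hqm, hm⟩ := hcpt.exists_isMinOn ⟨p, hp⟩ hcont
  have z : ∀ q ∈ S, ((∀ r ∈ S, Φ r ≤ Φ q) ∨ (∀ r ∈ S, Φ q ≤ Φ r)) → v q = 0 := by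
    intro q hq hex
    have := tangent_deriv_zero S Φ q (v q) (hΦ q hq) (ht q hq) hex
    rw [hΦd q hq] at this
    simpa using this
  have zM := z qM hqM (Or.inl fun r hr => hM hr)
  have zm := z qm hqm (Or.inr fun r hr => hm hr)
  have hall : ∀ r ∈ S, Φ r = 0 := by
    intro r hr
    have h1 : Φ r ≤ Φ qM := hM hr
    have h2 : Φ qm ≤ Φ r := hm hr
    have h3 : Φ qM = 0 := by simp [Φ, zM]
    have h4 : Φ qm = 0 := by simp [Φ, zm]
    linarith
  exact z p hp (Or.inl fun r hr => by rw [hall r hr, hall p hp])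

lemma clm_zero_of_sym (A : E3 →L[ℝ] E3) (hsym : ∀ a b, ⟪A a, b⟫ = ⟪A b, a⟫)
    (htr : ∑ i, ⟪A (e3 i), e3 i⟫ = 0) (B : E2 →L[ℝ] E3) (hB : Function.Injective B)
    (hAB : ∀ x, A (B x) = 0) : A = 0 := by
  let P : Submodule ℝ E3 := LinearMap.range (B : E2 →ₗ[ℝ] E3)
  have hP : Module.finrank ℝ P = 2 := by
    have := LinearMap.finrank_range_of_inj (f := (B : E2 →ₗ[ℝ] E3)) hB
    simp only [finrank_euclideanSpace, Fintype.card_fin] at this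
    exact this
  have h3 : Module.finrank ℝ E3 = 3 := by simp
  have hsum := P.finrank_add_finrank_orthogonal
  have hne : Pᗮ ≠ ⊥ := by
    intro h
    rw [h] at hsum
    simp at hsum; omega
  obtain ⟨n, hn, hn0⟩ := Submodule.exists_mem_ne_zero_of_ne_bot hne
  have hPn : P = (ℝ ∙ n)ᗮ := by
    apply Submodule.eq_of_le_of_finrank_eq
    · intro x hx
      rw [Submodule.mem_orthogonal_singleton_iff_inner_left]
      exact hn x hx
    · have h1 := (ℝ ∙ n).finrank_add_finrank_orthogonal
      rw [finrank_span_singleton hn0] at h1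
      omega
  have hAP : ∀ x ∈ P, A x = 0 := by
    rintro x ⟨y, rfl⟩; exact hAB y
  have hnn : ⟪n, n⟫ ≠ 0 := by simpa using hn0
  have hdec : ∀ x, ⟪n, n⟫ • A x = ⟪x, n⟫ • A n := by
    intro x
    have : ⟪n, n⟫ • x - ⟪x, n⟫ • n ∈ P := by
      rw [hPn, Submodule.mem_orthogonal_singleton_iff_inner_left]
      rw [inner_sub_left, inner_smul_left, inner_smul_left]; simp; ring
    have := hAP _ this
    rw [map_sub, map_smul, map_smul] at this
    exact sub_eq_zero.1 this
  have hAn : ∀ y, ⟪n, n⟫ * ⟪A n, y⟫ = ⟪y, n⟫ * ⟪A n, n⟫ := by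
    intro y
    rw [hsym n y]
    have := congrArg (fun z => ⟪z, n⟫) (hdec y)
    simpa [inner_smul_left] using this
  have hq : ∀ x, ⟪n, n⟫ * ⟪n, n⟫ * ⟪A x, x⟫ = ⟪x, n⟫ ^ 2 * ⟪A n, n⟫ := by
    intro x
    have h1 := congrArg (fun z => ⟪z, x⟫) (hdec x)
    simp only [inner_smul_left, conj_trivial] at h1
    have h2 := hAn x
    linear_combination ⟪n, n⟫ * h1 + ⟪x, n⟫ * h2
  have hl : ⟪A n, n⟫ = 0 := by
    have h1 : ∑ i, ⟪n, n⟫ * ⟪n, n⟫ * ⟪A (e3 i), e3 i⟫ = ∑ i, ⟪e3 i, n⟫ ^ 2 * ⟪A n, n⟫ :=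
      Finset.sum_congr rfl fun i _ => hq (e3 i)
    rw [← Finset.mul_sum, htr, mul_zero, ← Finset.sum_mul] at h1
    have h2 : ∑ i, ⟪e3 i, n⟫ ^ 2 = ⟪n, n⟫ := by
      rw [real_inner_self_eq_norm_sq, EuclideanSpace.norm_sq_eq]
      refine Finset.sum_congr rfl fun i _ => ?_
      rw [real_inner_comm, e3_inner]; simp
    rw [h2] at h1
    rcases mul_eq_zero.1 h1.symm with h | h
    · exact absurd h hnn
    · exact h
  have hAn0 : A n = 0 := by
    have : ∀ y, ⟪A n, y⟫ = 0 := by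
      intro y
      have := hAn y
      rw [hl, mul_zero] at this
      exact (mul_eq_zero.1 this).resolve_left hnn
    exact inner_self_eq_zero.1 (this (A n))
  ext1 x
  have := hdec x
  rw [hAn0, smul_zero] at this
  exact (smul_eq_zero.1 this).resolve_left hnn

/-- extension by zero is `C¹`. -/
lemma ext_zero (S Ωm Ωp W : Set E3) (hom : IsOpen Ωm) (hop : IsOpen Ωp) (hplus : Ωp = (Ωm ∪ S)ᶜ)
    (hdis : Disjoint Ωm Ωp)
    (hW : IsOpen W) (hWs : Ωp ∪ S ⊆ W) (v : E3 → E3) (hv : ContDiffOn ℝ 1 v W) (h0 : ∀ p ∈ S, v p = 0)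
    (h1 : ∀ p ∈ S, fderiv ℝ v p = 0) : ContDiff ℝ 1 (Ωp.indicator v) := by
  have hm : ∀ p ∈ Ωm, Ωp.indicator v =ᶠ[𝓝 p] fun _ => 0 := by
    intro p hp
    filter_upwards [hom.mem_nhds hp] with q hq
    exact indicator_of_notMem (disjoint_left.1 hdis hq) _
  have hp : ∀ p ∈ Ωp, Ωp.indicator v =ᶠ[𝓝 p] v := by
    intro p hp
    filter_upwards [hop.mem_nhds hp] with q hq
    exact indicator_of_mem hq _
  have hcase : ∀ p, p ∈ Ωp ∨ p ∈ Ωm ∨ p ∈ S := by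
    intro p
    by_cases h : p ∈ Ωm ∪ S
    · exact Or.inr h
    · left; rw [hplus]; exact h
  have hSp : ∀ p ∈ S, p ∉ Ωp := by
    intro p hp h
    rw [hplus] at h; exact h (Or.inr hp)
  have hvd : ∀ p ∈ W, DifferentiableAt ℝ v p := fun p hp => (hv.contDiffAt (hW.mem_nhds hp)).differentiableAt one_ne_zero
  have hD : ∀ p, HasFDerivAt (Ωp.indicator v) (Ωp.indicator (fderiv ℝ v) p) p := by
    intro p
    rcases hcase p with h | h | h
    · rw [indicator_of_mem h]
      exact (hvd p (hWs (Or.inl h))).hasFDerivAt.congr_of_eventuallyEq (hp p h)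
    · rw [indicator_of_notMem (disjoint_left.1 hdis h)]
      exact (hasFDerivAt_const (0 : E3) p).congr_of_eventuallyEq (hm p h)
    · rw [indicator_of_notMem (hSp p h)]
      have := (hvd p (hWs (Or.inr h))).hasFDerivAt
      rw [h1 p h, hasFDerivAt_iff_isLittleO] at this
      rw [hasFDerivAt_iff_isLittleO]
      refine (Asymptotics.IsBigO.of_bound 1 (Eventually.of_forall fun q => ?_)).trans_isLittleO this
      rw [indicator_of_notMem (hSp p h), h0 p h]
      simp only [sub_zero, zero_apply, one_mul]
      exact norm_indicator_le_norm_self _ _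
  rw [contDiff_one_iff_fderiv]
  refine ⟨fun p => (hD p).differentiableAt, ?_⟩
  have e : fderiv ℝ (Ωp.indicator v) = Ωp.indicator (fderiv ℝ v) := funext fun p => (hD p).fderiv
  rw [e, continuous_iff_continuousAt]
  intro p
  have hc : ∀ p ∈ W, ContinuousAt (fderiv ℝ v) p := fun p hp =>
    (hv.continuousOn_fderiv_of_isOpen hW le_rfl).continuousAt (hW.mem_nhds hp)
  rcases hcase p with h | h | h
  · refine (hc p (hWs (Or.inl h))).congr ?_
    filter_upwards [hop.mem_nhds h] with q hq
    exact (indicator_of_mem hq _).symm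
  · refine (continuousAt_const (y := (0 : E3 →L[ℝ] E3))).congr ?_
    filter_upwards [hom.mem_nhds h] with q hq
    exact (indicator_of_notMem (disjoint_left.1 hdis hq) _).symm
  · have := (hc p (hWs (Or.inr h))).tendsto
    rw [h1 p h] at this
    unfold ContinuousAt
    rw [indicator_of_notMem (hSp p h)]
    rw [tendsto_zero_iff_norm_tendsto_zero] at this ⊢
    refine squeeze_zero (fun q => norm_nonneg _) (fun q => norm_indicator_le_norm_self _ _) this

lemma deriv_zero_on_S (S : Set E3) (hS : IsSurface 2 S) (h : S ≃ₜ Metric.sphere (0 : E3) 1) (v : E3 → E3)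
    (p : E3) (hp : p ∈ S) (hv : DifferentiableAt ℝ v p) (h0 : ∀ q ∈ S, v q = 0)
    (hsym : ∀ a b, ⟪fderiv ℝ v p a, b⟫ = ⟪fderiv ℝ v p b, a⟫) (hdiv : div3 v p = 0) :
    fderiv ℝ v p = 0 := by
  obtain ⟨f, x0, ρ, K, L, hρ, -, -, hfp, hf, hm, -, -, hinj, -⟩ := surf_chart S hS h p hp
  have hx0 : x0 ∈ Metric.ball x0 ρ := Metric.mem_ball_self hρ
  have hfd : DifferentiableAt ℝ f x0 :=
    (hf.contDiffAt (Metric.ball_mem_nhds _ hρ)).differentiableAt (by norm_num)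
  refine clm_zero_of_sym _ hsym (by rw [← trace_inner]; exact hdiv) (fderiv ℝ f x0) (hinj x0 hx0) ?_
  have hv' : HasFDerivAt v (fderiv ℝ v p) (f x0) := by rw [hfp]; exact hv.hasFDerivAt
  have hcomp := hv'.comp x0 hfd.hasFDerivAt
  have hz : v ∘ f =ᶠ[𝓝 x0] fun _ => 0 := by
    filter_upwards [Metric.ball_mem_nhds x0 hρ] with x hx
    exact h0 _ (hm hx)
  have h2 := ((hasFDerivAt_const (0 : E3) x0).congr_of_eventuallyEq hz).unique hcomp
  intro x
  have := congrArg (fun l : E2 →L[ℝ] E3 => l x) h2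
  exact this.symm

end

section
open MeasureTheory Filter Set
open scoped RealInnerProductSpace Topology FourierTransform

lemma green (u : E3 → ℝ) (F : E3 → E3) (hu : ContDiff ℝ 1 u) (hF : ContDiff ℝ 1 F)
    (hc : HasCompactSupport u ∨ HasCompactSupport F) :
    ∫ x, fderiv ℝ u x (F x) = - ∫ x, u x * div3 F x := by
  have hFi : ∀ i : Fin 3, ContDiff ℝ 1 (fun x => F x i) := fun i =>
    (EuclideanSpace.proj i : E3 →L[ℝ] ℝ).contDiff.comp hF
  have hFc : ∀ i : Fin 3, HasCompactSupport F → HasCompactSupport (fun x => F x i) := fun i h =>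
    h.comp_left (g := fun w : E3 => w i) rfl
  have cu : ∀ w, Continuous fun x => fderiv ℝ u x w := fun w =>
    (hu.continuous_fderiv one_ne_zero).clm_apply continuous_const
  have cF : ∀ i w, Continuous fun x => fderiv ℝ (fun x => F x i) x w := fun i w =>
    ((hFi i).continuous_fderiv one_ne_zero).clm_apply continuous_const
  have su : ∀ w, HasCompactSupport u → HasCompactSupport fun x => fderiv ℝ u x w := fun w h =>
    (h.fderiv ℝ).comp_left (g := fun l : E3 →L[ℝ] ℝ => l w) rfl
  have sF : ∀ i w, HasCompactSupport F → HasCompactSupport fun x => fderiv ℝ (fun x => F x i) x w := fun i w h =>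
    ((hFc i h).fderiv ℝ).comp_left (g := fun l : E3 →L[ℝ] ℝ => l w) rfl
  have i1 : ∀ i : Fin 3, Integrable (fun x => fderiv ℝ u x (e3 i) * F x i) volume := by
    intro i
    refine ((cu _).mul (hFi i).continuous).integrable_of_hasCompactSupport ?_
    rcases hc with h | h
    · exact (su _ h).mul_right
    · exact (hFc i h).mul_left
  have i2 : ∀ i : Fin 3, Integrable (fun x => u x * fderiv ℝ (fun x => F x i) x (e3 i)) volume := by
    intro i
    refine (hu.continuous.mul (cF i _)).integrable_of_hasCompactSupport ?_
    rcases hc with h | h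
    · exact h.mul_right
    · exact (sF i _ h).mul_left
  have i3 : ∀ i : Fin 3, Integrable (fun x => u x * F x i) volume := by
    intro i
    refine (hu.continuous.mul (hFi i).continuous).integrable_of_hasCompactSupport ?_
    rcases hc with h | h
    · exact h.mul_right
    · exact (hFc i h).mul_left
  have ibp : ∀ i : Fin 3, ∫ x, fderiv ℝ u x (e3 i) * F x i = - ∫ x, u x * fderiv ℝ (fun x => F x i) x (e3 i) := by
    intro i
    have := integral_mul_fderiv_eq_neg_fderiv_mul_of_integrable (i1 i) (i2 i) (i3 i)
      (fun x _ => hu.differentiable one_ne_zero x) (fun x _ => (hFi i).differentiable one_ne_zero x)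
    rw [this, neg_neg]
  have e1 : ∀ x, fderiv ℝ u x (F x) = ∑ i, fderiv ℝ u x (e3 i) * F x i := by
    intro x
    rw [clm_expand]
    exact Finset.sum_congr rfl fun i _ => by rw [smul_eq_mul, mul_comm]
  have e2 : ∀ x, u x * div3 F x = ∑ i, u x * fderiv ℝ (fun x => F x i) x (e3 i) := by
    intro x
    unfold div3 pder
    rw [Finset.mul_sum]
    exact Finset.sum_congr rfl fun i _ => by rw [fderiv_coord F x (hF.differentiable one_ne_zero x)]
  simp_rw [e1, e2]
  rw [integral_finsetSum _ (fun i _ => i1 i), integral_finsetSum _ (fun i _ => i2 i), ← Finset.sum_neg_distrib]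
  exact Finset.sum_congr rfl fun i _ => ibp i

lemma ode_solve (α δ R : ℝ) (hδ : 0 < δ) (b : ℝ → ℝ) (hb : Continuous b) (hbR : ∀ s, R ≤ s → b s = 0) :
    ∃ a p q : ℝ → ℝ, (∀ s, HasDerivAt a (p s) s) ∧ (∀ s, HasDerivAt p (q s) s) ∧ Continuous q ∧
      (∀ s, R ≤ s → a s = 0 ∧ p s = 0) ∧ ∀ s, δ ≤ s → 4 * s * q s + α * p s = b s := by
  let κ : ℝ → ℝ := fun s => 4 * max s δ
  have hκ : Continuous κ := by fun_prop
  have hκ0 : ∀ s, κ s ≠ 0 := fun s => by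
    have : δ ≤ max s δ := le_max_right _ _
    have : 0 < κ s := by simp only [κ]; linarith
    exact this.ne'
  let m : ℝ → ℝ := fun s => ∫ t in (0:ℝ)..s, α / κ t
  have hmc : Continuous fun t => α / κ t := continuous_const.div hκ hκ0
  have hm : ∀ s, HasDerivAt m (α / κ s) s := fun s =>
    intervalIntegral.integral_hasDerivAt_right (hmc.intervalIntegrable _ _) (hmc.stronglyMeasurableAtFilter _ _) hmc.continuousAt
  have hmcont : Continuous m := continuous_iff_continuousAt.2 fun s => (hm s).continuousAt
  have hPc : Continuous fun t => Real.exp (m t) * b t / κ t :=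
    ((Real.continuous_exp.comp hmcont).mul hb).div hκ hκ0
  let P : ℝ → ℝ := fun s => ∫ t in R..s, Real.exp (m t) * b t / κ t
  have hP : ∀ s, HasDerivAt P (Real.exp (m s) * b s / κ s) s := fun s =>
    intervalIntegral.integral_hasDerivAt_right (hPc.intervalIntegrable _ _) (hPc.stronglyMeasurableAtFilter _ _) hPc.continuousAt
  let p : ℝ → ℝ := fun s => Real.exp (- m s) * P s
  let q : ℝ → ℝ := fun s => - (α / κ s) * p s + b s / κ s
  have hp : ∀ s, HasDerivAt p (q s) s := by
    intro s
    have h1 : HasDerivAt (fun s => Real.exp (- m s)) (Real.exp (- m s) * (-(α / κ s))) s := (hm s).neg.exp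
    have h2 := h1.mul (hP s)
    refine h2.congr_deriv ?_
    simp only [q, p]
    have : Real.exp (- m s) * Real.exp (m s) = 1 := by rw [← Real.exp_add]; simp
    linear_combination (b s / κ s) * this
  have hpc : Continuous p := continuous_iff_continuousAt.2 fun s => (hp s).continuousAt
  let a : ℝ → ℝ := fun s => ∫ t in R..s, p t
  have ha : ∀ s, HasDerivAt a (p s) s := fun s =>
    intervalIntegral.integral_hasDerivAt_right (hpc.intervalIntegrable _ _) (hpc.stronglyMeasurableAtFilter _ _) hpc.continuousAt
  have hp0 : ∀ s, R ≤ s → p s = 0 := by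
    intro s hs
    have : P s = 0 := by
      apply intervalIntegral.integral_zero_ae
      refine ae_of_all _ fun t ht => ?_
      rw [uIoc_of_le hs] at ht
      rw [hbR t ht.1.le]; simp
    simp [p, this]
  refine ⟨a, p, q, ha, hp, ?_, ?_, ?_⟩
  · exact (hmc.neg.mul hpc).add (hb.div hκ hκ0)
  · intro s hs
    refine ⟨?_, hp0 s hs⟩
    apply intervalIntegral.integral_zero_ae
    refine ae_of_all _ fun t ht => ?_
    rw [uIoc_of_le hs] at ht
    exact hp0 t ht.1.le
  · intro s hs
    have : κ s = 4 * s := by simp [κ, hs]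
    simp only [q]
    rw [← this]
    field_simp [hκ0 s]
    ring

lemma div3_comb (h1 h2 : E3 → ℝ) (c x : E3) (d1 : DifferentiableAt ℝ h1 x) (d2 : DifferentiableAt ℝ h2 x) :
    div3 (fun x => h1 x • c + h2 x • x) x = fderiv ℝ h1 x c + fderiv ℝ h2 x x + 3 * h2 x := by
  have hd := ((d1.hasFDerivAt.smul_const c).add (d2.hasFDerivAt.smul (hasFDerivAt_id x))).fderiv
  have e : (fun x => h1 x • c + h2 x • x) = ((fun x => h1 x • c) + h2 • id) := rfl
  rw [clm_expand (fderiv ℝ h1 x) c, clm_expand (fderiv ℝ h2 x) x, trace_inner, e, hd]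
  simp only [Fin.sum_univ_three, add_apply, ContinuousLinearMap.smulRight_apply,
    smul_apply, ContinuousLinearMap.id_apply, id, e3_inner, smul_eq_mul,
    PiLp.add_apply, PiLp.smul_apply]
  have : ∀ i, (e3 i) i = 1 := fun i => by simp [e3]
  simp only [this]
  ring

lemma moments_zero (u : E3 → ℝ) (w : E3 → E3) (hu : ∀ x, HasFDerivAt u (innerSL ℝ (w x)) x)
    (hw : ContDiff ℝ 1 w) (hdiv : ∀ x, div3 w x = 0) (δ : ℝ) (hδ : 0 < δ)
    (hz : ∀ x, ‖x‖ ^ 2 < δ → u x = 0) (k : ℕ) : ∀ (c : E3) (R : ℝ) (b : ℝ → ℝ), Continuous b →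
      (∀ s, R ≤ s → b s = 0) → ∫ x, u x * (⟪c, x⟫ ^ k * b (‖x‖ ^ 2)) = 0 := by
  have huC : ContDiff ℝ 1 u := by
    rw [contDiff_one_iff_fderiv]
    refine ⟨fun x => (hu x).differentiableAt, ?_⟩
    have : fderiv ℝ u = fun x => innerSL ℝ (w x) := funext fun x => (hu x).fderiv
    rw [this]
    exact (innerSL ℝ).continuous.comp hw.continuous
  induction k using Nat.strong_induction_on with
  | _ k ih =>
  intro c R b hb hbR
  obtain ⟨a, p, q, ha, hp, hq, h0, heq⟩ := ode_solve (4 * k + 6) δ R hδ b hb hbR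
  have haC : ContDiff ℝ 1 a := by
    rw [contDiff_one_iff_deriv]
    refine ⟨fun s => (ha s).differentiableAt, ?_⟩
    have : deriv a = p := funext fun s => (ha s).deriv
    rw [this]; exact continuous_iff_continuousAt.2 fun s => (hp s).continuousAt
  have hpC : ContDiff ℝ 1 p := by
    rw [contDiff_one_iff_deriv]
    refine ⟨fun s => (hp s).differentiableAt, ?_⟩
    have : deriv p = q := funext fun s => (hp s).deriv
    rw [this]; exact hq
  have hnC : ContDiff ℝ 1 (fun x : E3 => ‖x‖ ^ 2) := contDiff_norm_sq ℝ
  have hiC : ∀ j : ℕ, ContDiff ℝ 1 (fun x : E3 => ⟪c, x⟫ ^ j) := fun j =>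
    ((innerSL ℝ c).contDiff).pow j
  have dn : ∀ x : E3, HasFDerivAt (fun x : E3 => ‖x‖ ^ 2) (2 • innerSL ℝ x) x := fun x =>
    (hasStrictFDerivAt_norm_sq x).hasFDerivAt
  have di : ∀ (j : ℕ) (x : E3), HasFDerivAt (fun x : E3 => ⟪c, x⟫ ^ j) ((j * ⟪c, x⟫ ^ (j - 1)) • innerSL ℝ c) x := by
    intro j x
    have h1 : HasFDerivAt (fun x : E3 => ⟪c, x⟫) (innerSL ℝ c) x := (innerSL ℝ c).hasFDerivAt
    have h2 := (hasDerivAt_pow j (⟪c, x⟫)).comp_hasFDerivAt x h1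
    exact h2
  have da : ∀ x : E3, HasFDerivAt (fun x : E3 => a (‖x‖ ^ 2)) (p (‖x‖ ^ 2) • (2 • innerSL ℝ x)) x := fun x =>
    (ha _).comp_hasFDerivAt x (dn x)
  have dp : ∀ x : E3, HasFDerivAt (fun x : E3 => p (‖x‖ ^ 2)) (q (‖x‖ ^ 2) • (2 • innerSL ℝ x)) x := fun x =>
    (hp _).comp_hasFDerivAt x (dn x)
  let η : E3 → ℝ := fun x => ⟪c, x⟫ ^ k * a (‖x‖ ^ 2)
  let h1 : E3 → ℝ := fun x => (k * ⟪c, x⟫ ^ (k - 1)) * a (‖x‖ ^ 2)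
  let h2 : E3 → ℝ := fun x => (2 * ⟪c, x⟫ ^ k) * p (‖x‖ ^ 2)
  let F : E3 → E3 := fun x => h1 x • c + h2 x • x
  have hηC : ContDiff ℝ 1 η := (hiC k).mul (haC.comp hnC)
  have h1C : ContDiff ℝ 1 h1 := (contDiff_const.mul (hiC (k - 1))).mul (haC.comp hnC)
  have h2C : ContDiff ℝ 1 h2 := (contDiff_const.mul (hiC k)).mul (hpC.comp hnC)
  have hFC : ContDiff ℝ 1 F := (h1C.smul contDiff_const).add (h2C.smul contDiff_id)
  have hηd : ∀ x, HasFDerivAt η (innerSL ℝ (F x)) x := by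
    intro x
    have := (di k x).mul (da x)
    refine this.congr_fderiv ?_
    ext y
    simp [F, h1, h2, inner_add_left, inner_smul_left]
    ring
  have hbig : ∀ x : E3, x ∉ Metric.closedBall (0:E3) (|R| + 1) → R ≤ ‖x‖ ^ 2 := by
    intro x hx
    simp only [Metric.mem_closedBall, dist_zero_right, not_le] at hx
    nlinarith [le_abs_self R, abs_nonneg R]
  have hcs : ∀ f : E3 → ℝ, (∀ x, R ≤ ‖x‖ ^ 2 → f x = 0) → HasCompactSupport f := fun f hf =>
    HasCompactSupport.intro (isCompact_closedBall (0:E3) (|R| + 1)) fun x hx => hf x (hbig x hx)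
  have hηc : HasCompactSupport η := hcs _ fun x hx => by simp [η, (h0 _ hx).1]
  have hFc : HasCompactSupport F :=
    HasCompactSupport.intro (isCompact_closedBall (0:E3) (|R| + 1)) fun x hx => by
      simp [F, h1, h2, (h0 _ (hbig x hx)).1, (h0 _ (hbig x hx)).2]
  have g1 := green u F huC hFC (Or.inr hFc)
  have g2 := green η w hηC hw (Or.inl hηc)
  simp_rw [hdiv] at g2
  have e12 : ∫ x, fderiv ℝ u x (F x) = ∫ x, fderiv ℝ η x (w x) := by
    congr 1; ext x
    rw [(hu x).fderiv, (hηd x).fderiv]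
    simp [real_inner_comm]
  have hdF : ∀ x, u x * div3 F x = (k * (k - 1 : ℕ) * ‖c‖ ^ 2) * (u x * (⟪c, x⟫ ^ (k - 2) * a (‖x‖ ^ 2)))
      + u x * (⟪c, x⟫ ^ k * b (‖x‖ ^ 2)) := by
    intro x
    by_cases hx : ‖x‖ ^ 2 < δ
    · rw [hz x hx]; simp
    · push Not at hx
      have hd1 := (((di (k - 1) x).const_mul (k:ℝ)).mul (da x)).fderiv
      have hd2 := (((di k x).const_mul (2:ℝ)).mul (dp x)).fderiv
      have e1 : fderiv ℝ h1 x c = k * (k - 1 : ℕ) * ‖c‖ ^ 2 * (⟪c, x⟫ ^ (k - 2) * a (‖x‖ ^ 2))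
          + 2 * k * ⟪c, x⟫ ^ k * p (‖x‖ ^ 2) := by
        have ee : h1 = ((fun x => (k:ℝ) * ⟪c, x⟫ ^ (k - 1)) * fun x => a (‖x‖ ^ 2)) := rfl
        rw [ee, hd1]
        simp only [add_apply, smul_apply, innerSL_apply_apply, smul_eq_mul, nsmul_eq_mul]
        rw [real_inner_self_eq_norm_sq, real_inner_comm c x]
        rcases Nat.eq_zero_or_pos k with rfl | hk
        · simp
        · have : ⟪c, x⟫ ^ k = ⟪c, x⟫ ^ (k - 1) * ⟪c, x⟫ := by rw [← pow_succ, Nat.sub_add_cancel hk]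
          rw [this, Nat.sub_sub]
          push_cast
          ring
      have e2 : fderiv ℝ h2 x x = 2 * k * ⟪c, x⟫ ^ k * p (‖x‖ ^ 2) + 4 * ‖x‖ ^ 2 * ⟪c, x⟫ ^ k * q (‖x‖ ^ 2) := by
        have ee : h2 = ((fun x => (2:ℝ) * ⟪c, x⟫ ^ k) * fun x => p (‖x‖ ^ 2)) := rfl
        rw [ee, hd2]
        simp only [add_apply, smul_apply, innerSL_apply_apply, smul_eq_mul, nsmul_eq_mul]
        rw [real_inner_self_eq_norm_sq]
        rcases Nat.eq_zero_or_pos k with rfl | hk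
        · simp; ring
        · have : ⟪c, x⟫ ^ k = ⟪c, x⟫ ^ (k - 1) * ⟪c, x⟫ := by rw [← pow_succ, Nat.sub_add_cancel hk]
          rw [this]
          push_cast
          ring
      have e3 := div3_comb h1 h2 c x (h1C.differentiable one_ne_zero x) (h2C.differentiable one_ne_zero x)
      have e4 : div3 F x = fderiv ℝ h1 x c + fderiv ℝ h2 x x + 3 * h2 x := e3
      rw [e4, e1, e2]
      have := heq _ hx
      simp only [h2]
      linear_combination (u x * ⟪c, x⟫ ^ k) * this
  have cu := huC.continuous
  have I1 : Integrable (fun x => u x * (⟪c, x⟫ ^ (k - 2) * a (‖x‖ ^ 2))) volume :=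
    (cu.mul ((hiC _).continuous.mul (haC.comp hnC).continuous)).integrable_of_hasCompactSupport
      (hcs _ fun x hx => by simp [(h0 _ hx).1])
  have I2 : Integrable (fun x => u x * (⟪c, x⟫ ^ k * b (‖x‖ ^ 2))) volume :=
    (cu.mul ((hiC _).continuous.mul (hb.comp hnC.continuous))).integrable_of_hasCompactSupport
      (hcs _ fun x hx => by simp [hbR _ hx])
  simp_rw [hdF] at g1
  rw [integral_add (I1.const_mul _) I2, integral_const_mul] at g1
  have hfirst : (k * (k - 1 : ℕ) * ‖c‖ ^ 2) * ∫ x, (u x * (⟪c, x⟫ ^ (k - 2) * a (‖x‖ ^ 2))) = 0 := by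
    by_cases hk : 2 ≤ k
    · rw [ih (k - 2) (by omega) c R a haC.continuous (fun s hs => (h0 s hs).1), mul_zero]
    · have : (k * (k - 1 : ℕ) : ℝ) = 0 := by
        have : k = 0 ∨ k = 1 := by omega
        rcases this with rfl | rfl <;> simp
      rw [this]; simp
  rw [hfirst, zero_add, e12, g2] at g1
  simpa using g1.symm

end

section
open MeasureTheory Filter Set
open scoped RealInnerProductSpace Topology FourierTransform

lemma moments_fourier (f : E3 → ℝ) (hf : Continuous f) (hc : HasCompactSupport f)
    (hm : ∀ (c : E3) (k : ℕ), ∫ x, f x * ⟪c, x⟫ ^ k = 0) : f = 0 := by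
  obtain ⟨R, hR0, hR⟩ := hc.isCompact.isBounded.subset_closedBall_lt 0 (0 : E3)
  have hout : ∀ x, R < ‖x‖ → f x = 0 := by
    intro x hx
    by_contra h
    have := hR (subset_tsupport f h)
    rw [mem_closedBall_zero_iff] at this
    linarith
  let g : E3 → ℂ := fun x => (f x : ℂ)
  have hg : Continuous g := Complex.continuous_ofReal.comp hf
  have hgc : HasCompactSupport g := hc.comp_left (g := fun r : ℝ => (r : ℂ)) (by simp)
  have hF : 𝓕 g = 0 := by
    funext w
    rw [Real.fourier_eq']
    let F : ℕ → E3 → ℂ := fun k x => ((-2 * Real.pi * Complex.I) ^ k / (k.factorial : ℂ)) * ((f x * ⟪w, x⟫ ^ k : ℝ) : ℂ)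
    have hFi0 : ∀ k, Integrable (fun x => f x * ⟪w, x⟫ ^ k) volume := fun k =>
      (hf.mul (((innerSL ℝ w).continuous).pow k)).integrable_of_hasCompactSupport hc.mul_right
    have hFi : ∀ k, Integrable (F k) volume := fun k => (hFi0 k).ofReal.const_mul _
    have hFn : ∀ k x, ‖F k x‖ ≤ ((2 * Real.pi * (‖w‖ * R)) ^ k / k.factorial) * ‖f x‖ := by
      intro k x
      have e : ‖F k x‖ = (2 * Real.pi) ^ k / k.factorial * (‖f x‖ * |⟪w, x⟫| ^ k) := by
        simp only [F, norm_mul, norm_div, norm_pow, Complex.norm_real, Complex.norm_natCast]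
        simp [abs_of_pos Real.pi_pos]
      rw [e]
      by_cases hx : R < ‖x‖
      · simp [hout x hx]
      · have h1 : |⟪w, x⟫| ≤ ‖w‖ * R := (abs_real_inner_le_norm w x).trans
          (mul_le_mul_of_nonneg_left (not_lt.1 hx) (norm_nonneg _))
        have h2 : |⟪w, x⟫| ^ k ≤ (‖w‖ * R) ^ k := pow_le_pow_left₀ (abs_nonneg _) h1 k
        rw [mul_pow (2 * Real.pi)]
        have h3 : (2 * Real.pi) ^ k / k.factorial * (‖f x‖ * |⟪w, x⟫| ^ k) ≤
          (2 * Real.pi) ^ k / k.factorial * (‖f x‖ * (‖w‖ * R) ^ k) := by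
          have := Real.pi_pos
          gcongr
        refine h3.trans (le_of_eq ?_)
        ring
    have hfn : Integrable (fun x => ‖f x‖) volume := (hf.integrable_of_hasCompactSupport hc).norm
    have hsum : Summable fun k => ∫ x, ‖F k x‖ := by
      refine Summable.of_nonneg_of_le (fun k => integral_nonneg fun x => norm_nonneg _) (fun k => ?_)
        ((Real.summable_pow_div_factorial (2 * Real.pi * (‖w‖ * R))).mul_right (∫ x, ‖f x‖))
      rw [← integral_const_mul]
      exact integral_mono (hFi k).norm (hfn.const_mul _) (hFn k)
    have hs := hasSum_integral_of_summable_integral_norm hFi hsum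
    have hz : ∀ k, ∫ x, F k x = 0 := by
      intro k
      simp only [F]
      rw [integral_const_mul, integral_complex_ofReal, hm w k]
      simp
    simp_rw [hz] at hs
    have h0 := hs.unique hasSum_zero
    rw [Pi.zero_apply, ← h0]
    refine integral_congr_ae (ae_of_all _ fun x => ?_)
    have hE := NormedSpace.expSeries_div_hasSum_exp (𝔸 := ℂ) ((-2 * Real.pi * Complex.I) * (⟪w, x⟫ : ℝ))
    rw [← Complex.exp_eq_exp_ℂ] at hE
    have h2 := (hE.mul_right (f x : ℂ)).tsum_eq
    have h3 : ∀ k, F k x = (-2 * Real.pi * Complex.I * (⟪w, x⟫ : ℝ)) ^ k / (k.factorial : ℂ) * (f x : ℂ) := by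
      intro k
      simp only [F]
      push_cast
      rw [mul_pow]
      ring
    simp_rw [h3]
    rw [h2, smul_eq_mul, real_inner_comm]
    congr 2
    push_cast
    ring
  have hi := hg.fourierInv_fourier_eq (hg.integrable_of_hasCompactSupport hgc) (by
    rw [hF]; exact integrable_zero _ _ _)
  funext x
  have h1 := congrFun hi x
  rw [hF, Real.fourierInv_eq'] at h1
  simp at h1
  have : (f x : ℂ) = 0 := h1.symm
  exact_mod_cast this

end

section
open MeasureTheory Filter Set
open scoped RealInnerProductSpace Topology

lemma unique_cont (w : E3 → E3) (hw : ContDiff ℝ 1 w)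
    (hsym : ∀ p a b, ⟪fderiv ℝ w p a, b⟫ = ⟪fderiv ℝ w p b, a⟫) (hdiv : ∀ p, div3 w p = 0)
    (x0 : E3) (h0 : ∀ᶠ x in 𝓝 x0, w x = 0) : ∀ x, w x = 0 := by
  have hwd : ∀ x, DifferentiableAt ℝ w x := fun x => hw.differentiable one_ne_zero x
  obtain ⟨G, hG⟩ := Convex.exists_forall_hasFDerivAt_of_fderiv_symmetric (E := E3) (F := ℝ)
    (ω := fun x => innerSL ℝ (w x)) (s := univ) convex_univ isOpen_univ
    (fun x _ => ((innerSL ℝ : E3 →L[ℝ] E3 →L[ℝ] ℝ).differentiableAt.comp x (hwd x)).differentiableWithinAt) (by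
      intro x _ a c
      have h1 : fderiv ℝ (fun x => innerSL ℝ (w x)) x = (innerSL ℝ : E3 →L[ℝ] E3 →L[ℝ] ℝ).comp (fderiv ℝ w x) :=
        ((innerSL ℝ : E3 →L[ℝ] E3 →L[ℝ] ℝ).hasFDerivAt.comp x (hwd x).hasFDerivAt).fderiv
      rw [h1]
      exact hsym x a c)
  obtain ⟨ρ, hρ, hball⟩ := Metric.eventually_nhds_iff_ball.1 h0
  let u : E3 → ℝ := fun x => G (x + x0) - G x0
  let w' : E3 → E3 := fun x => w (x + x0)
  have hw' : ContDiff ℝ 1 w' := hw.comp (contDiff_id.add contDiff_const)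
  have hu : ∀ x, HasFDerivAt u (innerSL ℝ (w' x)) x := by
    intro x
    have := (hasFDerivAt_comp_add_right x0).2 (hG (x + x0) (mem_univ _))
    exact this.sub_const _
  have hdiv' : ∀ x, div3 w' x = 0 := by
    intro x
    rw [← hdiv (x + x0)]
    unfold div3 pder
    simp only [w', fderiv_comp_add_right]
  have hu0 : ∀ x, ‖x‖ ^ 2 < ρ ^ 2 → u x = 0 := by
    intro x hx
    have hx' : ‖x‖ < ρ := lt_of_pow_lt_pow_left₀ 2 hρ.le hx
    have hd : ∀ y ∈ Metric.ball (0 : E3) ρ, HasFDerivWithinAt u (0 : E3 →L[ℝ] ℝ) (Metric.ball 0 ρ) y := by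
      intro y hy
      have : w' y = 0 := hball _ (by simpa [dist_eq_norm] using hy)
      have h2 := hu y
      rw [this, map_zero] at h2
      exact h2.hasFDerivWithinAt
    have h3 := (convex_ball (0 : E3) ρ).is_const_of_fderivWithin_eq_zero (𝕜 := ℝ) (f := u)
      (fun y hy => (hd y hy).differentiableWithinAt)
      (fun y hy => (hd y hy).fderivWithin (Metric.isOpen_ball.uniqueDiffWithinAt hy))
      (x := x) (y := 0) (by simpa using hx') (Metric.mem_ball_self hρ)
    rw [h3]; simp [u]
  have huc : Continuous u := continuous_iff_continuousAt.2 fun x => (hu x).continuousAt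
  have huz : ∀ x, u x = 0 := by
    intro x
    let R : ℝ := ‖x‖ ^ 2 + 1
    let b : ℝ → ℝ := fun s => max (R - s) 0
    have hb : Continuous b := (continuous_const.sub continuous_id).max continuous_const
    have hbR : ∀ s, R ≤ s → b s = 0 := fun s hs => max_eq_right (by linarith)
    have hm := fun c k => moments_zero u w' hu hw' hdiv' (ρ ^ 2) (by positivity) hu0 k c R b hb hbR
    have hf : Continuous (fun x : E3 => u x * b (‖x‖ ^ 2)) :=
      huc.mul (hb.comp (continuous_norm.pow 2))
    have hc : HasCompactSupport (fun x : E3 => u x * b (‖x‖ ^ 2)) := by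
      refine HasCompactSupport.intro (isCompact_closedBall (0 : E3) (R + 1)) fun y hy => ?_
      rw [mem_closedBall_zero_iff, not_le] at hy
      have hR1 : 1 ≤ R := by simp only [R]; nlinarith [sq_nonneg ‖x‖]
      rw [hbR _ (by nlinarith), mul_zero]
    have hz := moments_fourier _ hf hc (fun c k => by
      rw [← hm c k]
      refine integral_congr_ae (ae_of_all _ fun y => ?_)
      simp only
      ring)
    have h1 := congrFun hz x
    have hb1 : b (‖x‖ ^ 2) = 1 := by simp [b, R]
    simpa [hb1] using h1
  intro x
  have h1 := hu (x - x0)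
  have h2 : u = fun _ => 0 := funext huz
  rw [h2] at h1
  have h3 := h1.unique (hasFDerivAt_const (0 : ℝ) (x - x0))
  have h4 := congrArg (fun L : E3 →L[ℝ] ℝ => L (w x)) h3
  simpa [w'] using h4

lemma outer_part (S Ωm Ωp : Set E3) (vm vp : E3 → E3)
    (hS : IsSurface 2 S) (hcpt : IsCompact S) (h : S ≃ₜ (Metric.sphere (0 : E3) 1))
    (henc : EnclosedBy S Ωm Ωp) (hCVS : CVSPair S Ωm Ωp vm vp) : ∀ p ∈ Ωp, vp p = 0 := by
  have hin := inner_part S Ωm Ωp vm vp hS hcpt h henc hCVS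
  obtain ⟨Wm, hWm, hWmS, hvm⟩ := hCVS.smoothm
  obtain ⟨W, hW, hWS, hvp⟩ := hCVS.smoothp
  have hmS : ∀ p ∈ S, vm p = 0 ∧ fderiv ℝ vm p = 0 := fun p hp =>
    zero_closure Ωm Wm henc.openm hWm vm hvm hin p (hCVS.clm hp) (hWmS (Or.inr hp))
  have hvd : ∀ p ∈ S, DifferentiableAt ℝ vp p := fun p hp =>
    (hvp.contDiffAt (hW.mem_nhds (hWS (Or.inr hp)))).differentiableAt one_ne_zero
  have hv0 : ∀ p ∈ S, vp p = 0 := surface_zero S hcpt vp hvd hCVS.tangentp (by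
    intro p hp
    have := hCVS.strain p hp
    rwa [(hmS p hp).1, (hmS p hp).2, add_zero, sub_zero] at this)
  have hsymp : ∀ p ∈ Ωp, ∀ a b, ⟪fderiv ℝ vp p a, b⟫ = ⟪fderiv ℝ vp p b, a⟫ := fun p hp =>
    sym_of_curl vp p (hCVS.curlp p hp)
  have hd0 : ∀ p ∈ S, fderiv ℝ vp p = 0 := fun p hp =>
    deriv_zero_on_S S hS h vp p hp (hvd p hp) hv0
      (sym_closure Ωp W hW vp hvp hsymp p (hCVS.clp hp) (hWS (Or.inr hp)))
      (div_closure Ωp W hW vp hvp hCVS.divp p (hCVS.clp hp) (hWS (Or.inr hp)))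
  have hw := ext_zero S Ωm Ωp W henc.openm hCVS.openp henc.plus hCVS.disj hW hWS vp hvp hv0 hd0
  set w := Ωp.indicator vp with hwdef
  have hwp : ∀ p ∈ Ωp, w =ᶠ[𝓝 p] vp := by
    intro p hp
    filter_upwards [hCVS.openp.mem_nhds hp] with q hq
    exact indicator_of_mem hq _
  have hwm : ∀ p ∈ Ωm, w p = 0 := fun p hp => indicator_of_notMem (disjoint_left.1 hCVS.disj hp) _
  have hwm' : ∀ p ∈ closure Ωm, fderiv ℝ w p = 0 := fun p hp =>
    (zero_closure Ωm univ henc.openm isOpen_univ w hw.contDiffOn hwm p hp (mem_univ p)).2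
  have hcase : ∀ p, p ∈ Ωp ∨ p ∈ closure Ωm := by
    intro p
    by_cases hp : p ∈ Ωm ∪ S
    · right
      rcases hp with hp | hp
      · exact subset_closure hp
      · exact hCVS.clm hp
    · left; rw [henc.plus]; exact hp
  have hne : S.Nonempty := by
    have : (Metric.sphere (0 : E3) 1).Nonempty := NormedSpace.sphere_nonempty.2 zero_le_one
    exact ⟨_, (h.symm ⟨_, this.some_mem⟩).2⟩
  obtain ⟨x0, hx0⟩ : Ωm.Nonempty := closure_nonempty_iff.1 (hne.mono hCVS.clm)
  have key := unique_cont w hw (by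
      intro p a b
      rcases hcase p with hp | hp
      · rw [(hwp p hp).fderiv_eq]; exact hsymp p hp a b
      · rw [hwm' p hp]; simp) (by
      intro p
      rcases hcase p with hp | hp
      · rw [germ_div vp w p (hwp p hp)]; exact hCVS.divp p hp
      · unfold div3 pder; rw [hwm' p hp]; simp) x0
      (by filter_upwards [henc.openm.mem_nhds hx0] with q hq using hwm q hq)
  intro p hp
  have := key p
  rwa [hwdef, indicator_of_mem hp] at this

end

/-- Let `S ⊂ ℝ³` be a C² compact closed connected embedded surface
homeomorphic to the 2-sphere, bounding the region `Ωm` with exterior `Ωp`, and let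
`(vm, vp)` satisfy the CVS conditions (1)–(5).  Then `vm` vanishes identically on `Ωm`
and `vp` vanishes identically on `Ωp`. -/
theorem statement3
    (S Ωm Ωp : Set E3) (vm vp : E3 → E3)
    (hS : IsSurface 2 S) (hcpt : IsCompact S) (hconn : IsConnected S)
    (hsphere : Nonempty (S ≃ₜ (Metric.sphere (0 : E3) 1)))
    (henc : EnclosedBy S Ωm Ωp)
    (hCVS : CVSPair S Ωm Ωp vm vp) :
    (∀ p ∈ Ωm, vm p = 0) ∧ (∀ p ∈ Ωp, vp p = 0) := by
  obtain ⟨h⟩ := hsphere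
  exact ⟨inner_part S Ωm Ωp vm vp hS hcpt h henc hCVS, outer_part S Ωm Ωp vm vp hS hcpt h henc hCVS⟩
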